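/- Let G and G' be two finitely generated virtually free groups. Then there exists a finite subset F of G \ {1} such that for every non-injective group homomorphism φ : G → G', there exists an automorphism σ of G with σ ∼ id_G and ker(φ ∘ σ) ∩ F ≠ ∅, i.e. there exists f ∈ F with φ(σ(f)) = 1. -/

import Mathlib

open FirstOrder Language

/-- Function symbols of the first-order language of groups:
a binary multiplication, a unary inverse and a constant for the identity. -/
inductive GroupFunc : ℕ → Type
  | mul : GroupFunc 2
  | inv : GroupFunc 1
  | one : GroupFunc 0

/-- The first-order language of groups. -/
def groupLang : FirstOrder.Language :=
  { Functions := GroupFunc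
    Relations := fun _ => Empty }

/-- Every group is a structure for the language of groups in the natural way. -/
instance groupLangStructure (G : Type*) [Group G] : groupLang.Structure G where
  funMap {n} f v :=
    match f with
    | .mul => v 0 * v 1
    | .inv => (v 0)⁻¹
    | .one => 1
  RelMap {n} r _ := r.elim

/-- Existential formulas: iterated existential quantifications of a
quantifier-free formula. -/
inductive IsExistentialQF {α : Type*} : ∀ {n : ℕ}, groupLang.BoundedFormula α n → Prop
  | of_isQF {n : ℕ} {φ : groupLang.BoundedFormula α n} (h : φ.IsQF) : IsExistentialQF φ
  | ex {n : ℕ} {φ : groupLang.BoundedFormula α (n + 1)} (h : IsExistentialQF φ) :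
      IsExistentialQF φ.ex

/-- Universal formulas: iterated universal quantifications of a
quantifier-free formula. -/
inductive IsUniversalQF {α : Type*} : ∀ {n : ℕ}, groupLang.BoundedFormula α n → Prop
  | of_isQF {n : ℕ} {φ : groupLang.BoundedFormula α n} (h : φ.IsQF) : IsUniversalQF φ
  | all {n : ℕ} {φ : groupLang.BoundedFormula α (n + 1)} (h : IsUniversalQF φ) :
      IsUniversalQF φ.all

/-- ∀∃-formulas: iterated universal quantifications of an existential formula. -/
inductive IsAE {α : Type*} : ∀ {n : ℕ}, groupLang.BoundedFormula α n → Prop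
  | of_existential {n : ℕ} {φ : groupLang.BoundedFormula α n} (h : IsExistentialQF φ) : IsAE φ
  | all {n : ℕ} {φ : groupLang.BoundedFormula α (n + 1)} (h : IsAE φ) : IsAE φ.all

/-- A group is virtually free if it has a free subgroup of finite index. -/
def VirtuallyFree (G : Type*) [Group G] : Prop :=
  ∃ H : Subgroup G, H.FiniteIndex ∧ Nonempty (IsFreeGroup H)

/-- A group is co-Hopfian if every injective endomorphism is surjective. -/
def CoHopfian (G : Type*) [Group G] : Prop :=
  ∀ φ : G →* G, Function.Injective φ → Function.Surjective φ

/-- Two homomorphisms `φ, φ' : G → G'` are equivalent if they coincide up to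
conjugation on every finite subgroup of `G`. -/
def HomEquiv {G G' : Type*} [Group G] [Group G'] (φ φ' : G →* G') : Prop :=
  ∀ H : Subgroup G, (H : Set G).Finite →
    ∃ g' : G', ∀ h ∈ H, φ' h = g' * φ h * g'⁻¹

/-- Two groups are ∀∃-equivalent if they satisfy the same ∀∃-sentences. -/
def AEEquivalent (G : Type*) (G' : Type*) [Group G] [Group G'] : Prop :=
  ∀ φ : groupLang.Sentence, IsAE φ → (G ⊨ φ ↔ G' ⊨ φ)

/-- Two groups are ∃-equivalent if they satisfy the same existential sentences. -/
def ExistentiallyEquivalent (G : Type*) (G' : Type*) [Group G] [Group G'] : Prop :=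
  ∀ φ : groupLang.Sentence, IsExistentialQF φ → (G ⊨ φ ↔ G' ⊨ φ)

/-- An endomorphism is rigid-testing: `G` is rigid if every endomorphism
equivalent to the identity is an automorphism. -/
def Rigid (G : Type*) [Group G] : Prop :=
  ∀ φ : G →* G, HomEquiv φ (MonoidHom.id G) → Function.Bijective φ

/-- `Out G` is finite, expressed as: the inner automorphisms form a finite index
subgroup of `Aut G`. -/
def OutFinite (G : Type*) [Group G] : Prop :=
  (MulAut.conj : G →* MulAut G).range.FiniteIndex

/-- Iterated composition of an endomorphism. -/
def homPow {G : Type*} [Group G] (φ : G →* G) : ℕ → (G →* G)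
  | 0 => MonoidHom.id G
  | n + 1 => φ.comp (homPow φ n)

/-- An endomorphism `φ` of `G` is class-permuting if some positive power of `φ`
is equivalent to the identity of `G`. -/
def ClassPermuting {G : Type*} [Group G] (φ : G →* G) : Prop :=
  ∃ n : ℕ, 1 ≤ n ∧ HomEquiv (homPow φ n) (MonoidHom.id G)

/-- A maximal finite subgroup: a finite subgroup maximal with respect to
inclusion among finite subgroups. -/
def MaximalFiniteSubgroup {G : Type*} [Group G] (A : Subgroup G) : Prop :=
  (A : Set G).Finite ∧ ∀ B : Subgroup G, (B : Set G).Finite → A ≤ B → A = B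

/-- Two subgroups are conjugate. -/
def SubgroupConj {G : Type*} [Group G] (A B : Subgroup G) : Prop :=
  ∃ g : G, B = A.map (MulAut.conj g).toMonoidHom

/-- A group is strongly co-Hopfian if there is a finite subset `F` of
`G \ {1}` such that every endomorphism whose kernel misses `F` is an
automorphism. -/
def StronglyCoHopfian (G : Type*) [Group G] : Prop :=
  ∃ F : Finset G, (1 : G) ∉ F ∧
    ∀ φ : G →* G, (∀ f ∈ F, φ f ≠ 1) → Function.Bijective φ

/-- A group is finitely presented. -/
def GroupFinitelyPresented (G : Type*) [Group G] : Prop :=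
  ∃ (n : ℕ) (rels : Finset (FreeGroup (Fin n))),
    Nonempty (PresentedGroup (rels : Set (FreeGroup (Fin n))) ≃* G)

/-
A finitely generated virtually free group `G` acts cofinitely, with finite vertex stabilizers, on
a tree: it is dual to a nested family of cuts of a Cayley graph separating the ends of the free
subgroup, and these cuts are nested because, for a suitable weight, cuts of least weight do not
cross. The image of `φ : G → G'` acts on such a tree as well, and after subdivision there is a
`φ`-equivariant map between the two trees sending edges to edges or vertices. If this map is not
injective, it identifies two vertices at distance at most two, and the group generated by the
elements forced to stabilize their common image is mapped by `φ` into a finite vertex stabilizer.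
If that group is finite, the two vertices can be folded together, which lowers the number of
vertex orbits of a torsion-free subgroup of finite index. Hence either the map becomes injective,
and then `ker φ` consists of elements of finite order, of which there are finitely many up to
conjugation, or one reaches a tree with an infinite fold group.

In the second case the fold generators may be taken in a fixed finite set, since, up to
automorphisms equivalent to the identity, there are finitely many reduced trees: two of them with
the same vertex groups and edge relations differ by a twist. A finite set of test elements then
suffices: by the pigeonhole principle modulo a torsion-free subgroup `K'` of finite index in `G'`,
every infinite group generated by elements of that finite set contains a nontrivial test element
mapped into `K'`. Its image has finite order, so it is trivial.
-/

namespace VirtuallyFree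

universe u u' v v' w

section Trees

variable {V V' : Type*} {Γ : SimpleGraph V} {Γ' : SimpleGraph V'}

theorem eq_of_adj_of_dist_eq_add_one (hΓ : Γ.IsTree) (r : V) {v a b : V}
    (ha : Γ.Adj a v) (hb : Γ.Adj b v)
    (hra : Γ.dist r v = Γ.dist r a + 1) (hrb : Γ.dist r v = Γ.dist r b + 1) : a = b := by
  obtain ⟨p, -, hp⟩ := hΓ.connected.exists_path_of_dist r a
  obtain ⟨q, -, hq⟩ := hΓ.connected.exists_path_of_dist r b
  have hpa : (p.concat ha).IsPath := (p.concat ha).isPath_of_length_eq_dist (by simp [hp, hra])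
  have hqb : (q.concat hb).IsPath := (q.concat hb).isPath_of_length_eq_dist (by simp [hq, hrb])
  simpa using congrArg (fun w : Γ.Path r v ↦ w.1.penultimate)
    ((hΓ.isAcyclic.subsingleton_path r v).elim ⟨_, hpa⟩ ⟨_, hqb⟩)

theorem exists_adj_dist_eq_add_one (hΓ : Γ.Connected) {a r : V} (hne : a ≠ r) :
    ∃ b, Γ.Adj b a ∧ Γ.dist r a = Γ.dist r b + 1 := by
  obtain ⟨p, hp⟩ := hΓ.exists_walk_length_eq_dist r a
  have hnil : ¬ p.Nil := fun h ↦ hne h.eq.symm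
  have hlen := p.length_dropLast_add_one hnil
  have hadj := p.adj_penultimate hnil
  have hle : Γ.dist r p.penultimate ≤ p.dropLast.length := SimpleGraph.dist_le _
  have htri := hΓ.dist_triangle (u := r) (v := p.penultimate) (w := a)
  rw [SimpleGraph.dist_eq_one_iff_adj.2 hadj] at htri
  exact ⟨_, hadj, by omega⟩

theorem not_adj_of_adj_of_adj (hΓ : Γ.IsTree) {u a b : V} (ha : Γ.Adj u a) (hb : Γ.Adj u b) :
    ¬ Γ.Adj a b := fun h ↦ by
  have := hΓ.dist_ne_of_adj u h
  rw [SimpleGraph.dist_eq_one_iff_adj.2 ha, SimpleGraph.dist_eq_one_iff_adj.2 hb] at this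
  exact this rfl

theorem apply_eq_of_forall_adj {X : Type*} (hΓ : Γ.Connected) {s : V → X}
    (hs : ∀ u v, Γ.Adj u v → s u = s v) (u v : V) : s u = s v := by
  obtain ⟨p⟩ := hΓ u v
  induction p with
  | nil => rfl
  | cons hadj _ ih => exact (hs _ _ hadj).trans ih

/- An edge that is not a bridge admits no potential for the indicator of that edge: the potential
would be constant along a walk avoiding the edge. -/
theorem isTree_of_forall_exists_potential (hΓ : Γ.Connected)
    (h : ∀ t : Sym2 V → ZMod 2, ∃ p : V → ZMod 2, ∀ u v, Γ.Adj u v → p v = p u + t s(u, v)) :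
    Γ.IsTree := by
  classical
  refine ⟨hΓ, SimpleGraph.isAcyclic_iff_forall_adj_isBridge.2 fun v w hvw ↦ ?_⟩
  obtain ⟨p, hp⟩ := h (Pi.single s(v, w) 1)
  have hconst : ∀ {x y}, (Γ.deleteEdges {s(v, w)}).Walk x y → p x = p y := by
    intro x y q
    induction q with
    | nil => rfl
    | cons hadj _ ih =>
      rw [SimpleGraph.deleteEdges_adj] at hadj
      rw [← ih, hp _ _ hadj.1, Pi.single_eq_of_ne (by simpa using hadj.2), add_zero]
  rw [SimpleGraph.isBridge_iff]
  rintro ⟨q⟩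
  simpa [hconst q] using hp v w hvw

theorem exists_potential (hΓ : Γ.IsTree) {H : Type*} [Group H] (t : V → V → H)
    (ht : ∀ u v, Γ.Adj u v → t v u = (t u v)⁻¹) (r : V) :
    ∃ p : V → H, p r = 1 ∧ ∀ u v, Γ.Adj u v → p v = p u * t u v := by
  classical
  choose P hP _ using fun v ↦ hΓ.connected.exists_path_of_dist r v
  let p : V → H := fun v ↦ ((P v).darts.map fun d ↦ t d.fst d.snd).prod
  have hstep : ∀ {u v} (huv : Γ.Adj u v), P v = (P u).concat huv → p v = p u * t u v := by
    intro u v huv h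
    simp [p, h]
  refine ⟨p, ?_, fun u v huv ↦ ?_⟩
  · have hnil : P r = .nil := by simpa using hP r
    simp [p, hnil]
  · by_cases hu : u ∈ (P v).support
    · exact hstep huv (hΓ.isAcyclic.path_concat (hP u) (hP v) huv hu)
    · have hv := hΓ.isAcyclic.mem_support_of_ne_mem_support_of_adj_of_isPath (hP u) (hP v) huv hu
      rw [hstep huv.symm (hΓ.isAcyclic.path_concat (hP v) (hP u) huv.symm hv), ht u v huv,
        inv_mul_cancel_right]

theorem exists_potential_zmodTwo (hΓ : Γ.IsTree) (t : Sym2 V → ZMod 2) (r : V) :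
    ∃ p : V → ZMod 2, p r = 0 ∧ ∀ u v, Γ.Adj u v → p v = p u + t s(u, v) := by
  obtain ⟨p, hr, hp⟩ := exists_potential hΓ (fun u v ↦ Multiplicative.ofAdd (t s(u, v)))
    (fun u v _ ↦ by rw [← ofAdd_neg, Sym2.eq_swap, ZModModule.neg_eq_self]) r
  exact ⟨fun v ↦ (p v).toAdd, congrArg Multiplicative.toAdd hr,
    fun u v h ↦ congrArg Multiplicative.toAdd (hp u v h)⟩

/-- Two vertices that are equal, adjacent, or have a common neighbour: in a tree, vertices at
distance at most two. These are the pairs of vertices that get identified by elementary folds. -/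
def Near (Γ : SimpleGraph V) (a b : V) : Prop :=
  a = b ∨ Γ.Adj a b ∨ ∃ v, Γ.Adj v a ∧ Γ.Adj v b

theorem isChain_ne_edges_map (f : Γ →g Γ')
    (hf : ∀ v a b, Γ.Adj v a → Γ.Adj v b → f a = f b → a = b) {x y : V} {p : Γ.Walk x y}
    (hp : p.IsPath) : (p.map f).edges.IsChain (· ≠ ·) := by
  induction p with
  | nil => simp
  | @cons u v w huv q ih =>
    cases q with
    | nil => simp
    | @cons _ v' _ hvv' q =>
      simp only [SimpleGraph.Walk.map_cons, SimpleGraph.Walk.edges_cons, List.isChain_cons_cons]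
      refine ⟨fun heq ↦ ?_, by simpa using ih hp.of_cons⟩
      rw [Sym2.eq_swap, Sym2.congr_right] at heq
      have huv' : u = v' := hf v u v' huv.symm hvv' heq
      subst huv'
      simp at hp

theorem exists_near_of_not_injective (hΓ : Γ.IsTree) (hΓ' : Γ'.IsAcyclic) {f : V → V'}
    (hf : ∀ u v, Γ.Adj u v → Γ'.Adj (f u) (f v) ∨ f u = f v) (hni : ¬ Function.Injective f) :
    ∃ a b, a ≠ b ∧ Near Γ a b ∧ f a = f b := by
  by_contra! hcon
  have hloc : ∀ {a b}, Near Γ a b → f a = f b → a = b := fun hab h ↦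
    by_contra fun hne ↦ hcon _ _ hne hab h
  let F : Γ →g Γ' := ⟨f, fun {a b} hab ↦
    (hf a b hab).resolve_right fun h ↦ hab.ne (hloc (Or.inr (Or.inl hab)) h)⟩
  refine hni fun x y hxy ↦ ?_
  obtain ⟨p, hp, -⟩ := hΓ.connected.exists_path_of_dist x y
  have hpath : (p.map F).IsPath := (hΓ'.isPath_iff_isChain _).2 <|
    isChain_ne_edges_map F (fun v a b ha hb ↦ hloc (Or.inr (Or.inr ⟨v, ha, hb⟩))) hp
  have hnil : ((p.map F).copy rfl hxy.symm).Nil :=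
    SimpleGraph.Walk.isPath_iff_nil.1 ((SimpleGraph.Walk.isPath_copy _ rfl hxy.symm).2 hpath)
  exact p.eq_of_length_eq_zero (by simpa using SimpleGraph.Walk.length_eq_zero_iff.2 hnil)

theorem eq_or_adj_of_minimal_of_strictConvex (hΓ : Γ.Connected) {F : V → ℕ}
    (hF : ∀ v a b, Γ.Adj v a → Γ.Adj v b → a ≠ b → 2 * F v < F a + F b) {u w : V}
    (hu : ∀ v, F u ≤ F v) (hw : ∀ v, F w ≤ F v) : u = w ∨ Γ.Adj u w := by
  obtain ⟨p, hp, -⟩ := hΓ.exists_path_of_dist u w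
  by_contra! hcon
  have hlen : 1 < p.length := by
    rcases p with _ | ⟨h, _ | ⟨-, -⟩⟩
    · exact absurd rfl hcon.1
    · exact absurd h hcon.2
    · simp
  obtain ⟨m, hm, hmax⟩ := (Finset.Ico 1 p.length).exists_max_image (fun i ↦ F (p.getVert i))
    ⟨1, by simp [hlen]⟩
  rw [Finset.mem_Ico] at hm
  have hle : ∀ i, F (p.getVert i) ≤ F (p.getVert m) := by
    intro i
    rcases Nat.eq_zero_or_pos i with rfl | hi
    · simpa using hu _
    rcases lt_or_ge i p.length with hi' | hi'
    · exact hmax i (by simp [hi', Nat.one_le_iff_ne_zero, hi.ne'])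
    · rw [p.getVert_of_length_le hi']
      exact hw _
  obtain ⟨k, rfl⟩ := Nat.exists_eq_add_of_le' hm.1
  have hne : p.getVert k ≠ p.getVert (k + 2) := fun h ↦ by
    have := hp.getVert_injOn (by simp; omega) (by simp; omega) h
    omega
  have hconv := hF _ _ _ (p.adj_getVert_succ (by omega : k < p.length)).symm
    (p.adj_getVert_succ hm.2) hne
  have hleft := hle k
  have hright := hle (k + 1 + 1)
  omega

theorem two_mul_dist_sq_lt (hΓ : Γ.IsTree) (x : V) {v a b : V} (ha : Γ.Adj v a) (hb : Γ.Adj v b)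
    (hab : a ≠ b) : 2 * Γ.dist x v ^ 2 < Γ.dist x a ^ 2 + Γ.dist x b ^ 2 := by
  rcases hΓ.dist_eq_dist_add_one_of_adj x ha with h₁ | h₁ <;>
    rcases hΓ.dist_eq_dist_add_one_of_adj x hb with h₂ | h₂
  · exact absurd (eq_of_adj_of_dist_eq_add_one hΓ x ha.symm hb.symm h₁ h₂) hab
  · rw [h₂, h₁]; nlinarith
  · rw [h₁, h₂]; nlinarith
  · rw [h₁, h₂]; nlinarith

end Trees

section GraphActions

/-- The group `G` acts on the vertices of `Γ` by graph automorphisms. -/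
class IsGraphAction (G : Type*) [Group G] {V : Type*} [MulAction G V] (Γ : SimpleGraph V) :
    Prop where
  adj_smul (g : G) {a b : V} : Γ.Adj a b → Γ.Adj (g • a) (g • b)

variable {G : Type*} [Group G] {V : Type*} [MulAction G V] {Γ : SimpleGraph V}

theorem finite_setOf_smul_eq {a : V} (ha : (MulAction.stabilizer G a : Set G).Finite) (b : V) :
    {g : G | g • a = b}.Finite := by
  rcases Set.eq_empty_or_nonempty {g : G | g • a = b} with h | ⟨g₀, h₀⟩
  · rw [h]; exact Set.finite_empty
  · refine (ha.image (g₀ * ·)).subset fun g hg ↦ ⟨g₀⁻¹ * g, ?_, mul_inv_cancel_left _ _⟩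
    rw [SetLike.mem_coe, MulAction.mem_stabilizer_iff, mul_smul, hg, inv_smul_eq_iff, h₀]

theorem exists_smul_out_eq (v : V) :
    ∃ g : G, g • (Quotient.mk (MulAction.orbitRel G V) v).out = v :=
  MulAction.orbitRel_apply.1
    ((MulAction.orbitRel G V).symm (Quotient.mk_out (s := MulAction.orbitRel G V) v))

theorem finite_subgroup_orbits (K : Subgroup G) [K.FiniteIndex]
    [Finite (MulAction.orbitRel.Quotient G V)] : Finite (MulAction.orbitRel.Quotient K V) := by
  refine Finite.of_surjective (α := MulAction.orbitRel.Quotient G V × (G ⧸ K))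
    (fun x ↦ Quotient.mk _ (x.2.out⁻¹ • x.1.out)) ?_
  rintro ⟨v⟩
  obtain ⟨g, hg⟩ := exists_smul_out_eq (G := G) v
  obtain ⟨k, hk⟩ := QuotientGroup.mk_out_eq_mul K g⁻¹
  refine ⟨(Quotient.mk _ v, (g⁻¹ : G)), Quotient.sound ⟨k⁻¹, ?_⟩⟩
  change (k⁻¹ : G) • v = _
  rw [hk, mul_inv_rev, inv_inv, mul_smul, hg]

theorem exists_equivariant {G' : Type*} [Group G'] (φ : G →* G') {Y : Type*} [MulAction G' Y]
    (P : V → Y → Prop) (hP : ∀ (g : G) v y, P v y → P (g • v) (φ g • y))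
    (h : ∀ v, ∃ y, P v y ∧ ∀ g ∈ MulAction.stabilizer G v, φ g • y = y) :
    ∃ f : V → Y, (∀ (g : G) v, f (g • v) = φ g • f v) ∧ ∀ v, P v (f v) := by
  choose y hPy hfix using h
  let r : V → V := fun v ↦ (Quotient.mk (MulAction.orbitRel G V) v).out
  have hr : ∀ (g : G) v, r (g • v) = r v := fun g v ↦
    congrArg Quotient.out (Quotient.sound ⟨g, rfl⟩)
  choose c hc using fun v : V ↦ exists_smul_out_eq (G := G) v
  have hc' : ∀ v, c v • r v = v := hc
  refine ⟨fun v ↦ φ (c v) • y (r v), fun g v ↦ ?_, fun v ↦ ?_⟩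
  · have hstab : (g * c v)⁻¹ * c (g • v) ∈ MulAction.stabilizer G (r v) := by
      rw [MulAction.mem_stabilizer_iff, mul_smul, inv_smul_eq_iff, mul_smul, hc', ← hr g, hc']
    have := hfix _ _ hstab
    rw [map_mul, map_inv, mul_smul, inv_smul_eq_iff, map_mul, mul_smul] at this
    simpa only [hr] using this
  · simpa only [hc'] using hP (c v) _ _ (hPy (r v))

variable [IsGraphAction G Γ]

instance (H : Subgroup G) : IsGraphAction H Γ := ⟨fun g _ _ h ↦ IsGraphAction.adj_smul (g : G) h⟩

theorem adj_smul_iff (g : G) {a b : V} : Γ.Adj (g • a) (g • b) ↔ Γ.Adj a b :=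
  ⟨fun h ↦ by simpa using IsGraphAction.adj_smul g⁻¹ h, IsGraphAction.adj_smul g⟩

theorem dist_smul (hΓ : Γ.Connected) (g : G) (a b : V) :
    Γ.dist (g • a) (g • b) = Γ.dist a b := by
  have hle : ∀ (g : G) a b, Γ.dist (g • a) (g • b) ≤ Γ.dist a b := by
    intro g a b
    obtain ⟨q, hq⟩ := hΓ.exists_walk_length_eq_dist a b
    let f : Γ →g Γ := ⟨(g • ·), IsGraphAction.adj_smul g⟩
    rw [← hq, ← SimpleGraph.Walk.length_map f q]
    exact SimpleGraph.dist_le _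
  exact (hle g a b).antisymm (by simpa using hle g⁻¹ (g • a) (g • b))

theorem exists_invariant_strictConvex [Finite G] (hΓ : Γ.IsTree) :
    ∃ F : V → ℕ, (∀ (g : G) v, F (g • v) = F v) ∧
      ∀ v a b, Γ.Adj v a → Γ.Adj v b → a ≠ b → 2 * F v < F a + F b := by
  have := Fintype.ofFinite G
  obtain ⟨x⟩ := hΓ.connected.nonempty
  refine ⟨fun v ↦ ∑ g : G, Γ.dist (g • x) v ^ 2, fun g v ↦ ?_, fun v a b ha hb hab ↦ ?_⟩
  · refine (Equiv.sum_comp (Equiv.mulLeft g) _).symm.trans (Finset.sum_congr rfl fun h _ ↦ ?_)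
    rw [Equiv.coe_mulLeft, mul_smul, dist_smul hΓ.connected]
  · simp only [Finset.mul_sum, ← Finset.sum_add_distrib]
    exact Finset.sum_lt_sum_of_nonempty Finset.univ_nonempty
      fun g _ ↦ two_mul_dist_sq_lt hΓ (g • x) ha hb hab

/- The minimizers of an invariant strictly convex function are pairwise equal or adjacent; as a tree
has no triangles there are at most two. -/
theorem exists_forall_sym2_smul_eq [Finite G] (hΓ : Γ.IsTree) :
    ∃ u w : V, (u = w ∨ Γ.Adj u w) ∧ ∀ g : G, s(g • u, g • w) = s(u, w) := by
  obtain ⟨F, hFinv, hFconv⟩ := exists_invariant_strictConvex (G := G) hΓ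
  obtain ⟨x⟩ := hΓ.connected.nonempty
  let M : Set V := {u | ∀ v, F u ≤ F v}
  have hMadj : ∀ u ∈ M, ∀ w ∈ M, u = w ∨ Γ.Adj u w := fun u hu w hw ↦
    eq_or_adj_of_minimal_of_strictConvex hΓ.connected hFconv hu hw
  have hMinv : ∀ g : G, ∀ u ∈ M, g • u ∈ M := fun g u hu v ↦ (hFinv g u).trans_le (hu v)
  obtain ⟨u, -, hu⟩ := WellFounded.has_min (measure F).wf Set.univ ⟨x, trivial⟩
  have hu : u ∈ M := fun v ↦ not_lt.1 (hu v trivial)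
  by_cases hw : ∃ w ∈ M, w ≠ u
  · obtain ⟨w, hw, hwu⟩ := hw
    have huw : Γ.Adj u w := (hMadj u hu w hw).resolve_left hwu.symm
    have hM : ∀ z ∈ M, z = u ∨ z = w := fun z hz ↦ by
      rcases hMadj u hu z hz with rfl | huz
      · exact Or.inl rfl
      · exact Or.inr ((hMadj z hz w hw).resolve_right
          (not_adj_of_adj_of_adj hΓ huz huw))
    refine ⟨u, w, Or.inr huw, fun g ↦ Sym2.eq_iff.2 ?_⟩
    have hne : g • u ≠ g • w := fun h ↦ hwu (smul_left_cancel g h).symm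
    rcases hM _ (hMinv g u hu) with h₁ | h₁ <;> rcases hM _ (hMinv g w hw) with h₂ | h₂
    · exact absurd (h₁.trans h₂.symm) hne
    · exact Or.inl ⟨h₁, h₂⟩
    · exact Or.inr ⟨h₁, h₂⟩
    · exact absurd (h₁.trans h₂.symm) hne
  · push Not at hw
    exact ⟨u, u, Or.inl rfl, fun g ↦ by rw [hw _ (hMinv g u hu)]⟩

end GraphActions

section EdgeOrbits

variable {G : Type*} [Group G] {V : Type*} [MulAction G V] {Γ : SimpleGraph V} [IsGraphAction G Γ]

instance : MulAction G Γ.edgeSet where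
  smul g e := ⟨e.1.map (g • ·), by
    obtain ⟨⟨a, b⟩, h⟩ := e
    exact IsGraphAction.adj_smul g h⟩
  one_smul e := Subtype.ext <| by
    change Sym2.map _ _ = _
    simp only [one_smul, Sym2.map_id', id]
  mul_smul g h e := Subtype.ext <| by
    change Sym2.map _ _ = Sym2.map _ (Sym2.map _ _)
    simp only [Sym2.map_map, mul_smul, Function.comp_def]

theorem coe_smul_edgeSet (g : G) (e : Γ.edgeSet) : (g • e).1 = e.1.map (g • ·) := rfl

theorem smul_mem_smul_edgeSet (g : G) {a : V} {e : Γ.edgeSet} : g • a ∈ (g • e).1 ↔ a ∈ e.1 := by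
  rw [coe_smul_edgeSet, Sym2.mem_map]
  exact ⟨fun ⟨b, hb, h⟩ ↦ smul_left_cancel g h ▸ hb, fun h ↦ ⟨a, h, rfl⟩⟩

theorem exists_potential_edgeOrbits (hΓ : Γ.IsTree) (v₀ : V)
    (ε : MulAction.orbitRel.Quotient G Γ.edgeSet → ZMod 2) :
    ∃ p : V → ZMod 2, p v₀ = 0 ∧
      (∀ a b (h : Γ.Adj a b), p b = p a + ε (Quotient.mk _ ⟨s(a, b), h⟩)) ∧
      ∀ (g : G) v, p (g • v) = p v + p (g • v₀) := by
  classical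
  obtain ⟨p, hp₀, hp⟩ := exists_potential_zmodTwo hΓ
    (fun e ↦ if h : e ∈ Γ.edgeSet then ε (Quotient.mk _ ⟨e, h⟩) else 0) v₀
  have hpε : ∀ a b (h : Γ.Adj a b), p b = p a + ε (Quotient.mk _ ⟨s(a, b), h⟩) := fun a b h ↦ by
    rw [hp a b h, dif_pos (Γ.mem_edgeSet.2 h)]
  refine ⟨p, hp₀, hpε, fun g v ↦ ?_⟩
  have hconst := apply_eq_of_forall_adj hΓ.connected (s := fun y ↦ p (g • y) - p y)
    (fun a b h ↦ by
      have hg : ε (Quotient.mk _ ⟨s(g • a, g • b), IsGraphAction.adj_smul g h⟩) =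
          ε (Quotient.mk _ ⟨s(a, b), h⟩) := congrArg ε (Quotient.sound ⟨g, rfl⟩)
      rw [hpε _ _ h, hpε _ _ (IsGraphAction.adj_smul g h), hg]
      ring) v v₀
  rw [hp₀, sub_zero] at hconst
  rw [← hconst]
  ring

theorem eq_of_forall_smul_eq_add {A : Type*} [AddGroup A] {v₀ : V} {p p' : V → A}
    (hp₀ : p v₀ = 0) (hp₀' : p' v₀ = 0) (hp : ∀ (g : G) v, p (g • v) = p v + p (g • v₀))
    (hp' : ∀ (g : G) v, p' (g • v) = p' v + p' (g • v₀)) {S : Set G}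
    (hS : Subgroup.closure S = ⊤) (hgen : ∀ s ∈ S, p (s • v₀) = p' (s • v₀))
    (hout : ∀ q : MulAction.orbitRel.Quotient G V, p q.out = p' q.out) : p = p' := by
  have hbase : ∀ g : G, p (g • v₀) = p' (g • v₀) := fun g ↦ by
    induction (hS ▸ Subgroup.mem_top g : g ∈ Subgroup.closure S)
      using Subgroup.closure_induction with
    | mem s hs => exact hgen s hs
    | one => rw [one_smul, hp₀, hp₀']
    | mul a b _ _ ha hb => rw [mul_smul, hp, hp', ha, hb]
    | inv a _ ha =>
      have h₁ := hp a (a⁻¹ • v₀)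
      have h₂ := hp' a (a⁻¹ • v₀)
      rw [smul_inv_smul, hp₀] at h₁
      rw [smul_inv_smul, hp₀'] at h₂
      rw [ha] at h₁
      exact add_right_cancel (h₁.symm.trans h₂)
  funext v
  obtain ⟨g, hg⟩ := exists_smul_out_eq (G := G) v
  rw [← hg, hp, hp', hbase, hout]

/- A function on edge orbits with values in `ZMod 2` is the coboundary of a function on vertices,
unique once it vanishes at a base vertex; its translates differ by constants, so it is determined by
its values on orbit representatives and on the translates of the base vertex by generators. -/
theorem card_edgeOrbits_le (hΓ : Γ.IsTree) {S : Finset G} (hS : Subgroup.closure (S : Set G) = ⊤)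
    [Finite (MulAction.orbitRel.Quotient G V)] :
    Finite (MulAction.orbitRel.Quotient G Γ.edgeSet) ∧
      Nat.card (MulAction.orbitRel.Quotient G Γ.edgeSet) ≤
        Nat.card (MulAction.orbitRel.Quotient G V) + S.card := by
  classical
  let Q := MulAction.orbitRel.Quotient G Γ.edgeSet
  obtain ⟨v₀⟩ := hΓ.connected.nonempty
  choose p hp₀ hp hpg using exists_potential_edgeOrbits (G := G) hΓ v₀
  let Φ : (Q → ZMod 2) → (MulAction.orbitRel.Quotient G V → ZMod 2) × (S → ZMod 2) := fun ε ↦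
    (fun q ↦ p ε q.out, fun s ↦ p ε ((s : G) • v₀))
  have hΦ : Function.Injective Φ := fun ε ε' h ↦ by
    have heq : p ε = p ε' := eq_of_forall_smul_eq_add (hp₀ ε) (hp₀ ε') (hpg ε) (hpg ε') hS
      (fun s hs ↦ congrFun (congrArg Prod.snd h) ⟨s, hs⟩) (congrFun (congrArg Prod.fst h))
    funext q
    obtain ⟨⟨⟨a, b⟩, hab⟩, rfl⟩ := Quotient.exists_rep q
    exact add_left_cancel ((hp ε a b hab).symm.trans (heq ▸ hp ε' a b hab))
  have hfinFun : Finite (Q → ZMod 2) := Finite.of_injective Φ hΦ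
  have hfin : Finite Q := Finite.of_injective (fun q : Q ↦ (Pi.single q 1 : Q → ZMod 2))
    fun a b h ↦ by_contra fun hne ↦ by simpa [hne] using congrFun h a
  refine ⟨hfin, ?_⟩
  have hcard := Nat.card_le_card_of_injective Φ hΦ
  rw [Nat.card_prod, Nat.card_fun, Nat.card_fun, Nat.card_fun, ← pow_add, Nat.card_zmod] at hcard
  simpa using (Nat.pow_le_pow_iff_right (by norm_num : 1 < 2)).1 hcard

theorem finite_edgeOrbits [hG : Group.FG G] (hΓ : Γ.IsTree)
    [Finite (MulAction.orbitRel.Quotient G V)] :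
    Finite (MulAction.orbitRel.Quotient G Γ.edgeSet) := by
  obtain ⟨S, hS⟩ := hG.out
  exact (card_edgeOrbits_le hΓ hS).1

end EdgeOrbits

section Subdivision

variable {G : Type*} [Group G] {V : Type*} {Γ : SimpleGraph V}

/-- The barycentric subdivision of a graph: its vertices are the vertices and the edges of `Γ`, and
every edge of `Γ` is adjacent to its two ends. -/
def subdivision (Γ : SimpleGraph V) : SimpleGraph (V ⊕ Γ.edgeSet) where
  Adj
    | .inl a, .inr e => a ∈ e.1
    | .inr e, .inl a => a ∈ e.1
    | _, _ => False
  symm := ⟨by rintro (a | e) (b | f) h <;> exact h⟩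
  loopless := ⟨by rintro (a | e) h <;> exact h⟩

theorem subdivision_adj_inl_inr {a : V} {e : Γ.edgeSet} :
    (subdivision Γ).Adj (.inl a) (.inr e) ↔ a ∈ e.1 := Iff.rfl

theorem connected_subdivision (hΓ : Γ.Connected) : (subdivision Γ).Connected := by
  have hedge : ∀ {a} {e : Γ.edgeSet}, a ∈ e.1 → (subdivision Γ).Reachable (.inl a) (.inr e) :=
    fun h ↦ SimpleGraph.Adj.reachable (subdivision_adj_inl_inr.2 h)
  have hwalk : ∀ {a b}, Γ.Walk a b → (subdivision Γ).Reachable (.inl a) (.inl b) := by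
    intro a b q
    induction q with
    | nil => rfl
    | @cons a b c h _ ih =>
      exact ((hedge (e := ⟨s(a, b), h⟩) (by simp)).trans (hedge (by simp)).symm).trans ih
  obtain ⟨v₀⟩ := hΓ.nonempty
  have hreach : ∀ x, (subdivision Γ).Reachable (.inl v₀) x := by
    rintro (b | ⟨⟨a, b⟩, h⟩)
    · exact hwalk (hΓ v₀ b).some
    · exact (hwalk (hΓ v₀ a).some).trans (hedge (Sym2.mem_mk_left a b))
  have : Nonempty (V ⊕ Γ.edgeSet) := ⟨.inl v₀⟩
  exact ⟨fun x y ↦ (hreach x).symm.trans (hreach y)⟩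

theorem isTree_subdivision (hΓ : Γ.IsTree) : (subdivision Γ).IsTree := by
  classical
  refine isTree_of_forall_exists_potential (connected_subdivision hΓ.connected) fun t ↦ ?_
  let T : Γ.edgeSet → V → ZMod 2 := fun e a ↦ t s(.inl a, .inr e)
  obtain ⟨r⟩ := hΓ.connected.nonempty
  obtain ⟨p, -, hp⟩ := exists_potential_zmodTwo hΓ (fun e ↦ if h : e ∈ Γ.edgeSet then
    Sym2.lift ⟨fun a b ↦ T ⟨e, h⟩ a + T ⟨e, h⟩ b, fun a b ↦ add_comm _ _⟩ e else 0) r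
  have hends : ∀ e : Γ.edgeSet, ∃ z, ∀ a ∈ e.1, z = p a + T e a := by
    rintro ⟨⟨a, b⟩, h⟩
    have hab : p b = p a + (T ⟨s(a, b), h⟩ a + T ⟨s(a, b), h⟩ b) := by
      simpa only [dif_pos h, Sym2.lift_mk] using hp a b h
    refine ⟨p a + T ⟨s(a, b), h⟩ a, fun c hc ↦ ?_⟩
    obtain rfl | rfl := Sym2.mem_iff.1 hc
    · rfl
    · rw [hab, add_assoc, add_assoc, CharTwo.add_self_eq_zero, add_zero]
  choose z hz using hends
  refine ⟨Sum.elim p z, ?_⟩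
  rintro (a | e) (b | f) h
  · exact h.elim
  · exact hz f a h
  · change p b = z e + t s(.inr e, .inl b)
    rw [hz e b h, Sym2.eq_swap, add_assoc, CharTwo.add_self_eq_zero, add_zero]
  · exact h.elim

variable [MulAction G V] [IsGraphAction G Γ]

instance : IsGraphAction G (subdivision Γ) where
  adj_smul g := by
    rintro (a | e) (b | f) h
    · exact h
    · exact (smul_mem_smul_edgeSet g).2 h
    · exact (smul_mem_smul_edgeSet g).2 h
    · exact h

theorem finite_stabilizer_edge (hst : ∀ v : V, (MulAction.stabilizer G v : Set G).Finite)
    (e : Γ.edgeSet) : (MulAction.stabilizer G e : Set G).Finite := by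
  obtain ⟨⟨a, b⟩, h⟩ := e
  refine ((hst a).union (finite_setOf_smul_eq (hst a) b)).subset fun g hg ↦ ?_
  have heq : s(g • a, g • b) = s(a, b) := congrArg Subtype.val (MulAction.mem_stabilizer_iff.1 hg)
  exact (Sym2.eq_iff.1 heq).imp And.left And.left

theorem finite_stabilizer_sum {X Y : Type*} [MulAction G X] [MulAction G Y]
    (hX : ∀ x : X, (MulAction.stabilizer G x : Set G).Finite)
    (hY : ∀ y : Y, (MulAction.stabilizer G y : Set G).Finite) (z : X ⊕ Y) :
    (MulAction.stabilizer G z : Set G).Finite := by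
  rcases z with x | y
  · exact (hX x).subset fun g hg ↦ Sum.inl_injective hg
  · exact (hY y).subset fun g hg ↦ Sum.inr_injective hg

theorem finite_orbits_sum {X Y : Type*} [MulAction G X] [MulAction G Y]
    [Finite (MulAction.orbitRel.Quotient G X)] [Finite (MulAction.orbitRel.Quotient G Y)] :
    Finite (MulAction.orbitRel.Quotient G (X ⊕ Y)) := by
  refine Finite.of_surjective
    (α := MulAction.orbitRel.Quotient G X ⊕ MulAction.orbitRel.Quotient G Y) (Sum.elim
      (Quotient.map' Sum.inl fun _ _ ⟨g, h⟩ ↦ ⟨g, congrArg Sum.inl h⟩)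
      (Quotient.map' Sum.inr fun _ _ ⟨g, h⟩ ↦ ⟨g, congrArg Sum.inr h⟩)) ?_
  rintro ⟨x | y⟩
  · exact ⟨.inl (Quotient.mk _ x), rfl⟩
  · exact ⟨.inr (Quotient.mk _ y), rfl⟩

end Subdivision

section StallingsTree

/-- A tree with an action of `G` as provided by Stallings' theorem for virtually free groups: finite
vertex stabilizers, finitely many orbits of vertices, and a fixed vertex for every finite subgroup,
so that the finite subgroups of `G` are exactly the subgroups of vertex stabilizers. -/
structure StallingsTree (G : Type u) [Group G] where
  V : Type v
  [action : MulAction G V]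
  graph : SimpleGraph V
  isTree : graph.IsTree
  [isGraphAction : IsGraphAction G graph]
  finite_stabilizer (v : V) : (MulAction.stabilizer G v : Set G).Finite
  exists_fixed (H : Subgroup G) : (H : Set G).Finite → ∃ v : V, ∀ h ∈ H, h • v = v
  [finite_orbits : Finite (MulAction.orbitRel.Quotient G V)]

attribute [instance] StallingsTree.action StallingsTree.isGraphAction StallingsTree.finite_orbits

namespace StallingsTree

variable {G' : Type u'} [Group G'] {G : Type u} [Group G]

/-- The barycentric subdivision of a tree with a cofinite action with finite stabilizers. A finite
subgroup stabilizes a vertex or an edge of the tree, hence fixes a vertex of the subdivision. -/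
def ofTree [Group.FG G] {V : Type v} [MulAction G V] {Γ : SimpleGraph V} [IsGraphAction G Γ]
    (hΓ : Γ.IsTree) (hst : ∀ v : V, (MulAction.stabilizer G v : Set G).Finite)
    [Finite (MulAction.orbitRel.Quotient G V)] : StallingsTree.{u, v} G where
  V := V ⊕ Γ.edgeSet
  graph := subdivision Γ
  isTree := isTree_subdivision hΓ
  finite_stabilizer := finite_stabilizer_sum hst (finite_stabilizer_edge hst)
  exists_fixed H hH := by
    have : Finite H := hH
    obtain ⟨u, w, rfl | huw, hfix⟩ := exists_forall_sym2_smul_eq (G := H) hΓ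
    · exact ⟨.inl u, fun h hh ↦ congrArg Sum.inl (Sym2.diag_injective (hfix ⟨h, hh⟩))⟩
    · exact ⟨.inr ⟨s(u, w), huw⟩, fun h hh ↦ congrArg Sum.inr (Subtype.ext (hfix ⟨h, hh⟩))⟩
  finite_orbits :=
    have := finite_edgeOrbits (G := G) hΓ
    finite_orbits_sum

variable (T : StallingsTree.{u, v} G)

/-- The barycentric subdivision. -/
def subdivide [Group.FG G] : StallingsTree.{u, v} G := ofTree T.isTree T.finite_stabilizer

theorem smul_eq_of_smul_edge_eq {a b : T.V} (hab : T.graph.Adj a b) {g : G}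
    (hg : s(g • a, g • b) = s(a, b)) : g • a = a ∧ g • b = b := by
  refine (Sym2.eq_iff.1 hg).resolve_right fun ⟨ha, _⟩ ↦ ?_
  have hfin : (MulAction.stabilizer G (⟨s(a, b), hab⟩ : T.graph.edgeSet) : Set G).Finite :=
    finite_stabilizer_edge T.finite_stabilizer _
  obtain ⟨w, hw⟩ := T.exists_fixed _ hfin
  have hgw : g • w = w := hw g (Subtype.ext hg)
  refine T.isTree.dist_ne_of_adj w hab ?_
  rw [← dist_smul (G := G) T.isTree.connected g, hgw, ha]

/-- A `φ`-equivariant map between trees which sends every edge to an edge or to a vertex. -/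
structure LazyMap (φ : G →* G') (T : StallingsTree.{u, v} G) (T' : StallingsTree.{u', v'} G') where
  toFun : T.V → T'.V
  map_smul (g : G) (a : T.V) : toFun (g • a) = φ g • toFun a
  adj_or_eq {a b : T.V} : T.graph.Adj a b → T'.graph.Adj (toFun a) (toFun b) ∨ toFun a = toFun b

variable (T' : StallingsTree.{u', v'} G')

instance (φ : G →* G') : CoeFun (LazyMap φ T T') fun _ ↦ T.V → T'.V := ⟨LazyMap.toFun⟩

variable {T T'} {φ : G →* G'} {f : T.V → T'.V}

theorem exists_equivariant_midpoint (hf : ∀ (g : G) a, f (g • a) = φ g • f a) {n : ℕ}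
    (e : T.graph.edgeSet)
    (hn : ∀ a b, T.graph.Adj a b → T'.graph.dist (f a) (f b) ≤ n + 2) :
    ∃ y, (∀ a ∈ e.1, T'.graph.dist (f a) y ≤ n + 1) ∧
      ∀ g ∈ MulAction.stabilizer G e, φ g • y = y := by
  obtain ⟨⟨a, b⟩, hab⟩ := e
  have hab : T.graph.Adj a b := hab
  have hfix : ∀ g ∈ MulAction.stabilizer G (⟨s(a, b), hab⟩ : T.graph.edgeSet),
      φ g • f a = f a ∧ φ g • f b = f b := fun g hg ↦ by
    obtain ⟨ha, hb⟩ := T.smul_eq_of_smul_edge_eq hab (congrArg Subtype.val hg)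
    rw [← hf, ← hf, ha, hb]
    exact ⟨rfl, rfl⟩
  have hmem : ∀ {y}, T'.graph.dist (f a) y ≤ n + 1 → T'.graph.dist (f b) y ≤ n + 1 →
      ∀ c ∈ s(a, b), T'.graph.dist (f c) y ≤ n + 1 := fun ha hb c hc ↦ by
    obtain rfl | rfl := Sym2.mem_iff.1 hc
    exacts [ha, hb]
  by_cases heq : f a = f b
  · exact ⟨f a, hmem (by simp) (by simp [heq]), fun g hg ↦ (hfix g hg).1⟩
  obtain ⟨y, hya, hdist⟩ := exists_adj_dist_eq_add_one T'.isTree.connected heq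
  refine ⟨y, hmem ?_ ?_, fun g hg ↦ ?_⟩
  · rw [SimpleGraph.dist_eq_one_iff_adj.2 hya.symm]
    exact Nat.le_add_left 1 n
  · have := hn a b hab
    rw [SimpleGraph.dist_comm] at this
    omega
  · obtain ⟨hga, hgb⟩ := hfix g hg
    refine eq_of_adj_of_dist_eq_add_one T'.isTree (f b) (v := f a) ?_ hya ?_ hdist
    · simpa only [hga] using IsGraphAction.adj_smul (φ g) hya
    · rw [hdist, ← dist_smul T'.isTree.connected (φ g) (f b) y, hgb]

theorem exists_lazyMap_of_forall_dist_le [Group.FG G]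
    (hf : ∀ (g : G) a, f (g • a) = φ g • f a) {n : ℕ}
    (hn : ∀ a b, T.graph.Adj a b → T'.graph.dist (f a) (f b) ≤ n + 1) :
    ∃ T₁ : StallingsTree.{u, v} G, Nonempty (LazyMap φ T₁ T') := by
  induction n generalizing T with
  | zero =>
    refine ⟨T, ⟨f, hf, fun {a b} hab ↦ ?_⟩⟩
    rcases Nat.le_one_iff_eq_zero_or_eq_one.1 (hn a b hab) with h | h
    · exact Or.inr (T'.isTree.connected.dist_eq_zero_iff.1 h)
    · exact Or.inl (SimpleGraph.dist_eq_one_iff_adj.1 h)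
  | succ n ih =>
    obtain ⟨m, hm, hmn⟩ := exists_equivariant φ (V := T.graph.edgeSet)
      (fun e y ↦ ∀ a ∈ e.1, T'.graph.dist (f a) y ≤ n + 1)
      (fun g e y hy a ha ↦ by
        rw [← smul_inv_smul g a, smul_mem_smul_edgeSet] at ha
        rw [← smul_inv_smul g a, hf, dist_smul T'.isTree.connected]
        exact hy _ ha)
      (fun e ↦ exists_equivariant_midpoint hf e hn)
    refine ih (T := T.subdivide) (f := Sum.elim f m) ?_ ?_
    · rintro g (a | e)
      exacts [hf g a, hm g e]
    · rintro (a | e) (b | e') h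
      · exact h.elim
      · exact hmn e' a h
      · exact SimpleGraph.dist_comm.trans_le (hmn e b h)
      · exact h.elim

theorem exists_lazyMap [Group.FG G] (φ : G →* G') (T : StallingsTree.{u, v} G)
    (T' : StallingsTree.{u', v'} G') :
    ∃ T₁ : StallingsTree.{u, v} G, Nonempty (LazyMap φ T₁ T') := by
  obtain ⟨f, hf, -⟩ := exists_equivariant φ (V := T.V) (Y := T'.V) (fun _ _ ↦ True)
    (fun _ _ _ _ ↦ trivial) fun a ↦ by
      obtain ⟨y, hy⟩ := T'.exists_fixed ((MulAction.stabilizer G a).map φ)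
        ((T.finite_stabilizer a).image φ)
      exact ⟨y, trivial, fun g hg ↦ hy _ (Subgroup.mem_map_of_mem φ hg)⟩
  let d : T.graph.edgeSet → ℕ := fun e ↦
    Sym2.lift ⟨fun a b ↦ T'.graph.dist (f a) (f b), fun _ _ ↦ SimpleGraph.dist_comm⟩ e.1
  have hd : ∀ (g : G) e, d (g • e) = d e := by
    rintro g ⟨⟨a, b⟩, h⟩
    change T'.graph.dist (f (g • a)) (f (g • b)) = T'.graph.dist (f a) (f b)
    rw [hf, hf, dist_smul T'.isTree.connected]
  have := finite_edgeOrbits (G := G) T.isTree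
  obtain ⟨n, hn⟩ := (Set.finite_range fun q : MulAction.orbitRel.Quotient G T.graph.edgeSet ↦
    Quotient.lift d (by rintro _ e ⟨g, rfl⟩; exact hd g e) q).bddAbove
  exact exists_lazyMap_of_forall_dist_le hf fun a b hab ↦
    (hn ⟨Quotient.mk _ ⟨s(a, b), hab⟩, rfl⟩).trans (Nat.le_succ n)

end StallingsTree

end StallingsTree

section Fold

variable (G : Type*) [Group G] {V : Type*} [MulAction G V] {X : Type*}

/-- The elements that are forced to stabilize the image of `u₁` and `u₂` when these two vertices are
identified equivariantly. -/
def foldGenerators (u₁ u₂ : V) : Set G := {g | g • u₁ = u₁ ∨ g • u₂ = u₂ ∨ g • u₁ = u₂}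

/-- The stabilizer of the common image of `u₁` and `u₂` after folding them together. -/
def foldGroup (u₁ u₂ : V) : Subgroup G := Subgroup.closure (foldGenerators G u₁ u₂)

/-- The set of vertices that are identified with `u₁` and `u₂` when these are folded together. -/
def foldBlock (u₁ u₂ : V) : Set V := {x | ∃ γ ∈ foldGroup G u₁ u₂, x = γ • u₁ ∨ x = γ • u₂}

variable {G} {u₁ u₂ : V}

theorem left_mem_foldBlock : u₁ ∈ foldBlock G u₁ u₂ := ⟨1, one_mem _, Or.inl (one_smul G _).symm⟩

theorem right_mem_foldBlock : u₂ ∈ foldBlock G u₁ u₂ := ⟨1, one_mem _, Or.inr (one_smul G _).symm⟩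

theorem mem_foldGroup_of_smul_mem_foldBlock {x : V} {h : G} (hx : x ∈ foldBlock G u₁ u₂)
    (hhx : h • x ∈ foldBlock G u₁ u₂) : h ∈ foldGroup G u₁ u₂ := by
  obtain ⟨γ, hγ, hx⟩ := hx
  obtain ⟨δ, hδ, hhx⟩ := hhx
  have hgen : δ⁻¹ * h * γ ∈ foldGenerators G u₁ u₂ ∨ (δ⁻¹ * h * γ)⁻¹ ∈ foldGenerators G u₁ u₂ := by
    have hsmul : ∀ y : V, (δ⁻¹ * h * γ) • y = δ⁻¹ • h • γ • y := fun y ↦ by rw [mul_smul, mul_smul]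
    rcases hx with rfl | rfl <;> rcases hhx with hhx | hhx
    · exact Or.inl (Or.inl (by rw [hsmul, hhx, inv_smul_smul]))
    · exact Or.inl (Or.inr (Or.inr (by rw [hsmul, hhx, inv_smul_smul])))
    · exact Or.inr (Or.inr (Or.inr (by rw [inv_smul_eq_iff, hsmul, hhx, inv_smul_smul])))
    · exact Or.inl (Or.inr (Or.inl (by rw [hsmul, hhx, inv_smul_smul])))
  have hmem : δ⁻¹ * h * γ ∈ foldGroup G u₁ u₂ :=
    hgen.elim (fun h ↦ Subgroup.subset_closure h) fun h ↦ inv_mem_iff.1 (Subgroup.subset_closure h)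
  simpa [mul_assoc] using mul_mem (mul_mem hδ hmem) (inv_mem hγ)

theorem smul_mem_foldBlock {x : V} {h : G} (hx : x ∈ foldBlock G u₁ u₂)
    (hh : h ∈ foldGroup G u₁ u₂) : h • x ∈ foldBlock G u₁ u₂ := by
  obtain ⟨γ, hγ, hx⟩ := hx
  refine ⟨h * γ, mul_mem hh hγ, ?_⟩
  rw [mul_smul, mul_smul, smul_left_cancel_iff, smul_left_cancel_iff]
  exact hx

variable (G u₁ u₂) in
/-- The smallest `G`-invariant equivalence relation that identifies `u₁` and `u₂`: its nontrivial
classes are the translates of `foldBlock G u₁ u₂`. -/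
def foldSetoid : Setoid V where
  r x y := x = y ∨ ∃ g : G, g • x ∈ foldBlock G u₁ u₂ ∧ g • y ∈ foldBlock G u₁ u₂
  iseqv := by
    refine ⟨fun x ↦ Or.inl rfl, ?_, ?_⟩
    · rintro x y (h | ⟨g, hx, hy⟩)
      · exact Or.inl h.symm
      · exact Or.inr ⟨g, hy, hx⟩
    · rintro x y z (rfl | ⟨g, hx, hy⟩) (rfl | ⟨g', hy', hz⟩)
      · exact Or.inl rfl
      · exact Or.inr ⟨g', hy', hz⟩
      · exact Or.inr ⟨g, hx, hy⟩
      · have hsmul : ∀ w : V, (g' * g⁻¹) • g • w = g' • w := fun w ↦ by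
          rw [← mul_smul, inv_mul_cancel_right]
        have hmem : g' * g⁻¹ ∈ foldGroup G u₁ u₂ :=
          mem_foldGroup_of_smul_mem_foldBlock hy (by rwa [hsmul])
        exact Or.inr ⟨g', hsmul x ▸ smul_mem_foldBlock hx hmem, hz⟩

theorem foldSetoid_smul (g : G) {x y : V} (h : foldSetoid G u₁ u₂ x y) :
    foldSetoid G u₁ u₂ (g • x) (g • y) := by
  rcases h with rfl | ⟨h, hx, hy⟩
  · exact Or.inl rfl
  · refine Or.inr ⟨h * g⁻¹, ?_, ?_⟩ <;> rwa [← mul_smul, inv_mul_cancel_right]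

theorem apply_smul_eq_of_mem_foldBlock {F : V → X} (hF : ∀ g : G, F (g • u₁) = F (g • u₂)) (g : G)
    {x : V} (hx : x ∈ foldBlock G u₁ u₂) : F (g • x) = F (g • u₁) := by
  have key : ∀ γ ∈ foldGroup G u₁ u₂, ∀ g : G, F ((g * γ) • u₁) = F (g • u₁) := by
    intro γ hγ
    induction hγ using Subgroup.closure_induction with
    | mem s hs =>
      intro g
      rcases hs with hs | hs | hs
      · rw [mul_smul, hs]
      · rw [hF, mul_smul, hs, hF]
      · rw [mul_smul, hs, hF]
    | one => intro g; rw [mul_one]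
    | mul a b _ _ ha hb => intro g; rw [← mul_assoc, hb, ha]
    | inv a _ ha => intro g; rw [← ha, inv_mul_cancel_right]
  obtain ⟨γ, hγ, rfl | rfl⟩ := hx
  · rw [← mul_smul, key γ hγ]
  · rw [← mul_smul, ← hF, key γ hγ]

theorem apply_eq_of_foldSetoid {F : V → X} (hF : ∀ g : G, F (g • u₁) = F (g • u₂)) {x y : V}
    (h : foldSetoid G u₁ u₂ x y) : F x = F y := by
  rcases h with rfl | ⟨g, hx, hy⟩
  · rfl
  · simpa using (apply_smul_eq_of_mem_foldBlock hF g⁻¹ hx).trans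
      (apply_smul_eq_of_mem_foldBlock hF g⁻¹ hy).symm

variable (G u₁ u₂) in
/-- The set of vertices of the tree obtained by folding `u₁` and `u₂` together equivariantly. -/
def FoldQuotient : Type _ := Quotient (foldSetoid G u₁ u₂)

namespace FoldQuotient

variable (G u₁ u₂) in
/-- The image of a vertex under the fold. -/
def mk (x : V) : FoldQuotient G u₁ u₂ := Quotient.mk _ x

theorem mk_surjective : Function.Surjective (mk G u₁ u₂) := Quotient.mk_surjective

instance : MulAction G (FoldQuotient G u₁ u₂) where
  smul g := Quotient.map (g • ·) fun _ _ h ↦ foldSetoid_smul g h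
  one_smul := by
    rintro ⟨x⟩
    exact congrArg (mk G u₁ u₂) (one_smul G x)
  mul_smul := by
    rintro g h ⟨x⟩
    exact congrArg (mk G u₁ u₂) (mul_smul g h x)

theorem mk_smul (g : G) (x : V) : mk G u₁ u₂ (g • x) = g • mk G u₁ u₂ x := rfl

theorem mk_left_eq_mk_right : mk G u₁ u₂ u₁ = mk G u₁ u₂ u₂ :=
  Quotient.sound (Or.inr ⟨1, by simpa using left_mem_foldBlock, by simpa using right_mem_foldBlock⟩)

theorem exists_factor (F : V → X) (hF : ∀ g : G, F (g • u₁) = F (g • u₂)) :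
    ∃ F' : FoldQuotient G u₁ u₂ → X, ∀ x, F' (mk G u₁ u₂ x) = F x :=
  ⟨Quotient.lift F fun _ _ h ↦ apply_eq_of_foldSetoid hF h, fun _ ↦ rfl⟩

theorem finite_stabilizer (hst : ∀ v : V, (MulAction.stabilizer G v : Set G).Finite)
    (hfin : (foldGroup G u₁ u₂ : Set G).Finite) (a : FoldQuotient G u₁ u₂) :
    (MulAction.stabilizer G a : Set G).Finite := by
  obtain ⟨x, rfl⟩ := mk_surjective a
  have hrel : ∀ g ∈ MulAction.stabilizer G (mk G u₁ u₂ x), foldSetoid G u₁ u₂ (g • x) x :=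
    fun g hg ↦ Quotient.exact hg
  by_cases hx : ∃ h : G, h • x ∈ foldBlock G u₁ u₂
  · obtain ⟨h, hx⟩ := hx
    have hmem : ∀ {k : G}, k • x ∈ foldBlock G u₁ u₂ → k * h⁻¹ ∈ foldGroup G u₁ u₂ := fun hk ↦
      mem_foldGroup_of_smul_mem_foldBlock hx (by rwa [← mul_smul, inv_mul_cancel_right])
    refine ((hst x).union (hfin.image fun γ ↦ h⁻¹ * γ * h)).subset fun g hg ↦ ?_
    refine (hrel g hg).imp id fun ⟨k, hkg, hk⟩ ↦ ⟨h * g * h⁻¹, ?_, by group⟩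
    rw [← mul_smul] at hkg
    have hconj : h * g * h⁻¹ = (k * h⁻¹)⁻¹ * (k * g * h⁻¹) := by group
    exact hconj ▸ mul_mem (inv_mem (hmem hk)) (hmem hkg)
  · refine (hst x).subset fun g hg ↦ (hrel g hg).resolve_right ?_
    rintro ⟨k, -, hk⟩
    exact hx ⟨k, hk⟩

/-- The graph obtained from `Γ` by folding `u₁` and `u₂` together equivariantly. -/
def graph (Γ : SimpleGraph V) : SimpleGraph (FoldQuotient G u₁ u₂) where
  Adj a b := a ≠ b ∧ ∃ x y, Γ.Adj x y ∧ mk G u₁ u₂ x = a ∧ mk G u₁ u₂ y = b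
  symm := ⟨fun _ _ ⟨hne, x, y, h, hx, hy⟩ ↦ ⟨hne.symm, y, x, h.symm, hy, hx⟩⟩
  loopless := ⟨fun _ h ↦ h.1 rfl⟩

variable {Γ : SimpleGraph V}

theorem graph_adj_or_eq {x y : V} (h : Γ.Adj x y) :
    (graph Γ).Adj (mk G u₁ u₂ x) (mk G u₁ u₂ y) ∨ mk G u₁ u₂ x = mk G u₁ u₂ y :=
  (em _).symm.imp_left fun hne ↦ ⟨hne, x, y, h, rfl, rfl⟩

theorem connected_graph (hΓ : Γ.Connected) :
    (graph Γ : SimpleGraph (FoldQuotient G u₁ u₂)).Connected := by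
  have hreach : ∀ {x y}, Γ.Walk x y → (graph Γ).Reachable (mk G u₁ u₂ x) (mk G u₁ u₂ y) := by
    intro x y q
    induction q with
    | nil => rfl
    | cons hxy _ ih =>
      rcases graph_adj_or_eq (G := G) (u₁ := u₁) (u₂ := u₂) hxy with h | h
      · exact h.reachable.trans ih
      · rwa [h]
  have : Nonempty (FoldQuotient G u₁ u₂) := ⟨mk G u₁ u₂ u₁⟩
  refine ⟨fun a b ↦ ?_⟩
  obtain ⟨x, rfl⟩ := mk_surjective a
  obtain ⟨y, rfl⟩ := mk_surjective b
  exact hreach (hΓ x y).some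

variable [IsGraphAction G Γ]

instance : IsGraphAction G (graph Γ : SimpleGraph (FoldQuotient G u₁ u₂)) where
  adj_smul g := by
    rintro _ _ ⟨hne, x, y, hxy, rfl, rfl⟩
    exact ⟨fun h ↦ hne (smul_left_cancel g h), g • x, g • y, IsGraphAction.adj_smul g hxy, rfl, rfl⟩

theorem isTree_graph (hΓ : Γ.IsTree) (hnear : Near Γ u₁ u₂) :
    (graph Γ : SimpleGraph (FoldQuotient G u₁ u₂)).IsTree := by
  classical
  refine isTree_of_forall_exists_potential (connected_graph hΓ.connected) fun t ↦ ?_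
  obtain ⟨p, -, hp⟩ := exists_potential_zmodTwo hΓ
    (fun e ↦ if (e.map (mk G u₁ u₂)).IsDiag then 0 else t (e.map (mk G u₁ u₂))) u₁
  simp only [Sym2.map_mk, Sym2.mk_isDiag_iff] at hp
  obtain ⟨p', hp'⟩ := exists_factor (u₁ := u₁) (u₂ := u₂) p fun g : G ↦ by
    have heq : mk G u₁ u₂ (g • u₁) = mk G u₁ u₂ (g • u₂) := by
      rw [mk_smul, mk_smul, mk_left_eq_mk_right]
    rcases hnear with h | h | ⟨v, h₁, h₂⟩
    · rw [h]
    · rw [hp _ _ (IsGraphAction.adj_smul g h), if_pos heq, add_zero]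
    · rw [hp _ _ (IsGraphAction.adj_smul g h₁), hp _ _ (IsGraphAction.adj_smul g h₂), heq]
  refine ⟨p', ?_⟩
  rintro _ _ ⟨hne, x, y, hxy, rfl, rfl⟩
  rw [hp', hp', hp x y hxy, if_neg hne]

end FoldQuotient

end Fold

namespace StallingsTree

variable {G' : Type u'} [Group G'] {G : Type u} [Group G]

/-- The tree obtained by folding two vertices together equivariantly. -/
def fold (T : StallingsTree.{u, v} G) {u₁ u₂ : T.V} (hnear : Near T.graph u₁ u₂)
    (hfin : (foldGroup G u₁ u₂ : Set G).Finite) : StallingsTree.{u, v} G where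
  V := FoldQuotient G u₁ u₂
  graph := FoldQuotient.graph T.graph
  isTree := FoldQuotient.isTree_graph T.isTree hnear
  finite_stabilizer := FoldQuotient.finite_stabilizer T.finite_stabilizer hfin
  exists_fixed H hH := by
    obtain ⟨v, hv⟩ := T.exists_fixed H hH
    exact ⟨.mk G u₁ u₂ v, fun h hh ↦ by rw [← FoldQuotient.mk_smul, hv h hh]⟩
  finite_orbits := Finite.of_surjective
    (Quotient.map (sa := MulAction.orbitRel G T.V) (sb := MulAction.orbitRel G _)
      (FoldQuotient.mk G u₁ u₂) fun _ _ ⟨g, h⟩ ↦ ⟨g, congrArg _ h⟩)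
    (Quotient.map_surjective _ FoldQuotient.mk_surjective)

/- An element of `K` moving `u₁` to `u₂` lies in the finite group `foldGroup G u₁ u₂`, so it is
trivial: the fold identifies two different `K`-orbits. -/
theorem card_orbits_fold_lt (T : StallingsTree.{u, v} G) {K : Subgroup G} [K.FiniteIndex]
    (hK : ∀ k ∈ K, IsOfFinOrder k → k = 1) {u₁ u₂ : T.V} (hne : u₁ ≠ u₂)
    (hnear : Near T.graph u₁ u₂) (hfin : (foldGroup G u₁ u₂ : Set G).Finite) :
    Nat.card (MulAction.orbitRel.Quotient K (T.fold hnear hfin).V) <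
      Nat.card (MulAction.orbitRel.Quotient K T.V) := by
  let q : MulAction.orbitRel.Quotient K T.V → MulAction.orbitRel.Quotient K (T.fold hnear hfin).V :=
    Quotient.map (FoldQuotient.mk G u₁ u₂) fun _ _ ⟨k, h⟩ ↦ ⟨k, congrArg _ h⟩
  have hq : Function.Surjective q := Quotient.map_surjective _ FoldQuotient.mk_surjective
  have := finite_subgroup_orbits (V := T.V) K
  by_contra! hle
  have hmk : (Quotient.mk _ u₂ : MulAction.orbitRel.Quotient K T.V) = Quotient.mk _ u₁ :=
    (hq.bijective_of_nat_card_le hle).1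
      (congrArg (Quotient.mk _) FoldQuotient.mk_left_eq_mk_right.symm)
  obtain ⟨⟨k, hk⟩, hku : k • u₁ = u₂⟩ := Quotient.exact hmk
  have hkfin : IsOfFinOrder k := by
    have : Finite (foldGroup G u₁ u₂) := hfin
    have hmem : k ∈ foldGroup G u₁ u₂ := Subgroup.subset_closure (Or.inr (Or.inr hku))
    exact (foldGroup G u₁ u₂).subtype.isOfFinOrder (isOfFinOrder_of_finite ⟨k, hmem⟩)
  exact hne (by rw [← hku, hK k hk hkfin, one_smul])

namespace LazyMap

variable {φ : G →* G'} {T' : StallingsTree.{u', v'} G'} {T : StallingsTree.{u, v} G}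

/-- The identity of a tree as a lazy map. -/
def refl (T : StallingsTree.{u, v} G) : LazyMap (MonoidHom.id G) T T := ⟨id, fun _ _ ↦ rfl, Or.inl⟩

/-- The composition of lazy maps. -/
def comp {G'' : Type*} [Group G''] {ψ : G' →* G''} {T'' : StallingsTree.{_, w} G''}
    (f : LazyMap ψ T' T'') (c : LazyMap φ T T') : LazyMap (ψ.comp φ) T T'' where
  toFun := f ∘ c
  map_smul g a := (congrArg f (c.map_smul g a)).trans (f.map_smul _ _)
  adj_or_eq h := (c.adj_or_eq h).elim f.adj_or_eq fun h ↦ Or.inr (congrArg f h)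

/-- The translation by `g`, which is equivariant with respect to the conjugation by `g`. -/
def translation (T : StallingsTree.{u, v} G) (g : G) :
    LazyMap (MulAut.conj g).toMonoidHom T T where
  toFun := (g • ·)
  map_smul h a := by
    change g • h • a = (g * h * g⁻¹) • g • a
    rw [mul_smul, mul_smul, inv_smul_smul]
  adj_or_eq h := Or.inl (IsGraphAction.adj_smul g h)

/-- The fold as a `G`-equivariant map. -/
def toFold {u₁ u₂ : T.V} (hnear : Near T.graph u₁ u₂)
    (hfin : (foldGroup G u₁ u₂ : Set G).Finite) :
    LazyMap (MonoidHom.id G) T (T.fold hnear hfin) where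
  toFun := FoldQuotient.mk G u₁ u₂
  map_smul := FoldQuotient.mk_smul
  adj_or_eq := FoldQuotient.graph_adj_or_eq

theorem exists_factor_fold (f : LazyMap φ T T') {u₁ u₂ : T.V} (heq : f u₁ = f u₂)
    (hnear : Near T.graph u₁ u₂) (hfin : (foldGroup G u₁ u₂ : Set G).Finite) :
    Nonempty (LazyMap φ (T.fold hnear hfin) T') := by
  obtain ⟨F, hF⟩ := FoldQuotient.exists_factor (G := G) (u₁ := u₁) (u₂ := u₂) f fun g ↦ by
    rw [f.map_smul, f.map_smul, heq]
  refine ⟨F, fun g a ↦ ?_, ?_⟩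
  · obtain ⟨x, rfl⟩ := FoldQuotient.mk_surjective a
    exact (hF (g • x)).trans ((f.map_smul g x).trans (congrArg (φ g • ·) (hF x).symm))
  · rintro _ _ ⟨-, x, y, hxy, rfl, rfl⟩
    rw [hF, hF]
    exact f.adj_or_eq hxy

theorem near_map (f : LazyMap φ T T') {a b : T.V} (h : Near T.graph a b) :
    Near T'.graph (f a) (f b) := by
  rcases h with h | h | ⟨v, h₁, h₂⟩
  · exact Or.inl (congrArg f h)
  · exact (f.adj_or_eq h).elim (Or.inr ∘ Or.inl) Or.inl
  · rcases f.adj_or_eq h₁ with h₁ | h₁ <;> rcases f.adj_or_eq h₂ with h₂ | h₂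
    · exact Or.inr (Or.inr ⟨_, h₁, h₂⟩)
    · exact Or.inr (Or.inl (h₂ ▸ h₁.symm))
    · exact Or.inr (Or.inl (h₁ ▸ h₂))
    · exact Or.inl (h₁.symm.trans h₂)

theorem map_mem_foldGenerators (f : LazyMap φ T T') {a b : T.V} {g : G}
    (hg : g ∈ foldGenerators G a b) : φ g ∈ foldGenerators G' (f a) (f b) := by
  have hmap : ∀ {x y}, g • x = y → φ g • f x = f y := fun h ↦ by rw [← f.map_smul, h]
  exact hg.imp hmap (Or.imp hmap hmap)

variable {K : Subgroup G} [K.FiniteIndex] (hK : ∀ k ∈ K, IsOfFinOrder k → k = 1)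

include hK in
theorem exists_injective_or_infinite_foldGroup (f : LazyMap φ T T') :
    ∃ (S : StallingsTree.{u, v} G) (F : LazyMap φ S T'), Function.Injective F ∨
      ∃ a b, Near S.graph a b ∧ F a = F b ∧ (foldGroup G a b : Set G).Infinite := by
  induction hn : Nat.card (MulAction.orbitRel.Quotient K T.V) using Nat.strong_induction_on
    generalizing T with
  | _ n ih =>
    by_cases hf : Function.Injective f
    · exact ⟨T, f, Or.inl hf⟩
    obtain ⟨a, b, hne, hnear, hab⟩ := exists_near_of_not_injective T.isTree T'.isTree.isAcyclic
      (fun _ _ ↦ f.adj_or_eq) hf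
    by_cases hfin : (foldGroup G a b : Set G).Finite
    · obtain ⟨F⟩ := f.exists_factor_fold hab hnear hfin
      exact ih _ (hn ▸ T.card_orbits_fold_lt hK hne hnear hfin) F rfl
    · exact ⟨T, f, Or.inr ⟨a, b, hnear, hab, hfin⟩⟩

end LazyMap

/-- A tree is reduced if no edge can be folded without creating an infinite stabilizer. -/
def IsReduced (T : StallingsTree.{u, v} G) : Prop :=
  ∀ a b, T.graph.Adj a b → (foldGroup G a b : Set G).Infinite

theorem exists_isReduced {K : Subgroup G} [K.FiniteIndex] (hK : ∀ k ∈ K, IsOfFinOrder k → k = 1)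
    (T : StallingsTree.{u, v} G) :
    ∃ R : StallingsTree.{u, v} G, R.IsReduced ∧ Nonempty (LazyMap (MonoidHom.id G) T R) := by
  induction hn : Nat.card (MulAction.orbitRel.Quotient K T.V) using Nat.strong_induction_on
    generalizing T with
  | _ n ih =>
    by_cases hT : T.IsReduced
    · exact ⟨T, hT, ⟨.refl T⟩⟩
    · simp only [IsReduced, not_forall, Set.not_infinite] at hT
      obtain ⟨a, b, hab, hfin⟩ := hT
      have hnear : Near T.graph a b := Or.inr (Or.inl hab)
      obtain ⟨R, hR, ⟨c⟩⟩ := ih _ (hn ▸ T.card_orbits_fold_lt hK hab.ne hnear hfin) _ rfl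
      exact ⟨R, hR, ⟨c.comp (.toFold hnear hfin)⟩⟩

end StallingsTree

section TreeSets

open Filter Set
open scoped Pointwise

/-- A `G`-invariant nested family of proper nonempty subsets of `X`, closed under complements, of
which only finitely many separate two given points. It is dual to a tree: the edges are the pairs
`{C, Cᶜ}`, and the vertices are the elements of `TreeSet.Orientation`. -/
structure TreeSet (G X : Type*) [Group G] [MulAction G X] where
  sets : Set (Set X)
  smul_mem (g : G) {C : Set X} : C ∈ sets → g • C ∈ sets
  compl_mem {C : Set X} : C ∈ sets → Cᶜ ∈ sets
  nonempty {C : Set X} : C ∈ sets → C.Nonempty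
  nested {C D : Set X} : C ∈ sets → D ∈ sets → C ⊆ D ∨ C ⊆ Dᶜ ∨ Cᶜ ⊆ D ∨ Cᶜ ⊆ Dᶜ
  finite_separating (x y : X) : {C ∈ sets | x ∈ C ∧ y ∉ C}.Finite

namespace TreeSet

variable {G : Type*} [Group G] {X : Type v} [MulAction G X]

/-- A coherent choice of one side of each pair `{C, Cᶜ}`, pointing towards any given point of `X`
for all but finitely many pairs. -/
structure Orientation (W : TreeSet G X) where
  carrier : Set (Set X)
  subset : carrier ⊆ W.sets
  mem_or_compl_mem {C : Set X} : C ∈ W.sets → C ∈ carrier ∨ Cᶜ ∈ carrier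
  compl_notMem {C : Set X} : C ∈ carrier → Cᶜ ∉ carrier
  mem_of_subset {C D : Set X} : C ∈ carrier → D ∈ W.sets → C ⊆ D → D ∈ carrier
  finite_notMem (x : X) : {C ∈ carrier | x ∉ C}.Finite

namespace Orientation

variable {W : TreeSet G X} {o o' : W.Orientation} {C D : Set X}

instance : SetLike W.Orientation (Set X) where
  coe := carrier
  coe_injective := by
    rintro ⟨⟩ ⟨⟩ h
    congr

theorem eq_of_le (h : ∀ C ∈ o, C ∈ o') : o = o' :=
  SetLike.ext fun C ↦ ⟨h C, fun hC ↦ (o.mem_or_compl_mem (o'.subset hC)).resolve_right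
    fun hC' ↦ o'.compl_notMem hC (h _ hC')⟩

theorem compl_mem_of_notMem (hC : C ∈ o) (hC' : C ∉ o') : Cᶜ ∈ o' ∧ Cᶜ ∉ o :=
  ⟨(o'.mem_or_compl_mem (o.subset hC)).resolve_left hC', o.compl_notMem hC⟩

/-- The orientation towards a point. -/
def ofPoint (W : TreeSet G X) (x : X) : W.Orientation where
  carrier := {C ∈ W.sets | x ∈ C}
  subset _ hC := hC.1
  mem_or_compl_mem {C} hC := (em (x ∈ C)).imp (⟨hC, ·⟩) (⟨W.compl_mem hC, ·⟩)
  compl_notMem hC hC' := hC'.2 hC.2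
  mem_of_subset hC hD hCD := ⟨hD, hCD hC.2⟩
  finite_notMem y := (W.finite_separating x y).subset fun _ hC ↦ ⟨hC.1.1, hC.1.2, hC.2⟩

theorem eq_of_minimal (hC : Minimal (· ∈ o) C) (hC' : Minimal (· ∈ o') C) : o = o' := by
  refine eq_of_le fun D hD ↦ by_contra fun hD' ↦ ?_
  obtain ⟨hDc, hDo⟩ := compl_mem_of_notMem hD hD'
  rcases W.nested (o.subset hC.prop) (o.subset hD) with h | h | h | h
  · exact hD' (o'.mem_of_subset hC'.prop (o.subset hD) h)
  · exact hDo (o.mem_of_subset hC.prop (o'.subset hDc) h)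
  · exact hDo (hC'.eq_of_subset hDc (compl_subset_comm.1 h) ▸ hC.prop)
  · exact hD' (hC.eq_of_subset hD (compl_subset_compl.1 h) ▸ hC'.prop)

theorem exists_minimal_notMem (hne : o ≠ o') : ∃ C, Minimal (· ∈ o) C ∧ C ∉ o' := by
  obtain ⟨C, hC, hC'⟩ : ∃ C ∈ o, C ∉ o' := by
    by_contra! h
    exact hne (eq_of_le h)
  obtain ⟨x, hx⟩ := W.nonempty (W.compl_mem (o.subset hC))
  have hfin : {D | D ∈ o ∧ D ⊆ C}.Finite :=
    (o.finite_notMem x).subset fun D hD ↦ ⟨hD.1, fun hxD ↦ hx (hD.2 hxD)⟩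
  obtain ⟨D, hDC, hD⟩ := hfin.exists_le_minimal ⟨hC, subset_rfl⟩
  refine ⟨D, ⟨hD.prop.1, fun E hE hED ↦ hD.le_of_le ⟨hE, hED.trans hDC⟩ hED⟩, fun hD' ↦ ?_⟩
  exact hC' (o'.mem_of_subset hD' (o.subset hC) hDC)

theorem finite_sdiff (o o' : W.Orientation) : ((o : Set (Set X)) \ o').Finite := by
  obtain h | ⟨C, hC, -⟩ := ((o : Set (Set X)) \ o').eq_empty_or_nonempty
  · exact h ▸ finite_empty
  obtain ⟨x, -⟩ := W.nonempty (o.subset hC)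
  refine ((o.finite_notMem x).union ((o'.finite_notMem x).image compl)).subset fun D hD ↦ ?_
  by_cases hx : x ∈ D
  · exact Or.inr ⟨Dᶜ, ⟨(compl_mem_of_notMem hD.1 hD.2).1, not_not.2 hx⟩, _root_.compl_compl D⟩
  · exact Or.inl ⟨hD.1, hx⟩

/-- The orientation obtained by reversing a minimal element. -/
def flip (o : W.Orientation) (hC : Minimal (· ∈ o) C) : W.Orientation where
  carrier := insert Cᶜ (o \ {C})
  subset := insert_subset (W.compl_mem (o.subset hC.prop)) (sdiff_subset.trans o.subset)
  mem_or_compl_mem {D} hD := by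
    by_cases h : D = C
    · exact Or.inr (Or.inl (congrArg compl h))
    by_cases h' : D = Cᶜ
    · exact Or.inl (Or.inl h')
    exact (o.mem_or_compl_mem hD).imp (fun hDo ↦ Or.inr ⟨hDo, h⟩)
      fun hDo ↦ Or.inr ⟨hDo, fun hDC ↦ h' (compl_eq_comm.1 hDC).symm⟩
  compl_notMem {D} := by
    have hne : C ≠ Cᶜ := fun h ↦ o.compl_notMem hC.prop (h ▸ hC.prop)
    rintro (rfl | ⟨hD, hDC⟩) (h | ⟨h, h'⟩)
    · exact hne ((_root_.compl_compl C).symm.trans h)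
    · exact h' (_root_.compl_compl C)
    · exact hDC (compl_injective h)
    · exact o.compl_notMem hD h
  mem_of_subset {D E} := by
    rintro (rfl | ⟨hD, hDC⟩) hE hDE
    · refine or_iff_not_imp_left.2 fun hne ↦ ⟨?_, ?_⟩
      · refine (o.mem_or_compl_mem hE).resolve_right fun h ↦ hne ?_
        rw [← hC.eq_of_subset h (compl_subset_comm.1 hDE), _root_.compl_compl]
      · rintro rfl
        obtain ⟨x, hx⟩ := W.nonempty (W.compl_mem hE)
        exact hx (hDE hx)
    · refine Or.inr ⟨o.mem_of_subset hD hE hDE, ?_⟩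
      rintro rfl
      exact hDC (hC.eq_of_subset hD hDE)
  finite_notMem x := ((o.finite_notMem x).insert Cᶜ).subset fun _ ⟨hD, hx⟩ ↦
    hD.imp id fun hD ↦ ⟨hD.1, hx⟩

theorem flip_sdiff (hC : Minimal (· ∈ o) C) (hC' : C ∉ o') :
    (o.flip hC : Set (Set X)) \ o' = ((o : Set (Set X)) \ o') \ {C} := by
  ext D
  refine ⟨?_, fun ⟨⟨hD, hD'⟩, hDC⟩ ↦ ⟨Or.inr ⟨hD, hDC⟩, hD'⟩⟩
  rintro ⟨rfl | ⟨hD, hDC⟩, hD'⟩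
  · exact absurd (compl_mem_of_notMem hC.prop hC').1 hD'
  · exact ⟨⟨hD, hD'⟩, hDC⟩

end Orientation

/-- The tree dual to `W`: orientations are adjacent if they differ in a single pair `{C, Cᶜ}`. -/
def graph (W : TreeSet G X) : SimpleGraph W.Orientation where
  Adj o o' := ∃ C, (o : Set (Set X)) \ o' = {C}
  symm := ⟨by
    rintro o o' ⟨C, hC⟩
    refine ⟨Cᶜ, Set.ext fun D ↦ ?_⟩
    rw [mem_singleton_iff, eq_compl_comm, eq_comm, ← mem_singleton_iff, ← hC]
    refine ⟨fun hD ↦ Orientation.compl_mem_of_notMem hD.1 hD.2, fun hD ↦ ?_⟩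
    exact _root_.compl_compl D ▸ Orientation.compl_mem_of_notMem hD.1 hD.2⟩
  loopless := ⟨fun o ⟨C, hC⟩ ↦ by simp at hC⟩

variable {W : TreeSet G X} {o o' : W.Orientation} {C : Set X}

theorem adj_flip (hC : Minimal (· ∈ o) C) : W.graph.Adj o (o.flip hC) := by
  refine ⟨C, Set.ext fun D ↦ ⟨fun ⟨hD, hD'⟩ ↦ by_contra fun h ↦ hD' (Or.inr ⟨hD, h⟩), ?_⟩⟩
  rintro rfl
  refine ⟨hC.prop, ?_⟩
  rintro (h | h)
  exacts [o.compl_notMem hC.prop (h ▸ hC.prop), h.2 rfl]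

theorem minimal_of_sdiff_eq (h : (o : Set (Set X)) \ o' = {C}) : Minimal (· ∈ o) C := by
  have hC : C ∈ (o : Set (Set X)) \ o' := h ▸ mem_singleton C
  refine ⟨hC.1, fun D hD hDC ↦ ?_⟩
  have hD' : D ∈ (o : Set (Set X)) \ o' :=
    ⟨hD, fun hD' ↦ hC.2 (o'.mem_of_subset hD' (o.subset hC.1) hDC)⟩
  rw [h] at hD'
  exact hD'.ge

theorem eq_and_eq_of_sdiff_eq {p p' : W.Orientation} (h : (o : Set (Set X)) \ o' = {C})
    (hp : (p : Set (Set X)) \ p' = {C}) : p = o ∧ p' = o' := by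
  have heq : p = o := Orientation.eq_of_minimal (minimal_of_sdiff_eq hp) (minimal_of_sdiff_eq h)
  subst heq
  have hflip : ∀ q : W.Orientation, (p : Set (Set X)) \ q = {C} →
      p.flip (minimal_of_sdiff_eq h) = q := by
    intro q hq
    have hCq : C ∉ q := (hq.ge (mem_singleton C)).2
    refine Orientation.eq_of_le (sdiff_eq_empty.1 ?_)
    rw [Orientation.flip_sdiff _ hCq, hq, sdiff_self]
  exact ⟨rfl, (hflip p' hp).symm.trans (hflip o' h)⟩

theorem connected_graph [Nonempty X] : W.graph.Connected := by
  have hreach : ∀ n, ∀ o o' : W.Orientation, ((o : Set (Set X)) \ o').ncard = n →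
      W.graph.Reachable o o' := by
    intro n
    induction n with
    | zero =>
      intro o o' hn
      rw [ncard_eq_zero (o.finite_sdiff o'), sdiff_eq_empty] at hn
      rw [Orientation.eq_of_le hn]
    | succ n ih =>
      intro o o' hn
      have hne : o ≠ o' := by
        rintro rfl
        simp at hn
      obtain ⟨C, hC, hC'⟩ := Orientation.exists_minimal_notMem hne
      have hmem : C ∈ (o : Set (Set X)) \ o' := ⟨hC.prop, hC'⟩
      refine (adj_flip hC).reachable.trans (ih _ _ ?_)
      rw [Orientation.flip_sdiff hC hC', ncard_sdiff_singleton_of_mem hmem, hn,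
        Nat.add_sub_cancel]
  have : Nonempty W.Orientation := ‹Nonempty X›.map (Orientation.ofPoint W)
  exact ⟨fun o p ↦ hreach _ o p rfl⟩

/- Removing the edge dual to `{C, Cᶜ}` disconnects the orientations containing `C` from those
containing `Cᶜ`. -/
theorem isTree_graph [Nonempty X] : W.graph.IsTree := by
  refine ⟨connected_graph, SimpleGraph.isAcyclic_iff_forall_adj_isBridge.2 fun o o' ⟨C, hC⟩ ↦ ?_⟩
  have hstep : ∀ p p', (W.graph.deleteEdges {s(o, o')}).Adj p p' → C ∈ p → C ∈ p' := by
    rintro p p' hpp hp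
    obtain ⟨hadj, hne⟩ := SimpleGraph.deleteEdges_adj.1 hpp
    obtain ⟨D, hD⟩ := hadj
    by_contra hp'
    obtain rfl : C = D := hD.le ⟨hp, hp'⟩
    obtain ⟨rfl, rfl⟩ := eq_and_eq_of_sdiff_eq hC hD
    exact hne rfl
  have hreach : ∀ p p', (W.graph.deleteEdges {s(o, o')}).Reachable p p' → C ∈ p → C ∈ p' := by
    rintro p p' ⟨q⟩
    induction q with
    | nil => exact id
    | cons h _ ih => exact fun hp ↦ ih (hstep _ _ h hp)
  rw [SimpleGraph.isBridge_iff]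
  have hCo : C ∈ (o : Set (Set X)) \ o' := hC.ge (mem_singleton C)
  exact fun h ↦ hCo.2 (hreach _ _ h hCo.1)

instance : MulAction G W.Orientation where
  smul g o :=
    { carrier := {C | g⁻¹ • C ∈ o}
      subset := fun C hC ↦ smul_inv_smul g C ▸ W.smul_mem g (o.subset hC)
      mem_or_compl_mem := fun {C} hC ↦ by
        rw [mem_ofPred_eq, mem_ofPred_eq, smul_set_compl]
        exact o.mem_or_compl_mem (W.smul_mem g⁻¹ hC)
      compl_notMem := fun {C} hC ↦ by
        rw [mem_ofPred_eq, smul_set_compl]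
        exact o.compl_notMem hC
      mem_of_subset := fun hC hD hCD ↦
        o.mem_of_subset hC (W.smul_mem g⁻¹ hD) (smul_set_mono hCD)
      finite_notMem := fun x ↦ ((o.finite_notMem (g⁻¹ • x)).image (g • ·)).subset
        fun C ⟨hC, hx⟩ ↦ ⟨g⁻¹ • C, ⟨hC, by rwa [smul_mem_smul_set_iff]⟩, smul_inv_smul g C⟩ }
  one_smul o := SetLike.ext fun C ↦ show (1 : G)⁻¹ • C ∈ o ↔ C ∈ o by rw [inv_one, one_smul]
  mul_smul g h o := SetLike.ext fun C ↦ show (g * h)⁻¹ • C ∈ o ↔ h⁻¹ • g⁻¹ • C ∈ o by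
    rw [mul_inv_rev, mul_smul]

theorem mem_smul_iff {g : G} : C ∈ g • o ↔ g⁻¹ • C ∈ o := Iff.rfl

instance : IsGraphAction G W.graph where
  adj_smul g o o' := fun ⟨C, hC⟩ ↦ by
    refine ⟨g • C, Set.ext fun D ↦ ?_⟩
    rw [mem_singleton_iff, ← inv_smul_eq_iff, ← mem_singleton_iff, ← hC]
    rfl

theorem minimal_smul (g : G) (hC : Minimal (· ∈ o) C) : Minimal (· ∈ g • o) (g • C) := by
  refine ⟨show g • C ∈ g • o by rw [mem_smul_iff, inv_smul_smul]; exact hC.prop, ?_⟩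
  intro D hD hDC
  rw [smul_set_subset_iff_subset_inv_smul_set]
  exact hC.le_of_le hD (smul_set_subset_iff_subset_inv_smul_set.2 (by rwa [inv_inv]))

theorem finite_orbits_orientation {W₀ : Set (Set X)} (hfin : W₀.Finite)
    (hW₀ : ∀ C ∈ W.sets, ∃ g : G, g • C ∈ W₀) :
    Finite (MulAction.orbitRel.Quotient G W.Orientation) := by
  obtain hsub | hnt := subsingleton_or_nontrivial W.Orientation
  · exact Quotient.finite _
  have hmin : ∀ o : W.Orientation, ∃ C, Minimal (· ∈ o) C := by
    intro o
    obtain ⟨o', ho'⟩ := exists_ne o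
    exact (Orientation.exists_minimal_notMem ho'.symm).imp fun _ ↦ And.left
  choose m hm using hmin
  choose t ht using fun o ↦ hW₀ (m o) (o.subset (hm o).prop)
  have := hfin.to_subtype
  refine Finite.of_injective
    (fun q : MulAction.orbitRel.Quotient G W.Orientation ↦ (⟨t q.out • m q.out, ht _⟩ : W₀))
    fun q q' h ↦ ?_
  have heq : t q.out • m q.out = t q'.out • m q'.out := congrArg Subtype.val h
  have hsmul : t q.out • q.out = t q'.out • q'.out :=
    Orientation.eq_of_minimal (minimal_smul _ (hm _)) (heq ▸ minimal_smul _ (hm _))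
  rw [← q.out_eq, ← q'.out_eq]
  refine Quotient.sound ⟨(t q.out)⁻¹ * t q'.out, ?_⟩
  change ((t q.out)⁻¹ * t q'.out) • q'.out = q.out
  rw [mul_smul, ← hsmul, inv_smul_smul]

/-- The powers of `h`, applied to some point, run from the complement of `C` into `C`. -/
def IsAxisOf (C : Set X) (h : G) : Prop :=
  ∃ x : X, (∀ᶠ n : ℕ in atTop, h ^ n • x ∈ C) ∧ ∀ᶠ n : ℕ in atTop, h⁻¹ ^ n • x ∉ C

theorem IsAxisOf.compl_inv {h : G} (hC : IsAxisOf C h) : IsAxisOf Cᶜ h⁻¹ := by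
  obtain ⟨x, h₁, h₂⟩ := hC
  exact ⟨x, h₂, by simpa using h₁⟩

theorem IsAxisOf.pow_smul_ne {h : G} (hC : IsAxisOf C h) {d : ℕ} (hd : 0 < d) : h ^ d • C ≠ C := by
  obtain ⟨x, h₁, h₂⟩ := hC
  intro heq
  have hmem : h ^ d ∈ MulAction.stabilizer G C := heq
  have htop : Tendsto (fun n : ℕ ↦ d * n) atTop atTop := tendsto_id.const_mul_atTop' hd
  obtain ⟨n, hn₁, hn₂⟩ := ((htop.eventually h₁).and (htop.eventually h₂)).exists
  have hiff : ∀ g ∈ MulAction.stabilizer G C, g • x ∈ C ↔ x ∈ C := fun g hg ↦ by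
    conv_lhs => rw [← MulAction.mem_stabilizer_iff.1 hg, smul_mem_smul_set_iff]
  rw [pow_mul, hiff _ (pow_mem hmem n)] at hn₁
  rw [pow_mul, inv_pow, hiff _ (pow_mem (inv_mem hmem) n)] at hn₂
  exact hn₂ hn₁

/- If `h` fixed `o` and `C ∈ o`, then the infinitely many sets `h ^ n • C` would all lie in `o`, but
almost all of them avoid a given point. -/
theorem smul_ne_of_isAxisOf {h : G} (hCW : C ∈ W.sets) (hC : IsAxisOf C h) (o : W.Orientation) :
    h • o ≠ o := by
  intro ho
  wlog hCo : C ∈ o generalizing C h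
  · exact this (W.compl_mem hCW) hC.compl_inv (by rw [inv_smul_eq_iff, ho])
      ((o.mem_or_compl_mem hCW).resolve_left hCo)
  have hpow : ∀ n : ℕ, h ^ n • C ∈ o := by
    intro n
    have hstab : h ^ n • o = o := pow_mem (MulAction.mem_stabilizer_iff.2 ho : h ∈ _) n
    rwa [← hstab, mem_smul_iff, inv_smul_smul]
  have hinj : Function.Injective fun n : ℕ ↦ h ^ n • C := by
    refine .of_lt_imp_ne fun m n hmn heq ↦ hC.pow_smul_ne (Nat.sub_pos_of_lt hmn) ?_
    rw [← Nat.add_sub_cancel' hmn.le, pow_add, mul_smul] at heq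
    exact (smul_left_cancel _ heq).symm
  obtain ⟨x, -, hx⟩ := hC
  have hfin : {n : ℕ | h ^ n • C ∈ {D ∈ o.carrier | x ∉ D}}.Finite :=
    (o.finite_notMem x).preimage hinj.injOn
  have hfreq : ∃ᶠ n : ℕ in atTop, h ^ n • C ∈ {D ∈ o.carrier | x ∉ D} := by
    refine (hx.mono fun n hn ↦ ⟨hpow n, ?_⟩).frequently
    rwa [mem_smul_set_iff_inv_smul_mem, ← inv_pow]
  exact Nat.frequently_atTop_iff_infinite.1 hfreq hfin

end TreeSet

theorem finite_of_disjoint_of_finiteIndex {G : Type*} [Group G] {H K : Subgroup G} [K.FiniteIndex]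
    (h : Disjoint H K) : (H : Set G).Finite := by
  have hbot : K.subgroupOf H = ⊥ := Subgroup.subgroupOf_eq_bot.2 h.symm
  have : (⊥ : Subgroup H).FiniteIndex := hbot ▸ inferInstance
  have : Finite H := Nat.finite_of_card_ne_zero
    (Subgroup.index_bot (G := H) ▸ Subgroup.FiniteIndex.index_ne_zero)
  exact Set.toFinite _

theorem StallingsTree.nonempty_of_treeSet {G : Type u} [Group G] [Group.FG G] {X : Type v}
    [MulAction G X] [Nonempty X] (W : TreeSet G X) {W₀ : Set (Set X)} (hfin : W₀.Finite)
    (hW₀ : ∀ C ∈ W.sets, ∃ g : G, g • C ∈ W₀) {K : Subgroup G} [K.FiniteIndex]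
    (hK : ∀ k ∈ K, k ≠ 1 → ∃ C ∈ W.sets, TreeSet.IsAxisOf C k) :
    Nonempty (StallingsTree.{u, v} G) := by
  have := W.finite_orbits_orientation hfin hW₀
  refine ⟨.ofTree (Γ := W.graph) W.isTree_graph fun o ↦
    finite_of_disjoint_of_finiteIndex (K := K) (Subgroup.disjoint_def.2 fun {k} hko hk ↦ ?_)⟩
  by_contra hne
  obtain ⟨C, hC, haxis⟩ := hK k hk hne
  exact TreeSet.smul_ne_of_isAxisOf hC haxis o hko

end TreeSets

section Boundary

open Set

variable {X : Type v} {Γ : SimpleGraph X} {C D : Set X}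

/-- The edges leaving `C`, oriented away from `C`. -/
def boundary (Γ : SimpleGraph X) (C : Set X) : Set (X × X) :=
  {e | e.1 ∈ C ∧ e.2 ∉ C ∧ Γ.Adj e.1 e.2}

theorem boundary_compl (C : Set X) : boundary Γ Cᶜ = Prod.swap '' boundary Γ C := by
  ext ⟨x, y⟩
  simp only [boundary, mem_ofPred_eq, mem_compl_iff, not_not, image_swap_eq_preimage_swap,
    mem_preimage, Prod.fst_swap, Prod.snd_swap, Γ.adj_comm y x]
  tauto

theorem finite_boundary_compl (hC : (boundary Γ C).Finite) : (boundary Γ Cᶜ).Finite :=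
  boundary_compl C ▸ hC.image _

theorem encard_boundary_compl (C : Set X) : (boundary Γ Cᶜ).encard = (boundary Γ C).encard := by
  rw [boundary_compl, Prod.swap_injective.encard_image]

theorem boundary_inter_union_boundary_union_subset (C D : Set X) :
    boundary Γ (C ∩ D) ∪ boundary Γ (C ∪ D) ⊆ boundary Γ C ∪ boundary Γ D := by
  simp only [boundary, subset_def, mem_union, mem_inter_iff, mem_ofPred_eq]
  tauto

theorem boundary_inter_inter_boundary_union_subset (C D : Set X) :
    boundary Γ (C ∩ D) ∩ boundary Γ (C ∪ D) ⊆ boundary Γ C ∩ boundary Γ D := by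
  simp only [boundary, subset_def, mem_union, mem_inter_iff, mem_ofPred_eq]
  tauto

theorem finite_boundary_inter (hC : (boundary Γ C).Finite) (hD : (boundary Γ D).Finite) :
    (boundary Γ (C ∩ D)).Finite :=
  (hC.union hD).subset
    (subset_union_left.trans (boundary_inter_union_boundary_union_subset C D))

theorem finite_boundary_union (hC : (boundary Γ C).Finite) (hD : (boundary Γ D).Finite) :
    (boundary Γ (C ∪ D)).Finite :=
  (hC.union hD).subset
    (subset_union_right.trans (boundary_inter_union_boundary_union_subset C D))

theorem boundary_union_of_forall_not_adj (hCD : ∀ x ∈ C, ∀ y ∈ D, ¬ Γ.Adj x y) :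
    boundary Γ (C ∪ D) = boundary Γ C ∪ boundary Γ D := by
  ext ⟨x, y⟩
  have hyx : y ∈ C → x ∈ D → ¬ Γ.Adj x y := fun hy hx h ↦ hCD y hy x hx h.symm
  simp only [boundary, mem_union, mem_ofPred_eq]
  grind

theorem nonempty_boundary_of_reachable {x y : X} (h : Γ.Reachable x y) (hx : x ∈ C)
    (hy : y ∉ C) : (boundary Γ C).Nonempty := by
  obtain ⟨p⟩ := h
  obtain ⟨d, -, hd⟩ := p.exists_boundary_dart C hx hy
  exact ⟨d.toProd, hd.1, hd.2, d.adj⟩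

theorem exists_mem_boundary_of_preconnected_induce (hD : (Γ.induce D).Preconnected)
    (h : (D ∩ C).Nonempty) (h' : (D ∩ Cᶜ).Nonempty) : ∃ e ∈ boundary Γ C, e.1 ∈ D := by
  obtain ⟨x, hxD, hxC⟩ := h
  obtain ⟨y, hyD, hyC⟩ := h'
  obtain ⟨e, he, he', hadj⟩ := nonempty_boundary_of_reachable
    (C := {z : D | (z : X) ∈ C}) (hD ⟨x, hxD⟩ ⟨y, hyD⟩) hxC hyC
  exact ⟨(e.1, e.2), ⟨he, he', hadj⟩, e.1.2⟩

section SMul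

open scoped Pointwise

variable {G : Type*} [Group G] [MulAction G X] [IsGraphAction G Γ]

theorem boundary_smul (g : G) (C : Set X) : boundary Γ (g • C) = g • boundary Γ C := by
  ext ⟨x, y⟩
  simp only [boundary, mem_smul_set_iff_inv_smul_mem, mem_ofPred_eq, Prod.smul_fst, Prod.smul_snd,
    adj_smul_iff]

theorem preconnected_induce_smul (g : G) (hC : (Γ.induce C).Preconnected) :
    (Γ.induce (g • C)).Preconnected := by
  let f : Γ.induce C →g Γ.induce (g • C) :=
    ⟨fun x ↦ ⟨g • x.1, smul_mem_smul_set x.2⟩, fun h ↦ IsGraphAction.adj_smul g h⟩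
  refine hC.map f ?_
  rintro ⟨_, x, hx, rfl⟩
  exact ⟨⟨x, hx⟩, rfl⟩

end SMul

end Boundary

section TightCuts

open Set

variable {X : Type v} {Γ : SimpleGraph X} {C D F : Set X} {k : ℕ}

/-- Sets with at most `k` boundary edges which are connected and have connected complement. -/
def tightCuts (Γ : SimpleGraph X) (k : ℕ) : Set (Set X) :=
  {C | (Γ.induce C).Preconnected ∧ (Γ.induce Cᶜ).Preconnected ∧ (boundary Γ C).encard ≤ k}

theorem compl_mem_tightCuts (hC : C ∈ tightCuts Γ k) : Cᶜ ∈ tightCuts Γ k :=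
  ⟨hC.2.1, (_root_.compl_compl C).symm ▸ hC.1, (encard_boundary_compl C).trans_le hC.2.2⟩

theorem finite_boundary_of_mem_tightCuts (hC : C ∈ tightCuts Γ k) : (boundary Γ C).Finite :=
  finite_of_encard_le_coe hC.2.2

theorem induce_deleteEdges_of_notMem {x y : X} (h : x ∈ C → y ∉ C) :
    (Γ.deleteEdges {s(x, y)}).induce C = Γ.induce C := by
  ext ⟨a, ha⟩ ⟨b, hb⟩
  simp only [SimpleGraph.induce_adj, SimpleGraph.deleteEdges_adj, mem_singleton_iff,
    and_iff_left_iff_imp, Sym2.eq_iff]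
  rintro - (⟨rfl, rfl⟩ | ⟨rfl, rfl⟩)
  exacts [h ha hb, h hb ha]

theorem boundary_deleteEdges {x y : X} (hy : y ∉ C) :
    boundary (Γ.deleteEdges {s(x, y)}) C = boundary Γ C \ {(x, y)} := by
  ext ⟨a, b⟩
  simp only [boundary, mem_ofPred_eq, SimpleGraph.deleteEdges_adj, mem_singleton_iff, mem_sdiff,
    Sym2.eq_iff, Prod.mk.injEq]
  grind

theorem mem_tightCuts_deleteEdges {x y : X} (hC : C ∈ tightCuts Γ (k + 1)) (hx : x ∈ C)
    (hy : y ∉ C) (hxy : Γ.Adj x y) : C ∈ tightCuts (Γ.deleteEdges {s(x, y)}) k := by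
  refine ⟨?_, ?_, ?_⟩
  · rw [induce_deleteEdges_of_notMem fun _ ↦ hy]
    exact hC.1
  · rw [induce_deleteEdges_of_notMem fun h ↦ absurd hx h]
    exact hC.2.1
  · have hmem : (x, y) ∈ boundary Γ C := ⟨hx, hy, hxy⟩
    have hle := hC.2.2
    rw [← encard_sdiff_singleton_add_one hmem, ← boundary_deleteEdges hy, Nat.cast_add_one] at hle
    exact (ENat.add_le_add_iff_right ENat.one_ne_top).1 hle

theorem eq_setOf_reachable_of_not_reachable {x y : X} (hC : (Γ.induce C).Preconnected)
    (hC' : (Γ.induce Cᶜ).Preconnected) (hx : x ∈ C) (hy : y ∉ C) (hxy : ¬ Γ.Reachable x y) :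
    C = {z | Γ.Reachable x z} := by
  ext z
  refine ⟨fun hz ↦ (hC ⟨x, hx⟩ ⟨z, hz⟩).map (SimpleGraph.Embedding.induce C).toHom,
    fun hz ↦ by_contra fun hzC ↦ hxy (hz.trans ?_)⟩
  exact (hC' ⟨z, hzC⟩ ⟨y, hy⟩).map (SimpleGraph.Embedding.induce Cᶜ).toHom

/- Deleting an edge of the boundary lowers `k`; once no path from `x` to `y` is left, the cut is
determined as the component of `x`. -/
theorem finite_tightCuts_separating {x y : X} (h : Γ.Reachable x y) :
    {C ∈ tightCuts Γ k | x ∈ C ∧ y ∉ C}.Finite := by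
  induction k generalizing Γ x y with
  | zero =>
    refine finite_empty.subset fun C ⟨hC, hx, hy⟩ ↦ ?_
    have hempty : boundary Γ C = ∅ := by simpa using hC.2.2
    exact (nonempty_boundary_of_reachable h hx hy).ne_empty hempty
  | succ k ih =>
    suffices hadj : ∀ x y, Γ.Adj x y → {C ∈ tightCuts Γ (k + 1) | x ∈ C ∧ y ∉ C}.Finite by
      obtain ⟨p⟩ := h
      refine (p.darts.finite_toSet.biUnion fun d _ ↦ hadj d.fst d.snd d.adj).subset ?_
      rintro C ⟨hC, hx, hy⟩
      obtain ⟨d, hd, hdC⟩ := p.exists_boundary_dart C hx hy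
      exact mem_biUnion hd ⟨hC, hdC⟩
    intro x y hxy
    by_cases hr : (Γ.deleteEdges {s(x, y)}).Reachable x y
    · exact (ih hr).subset fun C ⟨hC, hx, hy⟩ ↦ ⟨mem_tightCuts_deleteEdges hC hx hy hxy, hx, hy⟩
    · refine (finite_singleton {z | (Γ.deleteEdges {s(x, y)}).Reachable x z}).subset
        fun C ⟨hC, hx, hy⟩ ↦ ?_
      have hC' := mem_tightCuts_deleteEdges hC hx hy hxy
      exact eq_setOf_reachable_of_not_reachable hC'.1 hC'.2.1 hx hy hr

/-- Both `F` and its complement meet `A`. -/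
def Splits (F A : Set X) : Prop := (F ∩ A).Nonempty ∧ (Fᶜ ∩ A).Nonempty

theorem Splits.mono {A B : Set X} (h : Splits F A) (hAB : A ⊆ B) : Splits F B :=
  ⟨h.1.mono (inter_subset_inter_right F hAB), h.2.mono (inter_subset_inter_right Fᶜ hAB)⟩

theorem Splits.of_union {A B : Set X} (h : Splits F (A ∪ B)) (hAB : (A ∩ B).Nonempty) :
    Splits F A ∨ Splits F B := by
  simp only [Splits, Set.Nonempty, mem_inter_iff, mem_union, mem_compl_iff] at *
  grind

/-- All four intersections of `C` or `Cᶜ` with `D` or `Dᶜ` are nonempty. -/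
def Crosses (C D : Set X) : Prop := Splits C D ∧ Splits C Dᶜ

theorem crosses_compl_right : Crosses C Dᶜ ↔ Crosses C D := by
  rw [Crosses, Crosses, _root_.compl_compl, and_comm]

theorem nested_of_not_crosses (h : ¬ Crosses C D) : C ⊆ D ∨ C ⊆ Dᶜ ∨ Cᶜ ⊆ D ∨ Cᶜ ⊆ Dᶜ := by
  simp only [Crosses, Splits, not_and_or, not_nonempty_iff_eq_empty, ← disjoint_iff_inter_eq_empty,
    ← subset_compl_iff_disjoint_right, _root_.compl_compl] at h
  tauto

theorem Crosses.of_inter_of_union (h : Crosses F (C ∩ D)) (h' : Crosses F (C ∪ D)) :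
    Crosses F C ∧ Crosses F D :=
  ⟨⟨h.1.mono inter_subset_left, h'.2.mono (compl_subset_compl.2 subset_union_left)⟩,
    h.1.mono inter_subset_right, h'.2.mono (compl_subset_compl.2 subset_union_right)⟩

theorem Crosses.of_inter (hCD : Crosses C D) (h : Crosses F (C ∩ D)) :
    Crosses F C ∨ Crosses F D := by
  rw [Crosses, compl_inter] at h
  exact (h.2.of_union hCD.2.2).imp (⟨h.1.mono inter_subset_left, ·⟩)
    (⟨h.1.mono inter_subset_right, ·⟩)

theorem Crosses.of_union (hCD : Crosses C D) (h : Crosses F (C ∪ D)) :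
    Crosses F C ∨ Crosses F D :=
  (h.1.of_union hCD.1.1).imp (⟨·, h.2.mono (compl_subset_compl.2 subset_union_left)⟩)
    (⟨·, h.2.mono (compl_subset_compl.2 subset_union_right)⟩)

/-- The tight cuts crossing `C`. -/
def crossings (Γ : SimpleGraph X) (k : ℕ) (C : Set X) : Set (Set X) :=
  {D ∈ tightCuts Γ k | Crosses D C}

theorem crossings_compl (C : Set X) : crossings Γ k Cᶜ = crossings Γ k C := by
  simp only [crossings, crosses_compl_right]

theorem finite_crossings (hΓ : Γ.Connected) (hC : (boundary Γ C).Finite) :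
    (crossings Γ k C).Finite := by
  refine (hC.biUnion fun e _ ↦ hC.biUnion fun e' _ ↦
    finite_tightCuts_separating (k := k) (hΓ.preconnected e.1 e'.1)).subset ?_
  rintro D ⟨hD, hDC⟩
  obtain ⟨e, he, heD⟩ := exists_mem_boundary_of_preconnected_induce hD.1 hDC.1.1 hDC.2.1
  obtain ⟨e', he', heD'⟩ := exists_mem_boundary_of_preconnected_induce hD.2.1 hDC.1.2 hDC.2.2
  exact mem_biUnion he (mem_biUnion he' ⟨hD, heD, heD'⟩)

section SMul

open scoped Pointwise

variable {G : Type*} [Group G] [MulAction G X] [IsGraphAction G Γ]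

theorem smul_mem_tightCuts (g : G) (hC : C ∈ tightCuts Γ k) : g • C ∈ tightCuts Γ k :=
  ⟨preconnected_induce_smul g hC.1,
    smul_set_compl (a := g) (s := C) ▸ preconnected_induce_smul g hC.2.1,
    by rw [boundary_smul, encard_smul_set]; exact hC.2.2⟩

theorem Crosses.smul (g : G) (h : Crosses C D) : Crosses (g • C) (g • D) := by
  simpa only [Crosses, Splits, ← smul_set_compl, ← smul_set_inter, smul_set_nonempty] using h

theorem crossings_smul (g : G) (C : Set X) : crossings Γ k (g • C) = g • crossings Γ k C := by
  have hle : ∀ (g : G) (C : Set X), g • crossings Γ k C ⊆ crossings Γ k (g • C) := by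
    rintro g C _ ⟨D, hD, rfl⟩
    exact ⟨smul_mem_tightCuts g hD.1, hD.2.smul g⟩
  refine (hle g C).antisymm' ?_
  rw [subset_smul_set_iff]
  exact (hle g⁻¹ (g • C)).trans_eq (by rw [inv_smul_smul])

end SMul

end TightCuts

section OptimalCuts

open Set
open scoped Pointwise

variable {X : Type v} {Γ : SimpleGraph X} {k : ℕ} {C D : Set X}

/-- The complexity of a cut in the uncrossing argument: first the number of boundary edges, then
the number of tight cuts crossing it. -/
noncomputable def cutWeight (Γ : SimpleGraph X) (k : ℕ) (C : Set X) : ℕ ×ₗ ℕ :=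
  toLex ((boundary Γ C).ncard, (crossings Γ k C).ncard)

theorem cutWeight_compl (C : Set X) : cutWeight Γ k Cᶜ = cutWeight Γ k C := by
  simp only [cutWeight, crossings_compl, ncard_def, encard_boundary_compl]

variable {G : Type*} [Group G] [MulAction G X] [IsGraphAction G Γ]

theorem cutWeight_smul (g : G) (C : Set X) :
    cutWeight Γ k (g • C) = cutWeight Γ k C := by
  simp only [cutWeight, crossings_smul, boundary_smul, ncard_smul_set]

theorem ncard_add_ncard_le_of_subset {Y : Type*} {A B A' B' : Set Y} (hA : A'.Finite)
    (hB : B'.Finite) (hunion : A ∪ B ⊆ A' ∪ B') (hinter : A ∩ B ⊆ A' ∩ B') :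
    A.ncard + B.ncard ≤ A'.ncard + B'.ncard := by
  have hfin := hA.union hB
  rw [← ncard_union_add_ncard_inter A B (hfin.subset (subset_union_left.trans hunion))
    (hfin.subset (subset_union_right.trans hunion)), ← ncard_union_add_ncard_inter A' B' hA hB]
  exact add_le_add (ncard_le_ncard hunion hfin) (ncard_le_ncard hinter (hA.inter_of_left _))

theorem ncard_add_ncard_lt_of_ssubset {Y : Type*} {A B A' B' : Set Y} (hA : A'.Finite)
    (hB : B'.Finite) (hunion : A ∪ B ⊂ A' ∪ B') (hinter : A ∩ B ⊆ A' ∩ B') :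
    A.ncard + B.ncard < A'.ncard + B'.ncard := by
  have hfin := hA.union hB
  rw [← ncard_union_add_ncard_inter A B (hfin.subset (subset_union_left.trans hunion.subset))
    (hfin.subset (subset_union_right.trans hunion.subset)),
    ← ncard_union_add_ncard_inter A' B' hA hB]
  exact add_lt_add_of_lt_of_le (ncard_lt_ncard hunion hfin)
    (ncard_le_ncard hinter (hA.inter_of_left _))

theorem ncard_crossings_inter_add_union_lt (hΓ : Γ.Connected) (hC : C ∈ tightCuts Γ k)
    (hD : D ∈ tightCuts Γ k) (hCD : Crosses C D) :
    (crossings Γ k (C ∩ D)).ncard + (crossings Γ k (C ∪ D)).ncard <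
      (crossings Γ k C).ncard + (crossings Γ k D).ncard := by
  refine ncard_add_ncard_lt_of_ssubset
    (finite_crossings hΓ (finite_boundary_of_mem_tightCuts hC))
    (finite_crossings hΓ (finite_boundary_of_mem_tightCuts hD))
    ((ssubset_iff_of_subset ?_).2 ⟨C, Or.inr ⟨hC, hCD⟩, ?_⟩) ?_
  · rintro F (⟨hF, h⟩ | ⟨hF, h⟩)
    · exact (hCD.of_inter h).imp (⟨hF, ·⟩) (⟨hF, ·⟩)
    · exact (hCD.of_union h).imp (⟨hF, ·⟩) (⟨hF, ·⟩)
  · rintro (⟨-, h⟩ | ⟨-, h⟩)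
    · obtain ⟨x, hx, hx'⟩ := h.1.2
      exact hx hx'.1
    · obtain ⟨x, hx, hx'⟩ := h.2.1
      exact hx' (Or.inl hx)
  · rintro F ⟨⟨hF, h⟩, -, h'⟩
    exact ⟨⟨hF, (h.of_inter_of_union h').1⟩, hF, (h.of_inter_of_union h').2⟩

theorem cutWeight_inter_add_union_lt (hΓ : Γ.Connected) (hC : C ∈ tightCuts Γ k)
    (hD : D ∈ tightCuts Γ k) (hCD : Crosses C D) :
    cutWeight Γ k (C ∩ D) + cutWeight Γ k (C ∪ D) < cutWeight Γ k C + cutWeight Γ k D := by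
  have hle := ncard_add_ncard_le_of_subset (finite_boundary_of_mem_tightCuts hC)
    (finite_boundary_of_mem_tightCuts hD) (boundary_inter_union_boundary_union_subset C D)
    (boundary_inter_inter_boundary_union_subset C D)
  have hlt := ncard_crossings_inter_add_union_lt hΓ hC hD hCD
  exact Prod.Lex.toLex_lt_toLex.2 (hle.lt_or_eq.imp_right (⟨·, hlt⟩))

/-- A finite-boundary set in `α` but not in `β` of least weight. -/
structure IsOptimalCut (Γ : SimpleGraph X) (k : ℕ) (α β : Ultrafilter X) (C : Set X) : Prop where
  finite_boundary : (boundary Γ C).Finite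
  mem : C ∈ α
  notMem : C ∉ β
  le {D : Set X} : (boundary Γ D).Finite → D ∈ α → D ∉ β → cutWeight Γ k C ≤ cutWeight Γ k D

variable {α β γ δ : Ultrafilter X}

theorem exists_isOptimalCut (hC : (boundary Γ C).Finite) (hα : C ∈ α) (hβ : C ∉ β) :
    ∃ D, IsOptimalCut Γ k α β D := by
  obtain ⟨D, ⟨hD, hDα, hDβ⟩, hmin⟩ := exists_minimalFor_of_wellFoundedLT
    (fun D ↦ (boundary Γ D).Finite ∧ D ∈ α ∧ D ∉ β) (cutWeight Γ k) ⟨C, hC, hα, hβ⟩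
  exact ⟨D, hD, hDα, hDβ, fun hE hEα hEβ ↦ (le_total _ _).elim id (hmin ⟨hE, hEα, hEβ⟩)⟩

namespace IsOptimalCut

theorem compl (h : IsOptimalCut Γ k α β C) : IsOptimalCut Γ k β α Cᶜ where
  finite_boundary := finite_boundary_compl h.finite_boundary
  mem := Ultrafilter.compl_mem_iff_notMem.2 h.notMem
  notMem := Ultrafilter.compl_notMem_iff.2 h.mem
  le {D} hD hβ hα := by
    rw [cutWeight_compl, ← cutWeight_compl D]
    exact h.le (finite_boundary_compl hD) (Ultrafilter.compl_mem_iff_notMem.2 hα)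
      (Ultrafilter.compl_notMem_iff.2 hβ)

theorem ncard_boundary_le (h : IsOptimalCut Γ k α β C) (hD : (boundary Γ D).Finite) (hα : D ∈ α)
    (hβ : D ∉ β) : (boundary Γ C).ncard ≤ (boundary Γ D).ncard :=
  (Prod.Lex.toLex_le_toLex.1 (h.le hD hα hβ)).elim le_of_lt fun h ↦ h.1.le

theorem notMem_of_union {A B : Set X} (hΓ : Γ.Connected) (h : IsOptimalCut Γ k α β (A ∪ B))
    (hAB : Disjoint A B) (hadj : ∀ x ∈ A, ∀ y ∈ B, ¬ Γ.Adj x y) (hA : A.Nonempty)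
    (hB : B.Nonempty) : A ∉ α := by
  intro hα
  obtain ⟨a, ha⟩ := hA
  obtain ⟨b, hb⟩ := hB
  have hunion := boundary_union_of_forall_not_adj hadj
  have hfin := h.finite_boundary
  have hsub : boundary Γ A ⊆ boundary Γ (A ∪ B) := hunion ▸ subset_union_left
  have hle := h.ncard_boundary_le (hfin.subset hsub) hα
    fun hβ ↦ h.notMem (Filter.mem_of_superset hβ subset_union_left)
  obtain ⟨e, he⟩ := nonempty_boundary_of_reachable (hΓ.preconnected b a) hb
    (disjoint_left.1 hAB ha)
  have heA : e ∈ boundary Γ A := by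
    rw [eq_of_subset_of_ncard_le hsub hle hfin, hunion]
    exact Or.inr he
  exact disjoint_left.1 hAB heA.1 he.1

theorem preconnected_induce (hΓ : Γ.Connected) (h : IsOptimalCut Γ k α β C) :
    (Γ.induce C).Preconnected := by
  by_contra hcon
  obtain ⟨u, v, huv⟩ : ∃ u v : C, ¬ (Γ.induce C).Reachable u v := by
    simpa only [SimpleGraph.Preconnected, not_forall] using hcon
  let A : Set X := (↑) '' {z : C | (Γ.induce C).Reachable u z}
  let B : Set X := (↑) '' {z : C | ¬ (Γ.induce C).Reachable u z}
  have hAB : A ∪ B = C := by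
    rw [← image_union, ← Set.compl_ofPred, union_compl_self, image_univ, Subtype.range_coe]
  have hdisj : Disjoint A B :=
    (disjoint_image_iff Subtype.val_injective).2 (disjoint_compl_right (a := {z : C | _}))
  have hadj : ∀ x ∈ A, ∀ y ∈ B, ¬ Γ.Adj x y := by
    rintro _ ⟨x, hx, rfl⟩ _ ⟨y, hy, rfl⟩ hxy
    exact hy (hx.trans (SimpleGraph.Adj.reachable (G := Γ.induce C) hxy))
  have hA : A.Nonempty := ⟨u, u, .refl u, rfl⟩
  have hB : B.Nonempty := ⟨v, v, huv, rfl⟩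
  rcases Ultrafilter.union_mem_iff.1 (hAB.symm ▸ h.mem) with hα | hα
  · exact notMem_of_union hΓ (hAB.symm ▸ h) hdisj hadj hA hB hα
  · have hBA : IsOptimalCut Γ k α β (B ∪ A) := by rwa [union_comm, hAB]
    exact hBA.notMem_of_union hΓ hdisj.symm (fun x hx y hy hxy ↦ hadj y hy x hx hxy.symm) hB hA hα

theorem mem_tightCuts (hΓ : Γ.Connected) (h : IsOptimalCut Γ k α β C)
    (hD : (boundary Γ D).encard ≤ k) (hα : D ∈ α) (hβ : D ∉ β) : C ∈ tightCuts Γ k := by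
  refine ⟨h.preconnected_induce hΓ, h.compl.preconnected_induce hΓ, ?_⟩
  have hDfin := finite_of_encard_le_coe hD
  rw [← hDfin.cast_ncard_eq, Nat.cast_le] at hD
  rw [← h.finite_boundary.cast_ncard_eq, Nat.cast_le]
  exact (h.ncard_boundary_le hDfin hα hβ).trans hD

theorem le_inter (h : IsOptimalCut Γ k α β C) (hD : (boundary Γ D).Finite) (hα : D ∈ α) :
    cutWeight Γ k C ≤ cutWeight Γ k (C ∩ D) :=
  h.le (finite_boundary_inter h.finite_boundary hD) (Filter.inter_mem h.mem hα)
    fun hβ ↦ h.notMem (Filter.mem_of_superset hβ inter_subset_left)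

theorem le_union (h : IsOptimalCut Γ k α β C) (hD : (boundary Γ D).Finite) (hβ : D ∉ β) :
    cutWeight Γ k C ≤ cutWeight Γ k (C ∪ D) :=
  h.le (finite_boundary_union h.finite_boundary hD)
    (Filter.mem_of_superset h.mem subset_union_left)
    fun hCD ↦ (Ultrafilter.union_mem_iff.1 hCD).elim h.notMem hβ

/- Two opposite corners of the four cut out by `C` and `D` separate the given pairs of ultrafilters,
or all four do; in either case they cannot be cheaper than `C` and `D`. -/
theorem not_crosses (hΓ : Γ.Connected) (hC : IsOptimalCut Γ k α β C) (hD : IsOptimalCut Γ k γ δ D)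
    (hCk : C ∈ tightCuts Γ k) (hDk : D ∈ tightCuts Γ k) : ¬ Crosses C D := by
  intro hCD
  have hlt := cutWeight_inter_add_union_lt hΓ hCk hDk hCD
  have hlt' := cutWeight_inter_add_union_lt hΓ hCk (compl_mem_tightCuts hDk)
    (crosses_compl_right.2 hCD)
  have hα := hC.le_inter hD.finite_boundary
  have hβ := hC.le_union hD.finite_boundary
  have hα' := hC.le_inter hD.compl.finite_boundary
  have hβ' := hC.le_union hD.compl.finite_boundary
  have hγ := hD.le_inter hC.finite_boundary
  have hδ := hD.le_union hC.finite_boundary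
  have hδ' := hD.compl.le_inter hC.finite_boundary
  have hγ' := hD.compl.le_union hC.finite_boundary
  simp only [cutWeight_compl, Ultrafilter.compl_mem_iff_notMem, not_not, inter_comm D, union_comm D,
    inter_comm Dᶜ, union_comm Dᶜ] at hlt' hα' hβ' hγ hδ hδ' hγ'
  generalize cutWeight Γ k (C ∩ D) = a at *
  generalize cutWeight Γ k (C ∪ D) = b at *
  generalize cutWeight Γ k (C ∩ Dᶜ) = c at *
  generalize cutWeight Γ k (C ∪ Dᶜ) = d at *
  generalize cutWeight Γ k C = u at *
  generalize cutWeight Γ k D = v at *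
  grind +splitImp

theorem smul (h : IsOptimalCut Γ k α β C) (g : G) :
    IsOptimalCut Γ k (α.map (g • ·)) (β.map (g • ·)) (g • C) where
  finite_boundary := by
    rw [boundary_smul]
    exact h.finite_boundary.smul_set
  mem := by simpa only [Ultrafilter.mem_map, preimage_smul, inv_smul_smul] using h.mem
  notMem := by simpa only [Ultrafilter.mem_map, preimage_smul, inv_smul_smul] using h.notMem
  le {D} hD hα hβ := by
    simp only [Ultrafilter.mem_map, preimage_smul] at hα hβ
    rw [cutWeight_smul, ← cutWeight_smul g⁻¹ D]
    exact h.le (boundary_smul (Γ := Γ) g⁻¹ D ▸ hD.smul_set) hα hβ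

end IsOptimalCut

/- Optimal cuts do not cross each other, so those for all the given pairs of ultrafilters together
form a tree set. -/
theorem exists_treeSet (hΓ : Γ.Connected) {E : Set (X × X)} (hE : E.Finite)
    (hadj : ∀ x y, Γ.Adj x y → ∃ g : G, (g • x, g • y) ∈ E)
    {P : Ultrafilter X → Ultrafilter X → Prop} (hsymm : ∀ {α β}, P α β → P β α)
    (hsmul : ∀ {α β} (g : G), P α β → P (α.map (g • ·)) (β.map (g • ·)))
    (hk : ∀ {α β}, P α β → ∃ C, (boundary Γ C).encard ≤ k ∧ C ∈ α ∧ C ∉ β) :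
    ∃ (W : TreeSet G X) (W₀ : Set (Set X)), W₀.Finite ∧ (∀ C ∈ W.sets, ∃ g : G, g • C ∈ W₀) ∧
      ∀ α β, P α β → ∃ C ∈ W.sets, (boundary Γ C).Finite ∧ C ∈ α ∧ C ∉ β := by
  have htight : ∀ {α β C}, P α β → IsOptimalCut Γ k α β C → C ∈ tightCuts Γ k := fun hP hC ↦ by
    obtain ⟨D, hD, hα, hβ⟩ := hk hP
    exact hC.mem_tightCuts hΓ hD hα hβ
  let W : TreeSet G X :=
    { sets := {C | ∃ α β, P α β ∧ IsOptimalCut Γ k α β C}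
      smul_mem := by
        rintro g C ⟨α, β, hP, hC⟩
        exact ⟨_, _, hsmul g hP, hC.smul g⟩
      compl_mem := by
        rintro C ⟨α, β, hP, hC⟩
        exact ⟨β, α, hsymm hP, hC.compl⟩
      nonempty := by
        rintro C ⟨α, β, -, hC⟩
        exact Ultrafilter.nonempty_of_mem hC.mem
      nested := by
        rintro C D ⟨α, β, hP, hC⟩ ⟨γ, δ, hP', hD⟩
        exact nested_of_not_crosses (hC.not_crosses hΓ hD (htight hP hC) (htight hP' hD))
      finite_separating := fun x y ↦
        (finite_tightCuts_separating (k := k) (hΓ.preconnected x y)).subset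
          fun C ⟨⟨α, β, hP, hC⟩, hxy⟩ ↦ ⟨htight hP hC, hxy⟩ }
  refine ⟨W, ⋃ e ∈ E, {C ∈ tightCuts Γ k | e.1 ∈ C ∧ e.2 ∉ C}, hE.biUnion fun e _ ↦
    finite_tightCuts_separating (hΓ.preconnected e.1 e.2), ?_, fun α β hP ↦ ?_⟩
  · rintro C ⟨α, β, hP, hC⟩
    obtain ⟨x, hx⟩ := Ultrafilter.nonempty_of_mem hC.mem
    obtain ⟨y, hy⟩ := Ultrafilter.nonempty_of_mem hC.compl.mem
    obtain ⟨⟨a, b⟩, ha, hb, hab⟩ := nonempty_boundary_of_reachable (hΓ.preconnected x y) hx hy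
    obtain ⟨g, hg⟩ := hadj a b hab
    refine ⟨g, mem_biUnion hg ⟨smul_mem_tightCuts g (htight hP hC), smul_mem_smul_set ha, ?_⟩⟩
    simpa only [smul_mem_smul_set_iff] using hb
  · obtain ⟨D, hD, hα, hβ⟩ := hk hP
    obtain ⟨C, hC⟩ := exists_isOptimalCut (k := k) (finite_of_encard_le_coe hD) hα hβ
    exact ⟨C, ⟨α, β, hP, hC⟩, hC.finite_boundary, hC.mem, hC.notMem⟩

end OptimalCuts

section AlmostInvariant

open Filter Set

variable {G : Type u} [Group G] {Y : Type v} {f : G → Y} {s : Set G}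

/-- A function on a group is almost invariant if every right translation changes only finitely many
of its values. Such a function is constant near each end of the group. -/
def AlmostInvariant (f : G → Y) : Prop :=
  ∀ t : G, ∀ᶠ x in cofinite, f (x * t) = f x

theorem almostInvariant_of_closure_eq_top (hs : Subgroup.closure s = ⊤)
    (h : ∀ t ∈ s, ∀ᶠ x in cofinite, f (x * t) = f x) : AlmostInvariant f := fun t ↦ by
  induction (hs ▸ Subgroup.mem_top t : t ∈ Subgroup.closure s) using Subgroup.closure_induction with
  | mem t ht => exact h t ht
  | one => simp only [mul_one, eventually_true]
  | mul p q _ _ hp hq =>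
    filter_upwards [hp, (mul_left_injective p).tendsto_cofinite.eventually hq] with x hxp hxq
    rw [← mul_assoc, hxq, hxp]
  | inv q _ hq =>
    filter_upwards [(mul_left_injective q⁻¹).tendsto_cofinite.eventually hq] with x hx
    rw [← hx, inv_mul_cancel_right]

theorem AlmostInvariant.eventually_pow_mul (hf : AlmostInvariant f) {h : G}
    (hh : ¬ IsOfFinOrder h) (q : G) : ∀ᶠ n : ℕ in atTop, f (h ^ n * q) = f (h ^ n) := by
  rw [← Nat.cofinite_eq_atTop]
  exact (injective_pow_iff_not_isOfFinOrder.2 hh).tendsto_cofinite.eventually (hf q)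

theorem AlmostInvariant.eventually_pow_mem_or_notMem {C : Set G} (hC : AlmostInvariant (· ∈ C))
    {h : G} (hh : ¬ IsOfFinOrder h) :
    (∀ᶠ n : ℕ in atTop, h ^ n ∈ C) ∨ ∀ᶠ n : ℕ in atTop, h ^ n ∉ C := by
  obtain ⟨N, hN⟩ := eventually_atTop.1 (hC.eventually_pow_mul hh h)
  have hconst : ∀ n ≥ N, (h ^ n ∈ C) = (h ^ N ∈ C) := fun n hn ↦ by
    induction n, hn using Nat.le_induction with
    | base => rfl
    | succ n hn ih => rw [pow_succ, hN n hn, ih]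
  by_cases hmem : h ^ N ∈ C
  · exact .inl (eventually_atTop.2 ⟨N, fun n hn ↦ (hconst n hn).mpr hmem⟩)
  · exact .inr (eventually_atTop.2 ⟨N, fun n hn ↦ (hconst n hn).mp.mt hmem⟩)

theorem AlmostInvariant.comp_equiv_fst {K : Subgroup G} [K.FiniteIndex] {T : Set G}
    (hT : Subgroup.IsComplement (K : Set G) T) {f : K → Y} (hf : AlmostInvariant f) :
    AlmostInvariant fun x ↦ f (hT.equiv x).1 := fun t ↦ by
  have := hT.finite_right.to_subtype
  have hall : ∀ᶠ k in cofinite, ∀ τ : T, f (k * (hT.equiv (τ * t)).1) = f k :=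
    eventually_all.2 fun τ ↦ hf _
  have hfst : Tendsto (fun x ↦ (hT.equiv x).1) cofinite cofinite :=
    .cofinite_of_finite_preimage_singleton fun k ↦ by
      refine (finite_range fun τ : T ↦ (k : G) * τ).subset fun x hx ↦ ⟨(hT.equiv x).2, ?_⟩
      rw [← show (hT.equiv x).1 = k from hx]
      exact hT.equiv_fst_mul_equiv_snd x
  filter_upwards [hfst.eventually hall] with x hx
  have hmul := congrArg Prod.fst (hT.equiv_mul_left (hT.equiv x).1 ((hT.equiv x).2 * t))
  rw [← mul_assoc, hT.equiv_fst_mul_equiv_snd] at hmul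
  rw [hmul, hx]

theorem AlmostInvariant.finite_setOf_mulCayley_adj (hf : AlmostInvariant f) (hs : s.Finite) :
    {e : G × G | (SimpleGraph.mulCayley s).Adj e.1 e.2 ∧ f e.1 ≠ f e.2}.Finite := by
  refine ((hs.union hs.inv).biUnion fun t _ ↦ (hf t).image fun x ↦ (x, x * t)).subset ?_
  rintro ⟨x, y⟩ ⟨hadj, hne⟩
  have hxy : x⁻¹ * y ∈ s ∪ s⁻¹ :=
    ((SimpleGraph.mulCayley_adj s x y).1 hadj).2.imp_right fun h ↦ by simpa using h
  exact mem_biUnion hxy ⟨x, by simpa using hne.symm, by simp⟩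

theorem almostInvariant_mem_of_finite_boundary {C : Set G} (hs : Subgroup.closure s = ⊤)
    (hC : (boundary (SimpleGraph.mulCayley s) C).Finite) : AlmostInvariant (· ∈ C) :=
  almostInvariant_of_closure_eq_top hs fun t ht ↦ by
    have hinj : Function.Injective fun x : G ↦ (x, x * t) := fun x y h ↦ congrArg Prod.fst h
    refine ((hC.union (finite_boundary_compl hC)).preimage hinj.injOn).subset fun x hx ↦ ?_
    have hiff : ¬ (x * t ∈ C ↔ x ∈ C) := fun h ↦ hx (propext h)
    have hadj : (SimpleGraph.mulCayley s).Adj x (x * t) :=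
      (SimpleGraph.mulCayley_adj _ _ _).2 ⟨fun h ↦ hiff (by rw [← h]), .inl (by simpa using ht)⟩
    by_cases hxC : x ∈ C
    · exact .inl ⟨hxC, fun h ↦ hiff (iff_of_true h hxC), hadj⟩
    · exact .inr ⟨hxC, fun h ↦ hiff (iff_of_false h hxC), hadj⟩

instance isGraphAction_mulCayley : IsGraphAction G (SimpleGraph.mulCayley s) where
  adj_smul _ := fun h ↦ SimpleGraph.mulCayley_adj_mul_iff_right.2 h

theorem connected_mulCayley (hs : Subgroup.closure s = ⊤) :
    (SimpleGraph.mulCayley s).Connected := by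
  have hstep : ∀ x, ∀ t ∈ s, (SimpleGraph.mulCayley s).Reachable x (x * t) := fun x t ht ↦ by
    by_cases h : x = x * t
    · rw [← h]
    · exact ((SimpleGraph.mulCayley_adj _ _ _).2 ⟨h, .inl (by simpa using ht)⟩).reachable
  have hone : ∀ g, (SimpleGraph.mulCayley s).Reachable 1 g := fun g ↦ by
    induction (hs ▸ Subgroup.mem_top g : g ∈ Subgroup.closure s)
      using Subgroup.closure_induction_right with
    | one => exact .refl 1
    | mul_right x _ t ht h => exact h.trans (hstep x t ht)
    | mul_inv_cancel x _ t ht h => exact h.trans (by simpa using (hstep (x * t⁻¹) t ht).symm)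
  exact { preconnected := fun x y ↦ (hone x).symm.trans (hone y), nonempty := ⟨1⟩ }

end AlmostInvariant

section FirstLetter

variable {ι : Type v} [DecidableEq ι]

/-- The first letter of the reduced word of `x`, if there is one. It is used as a colouring of the
ends of a free group. -/
def firstLetter (x : FreeGroup ι) : Option (ι × Bool) := x.toWord.head?

theorem getLast?_toWord_mk_singleton_mul {a : ι × Bool} {y : FreeGroup ι} (h₁ : y ≠ 1)
    (h₂ : y ≠ FreeGroup.mk [(a.1, !a.2)]) :
    (FreeGroup.mk [a] * y).toWord.getLast? = y.toWord.getLast? := by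
  have hmul : (FreeGroup.mk [a] * y).toWord = FreeGroup.reduce (a :: y.toWord) := by
    rw [FreeGroup.toWord_mul]
    rfl
  rw [hmul, FreeGroup.reduce.cons, FreeGroup.reduce_toWord]
  rw [← FreeGroup.mk_toWord (x := y)] at h₂
  rw [Ne, ← FreeGroup.toWord_eq_nil_iff] at h₁
  generalize y.toWord = l at *
  rcases l with _ | ⟨b, _ | ⟨c, l⟩⟩
  · contradiction
  · have hb : ¬ (a.1 = b.1 ∧ a.2 = !b.2) := by
      rintro ⟨h, h'⟩
      exact h₂ (by rw [h, h', Bool.not_not])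
    simp [hb]
  · by_cases hb : a.1 = b.1 ∧ a.2 = !b.2 <;> simp [hb]

theorem firstLetter_mul_of {i : ι} {x : FreeGroup ι} (h₁ : x ≠ 1) (h₂ : x ≠ (FreeGroup.of i)⁻¹) :
    firstLetter (x * FreeGroup.of i) = firstLetter x := by
  have hinv : ∀ y : FreeGroup ι,
      firstLetter y = (y⁻¹.toWord.getLast?).map fun a ↦ (a.1, !a.2) := fun y ↦ by
    rw [firstLetter, ← inv_inv y, FreeGroup.toWord_inv, inv_inv, FreeGroup.invRev,
      List.head?_reverse, List.getLast?_map]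
  have hi : (FreeGroup.of i)⁻¹ = FreeGroup.mk [(i, false)] := rfl
  rw [hinv, hinv, mul_inv_rev, hi, getLast?_toWord_mk_singleton_mul (inv_ne_one.2 h₁)]
  rwa [Ne, inv_eq_iff_eq_inv]

theorem almostInvariant_firstLetter : AlmostInvariant (firstLetter (ι := ι)) :=
  almostInvariant_of_closure_eq_top (FreeGroup.closure_range_of ι) <| by
    rintro _ ⟨i, rfl⟩
    filter_upwards [(Set.finite_singleton 1).compl_mem_cofinite,
      (Set.finite_singleton (FreeGroup.of i)⁻¹).compl_mem_cofinite] with x h₁ h₂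
    exact firstLetter_mul_of h₁ h₂

theorem firstLetter_inv_ne {w : FreeGroup ι} (hw : FreeGroup.IsCyclicallyReduced w.toWord)
    (hne : w ≠ 1) : firstLetter w⁻¹ ≠ firstLetter w := by
  have hne' : w.toWord ≠ [] := mt FreeGroup.toWord_eq_nil_iff.1 hne
  rw [firstLetter, firstLetter, FreeGroup.toWord_inv, FreeGroup.invRev, List.head?_reverse,
    List.getLast?_map, List.getLast?_eq_some_getLast hne', List.head?_eq_some_head hne']
  intro h
  have heq := Option.some.inj h
  have hred := hw.2 _ (List.getLast?_eq_some_getLast hne') _ (List.head?_eq_some_head hne')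
  rw [← heq] at hred
  simp at hred

theorem toWord_pow_of_isCyclicallyReduced {w : FreeGroup ι}
    (hw : FreeGroup.IsCyclicallyReduced w.toWord) (n : ℕ) :
    (w ^ n).toWord = (List.replicate n w.toWord).flatten := by
  rw [FreeGroup.toWord_pow, (hw.flatten_replicate n).isReduced.reduce_eq]

theorem exists_conj_firstLetter_pow {x : FreeGroup ι} (hx : x ≠ 1) :
    ∃ c w : FreeGroup ι, x = c * w * c⁻¹ ∧ ∀ n ≠ 0, firstLetter (w ^ n) = firstLetter w ∧
      firstLetter (w⁻¹ ^ n) ≠ firstLetter w := by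
  let c := FreeGroup.mk (FreeGroup.reduceCyclically.conjugator x.toWord)
  let w := FreeGroup.mk (FreeGroup.reduceCyclically x.toWord)
  have hred := FreeGroup.reduceCyclically.isCyclicallyReduced (FreeGroup.isReduced_toWord (x := x))
  have hw : FreeGroup.IsCyclicallyReduced w.toWord := by
    rwa [FreeGroup.toWord_mk, hred.isReduced.reduce_eq]
  have hconj : x = c * w * c⁻¹ := by
    rw [FreeGroup.inv_mk, FreeGroup.mul_mk, FreeGroup.mul_mk,
      FreeGroup.reduceCyclically.conj_conjugator_reduceCyclically, FreeGroup.mk_toWord]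
  have hw₁ : w ≠ 1 := by
    intro h
    rw [h, mul_one, mul_inv_cancel] at hconj
    exact hx hconj
  refine ⟨c, w, hconj, fun n hn ↦ ?_⟩
  have hpow : firstLetter (w ^ n) = firstLetter w := by
    obtain ⟨m, rfl⟩ := Nat.exists_eq_succ_of_ne_zero hn
    rw [firstLetter, toWord_pow_of_isCyclicallyReduced hw, List.replicate_succ, List.flatten_cons,
      List.head?_append_of_ne_nil _ (mt FreeGroup.toWord_eq_nil_iff.1 hw₁), firstLetter]
  refine ⟨hpow, ?_⟩
  rw [inv_pow, ← hpow]
  refine firstLetter_inv_ne ?_ (by simpa [hn] using hw₁)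
  rw [toWord_pow_of_isCyclicallyReduced hw]
  exact hw.flatten_replicate n

end FirstLetter

section VirtuallyFreeGroup

open Filter Set Pointwise

variable {G : Type u} [Group G] {K : Subgroup G} {ι : Type v} {s : Set G}

theorem eq_one_of_isOfFinOrder_of_mulEquiv (e : K ≃* FreeGroup ι) {k : G} (hk : k ∈ K)
    (hfin : IsOfFinOrder k) : k = 1 := by
  have : IsMulTorsionFree K := e.injective.isMulTorsionFree e.toMonoidHom
  by_contra hne
  refine not_isOfFinOrder_of_isMulTorsionFree (G := K) (a := ⟨k, hk⟩) ?_ ?_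
  · exact fun h ↦ hne (congrArg Subtype.val h)
  · exact Submonoid.isOfFinOrder_coe.1 hfin

/- The colour of `x` is the first letter of its component in `K`. -/
theorem exists_almostInvariant_separating [K.FiniteIndex] (e : K ≃* FreeGroup ι) :
    ∃ f : G → Option (ι × Bool), AlmostInvariant f ∧ ∀ h ∈ K, h ≠ 1 → ∃ (a : G) (y : _),
      (∀ᶠ n : ℕ in atTop, f (a * h ^ n) = y) ∧ ∀ᶠ n : ℕ in atTop, f (a * h⁻¹ ^ n) ≠ y := by
  classical
  obtain ⟨T, hT, hT₁⟩ := K.exists_isComplement_right 1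
  let f : G → Option (ι × Bool) := fun x ↦ firstLetter (e (hT.equiv x).1)
  have hf : AlmostInvariant f := AlmostInvariant.comp_equiv_fst hT (f := fun k ↦ firstLetter (e k))
    fun k ↦ by simpa only [map_mul] using
      e.injective.tendsto_cofinite.eventually (almostInvariant_firstLetter (e k))
  have hfK : ∀ k : K, f k = firstLetter (e k) := fun k ↦
    congrArg (fun k ↦ firstLetter (e k)) (hT.equiv_fst_eq_self_of_mem_of_one_mem hT₁ k.2)
  refine ⟨f, hf, fun h hh hne ↦ ?_⟩
  obtain ⟨c, w, hcw, hw⟩ := exists_conj_firstLetter_pow (x := e ⟨h, hh⟩)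
    (by simpa [Subtype.ext_iff] using hne)
  let a : K := e.symm c⁻¹
  let κ : K := e.symm w
  have hconj : (a : G) * h * (a : G)⁻¹ = κ := by
    have : a * ⟨h, hh⟩ * a⁻¹ = κ := e.injective (by simp [a, κ, hcw, mul_assoc])
    exact congrArg Subtype.val this
  have hpow : ∀ n : ℕ, a * h ^ n = (κ : G) ^ n * a := fun n ↦ by
    rw [← hconj, conj_pow, inv_mul_cancel_right]
  have hpow' : ∀ n : ℕ, a * h⁻¹ ^ n = (κ : G)⁻¹ ^ n * a := fun n ↦ by
    rw [← hconj, conj_inv, conj_pow, inv_mul_cancel_right]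
  have hκ : ¬ IsOfFinOrder (κ : G) := fun hfin ↦ hne <| by
    rwa [eq_one_of_isOfFinOrder_of_mulEquiv e κ.2 hfin, conj_eq_one_iff] at hconj
  refine ⟨a, firstLetter w, ?_, ?_⟩
  · filter_upwards [hf.eventually_pow_mul hκ a, eventually_ne_atTop 0] with n hn hn₀
    rw [hpow, hn, ← (hw n hn₀).1, ← Subgroup.coe_pow, hfK, map_pow, e.apply_symm_apply]
  · filter_upwards [hf.eventually_pow_mul (isOfFinOrder_inv_iff.not.2 hκ) a,
      eventually_ne_atTop 0] with n hn hn₀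
    rw [hpow', hn, ← Subgroup.coe_inv, ← Subgroup.coe_pow, hfK, map_pow, map_inv,
      e.apply_symm_apply]
    exact (hw n hn₀).2

theorem exists_encard_boundary_le [K.FiniteIndex] (e : K ≃* FreeGroup ι) (hs : s.Finite) :
    ∃ k : ℕ, ∀ h ∈ K, h ≠ 1 → ∃ C : Set G, (boundary (SimpleGraph.mulCayley s) C).encard ≤ k ∧
      (∀ᶠ n : ℕ in atTop, h ^ n ∈ C) ∧ ∀ᶠ n : ℕ in atTop, h⁻¹ ^ n ∉ C := by
  obtain ⟨f, hf, hsep⟩ := exists_almostInvariant_separating e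
  have hfin := hf.finite_setOf_mulCayley_adj hs
  refine ⟨Set.ncard {e : G × G | (SimpleGraph.mulCayley s).Adj e.1 e.2 ∧ f e.1 ≠ f e.2},
    fun h hh hne ↦ ?_⟩
  obtain ⟨a, y, h₁, h₂⟩ := hsep h hh hne
  refine ⟨a⁻¹ • f ⁻¹' {y}, ?_, ?_, ?_⟩
  · rw [boundary_smul (Γ := SimpleGraph.mulCayley s), encard_smul_set, hfin.cast_ncard_eq]
    refine encard_le_encard ?_
    rintro e ⟨h₁, h₂, hadj⟩
    exact ⟨hadj, fun heq ↦ h₂ (heq.symm.trans h₁)⟩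
  · simp only [mem_smul_set_iff_inv_smul_mem, inv_inv]
    exact h₁
  · simp only [mem_smul_set_iff_inv_smul_mem, inv_inv]
    exact h₂

/-- A limit of the powers of `h`, as a point of the Stone–Čech compactification of the group. -/
noncomputable def powerLimit (h : G) : Ultrafilter G :=
  (hyperfilter ℕ).map (h ^ ·)

theorem mem_powerLimit {h : G} {C : Set G} (hC : ∀ᶠ n : ℕ in atTop, h ^ n ∈ C) : C ∈ powerLimit h :=
  Nat.hyperfilter_le_atTop hC

theorem AlmostInvariant.isAxisOf {C : Set G} (hC : AlmostInvariant (· ∈ C)) {h : G}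
    (hh : ¬ IsOfFinOrder h) (h₁ : C ∈ powerLimit h) (h₂ : C ∉ powerLimit h⁻¹) :
    TreeSet.IsAxisOf C h := by
  refine ⟨1, ?_, ?_⟩ <;> simp only [smul_eq_mul, mul_one]
  · refine (hC.eventually_pow_mem_or_notMem hh).resolve_right fun h ↦ ?_
    exact Ultrafilter.compl_mem_iff_notMem.1 (mem_powerLimit h) h₁
  · refine (hC.eventually_pow_mem_or_notMem (isOfFinOrder_inv_iff.not.2 hh)).resolve_left fun h ↦ ?_
    exact h₂ (mem_powerLimit h)

theorem exists_treeSet_isAxisOf [K.FiniteIndex] (e : K ≃* FreeGroup ι)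
    (hs : Subgroup.closure s = ⊤) (hfin : s.Finite) :
    ∃ (W : TreeSet G G) (W₀ : Set (Set G)), W₀.Finite ∧ (∀ C ∈ W.sets, ∃ g : G, g • C ∈ W₀) ∧
      ∀ h ∈ K, h ≠ 1 → ∃ C ∈ W.sets, TreeSet.IsAxisOf C h := by
  obtain ⟨k, hk⟩ := exists_encard_boundary_le e hfin
  let P : Ultrafilter G → Ultrafilter G → Prop := fun α β ↦ ∃ g : G, ∃ h ∈ K, h ≠ 1 ∧
    α = (powerLimit h).map (g • ·) ∧ β = (powerLimit h⁻¹).map (g • ·)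
  have hsymm : ∀ {α β}, P α β → P β α := by
    rintro _ _ ⟨g, h, hh, hne, rfl, rfl⟩
    exact ⟨g, h⁻¹, K.inv_mem hh, inv_ne_one.2 hne, rfl, by rw [inv_inv]⟩
  have hsmul : ∀ {α β} (a : G), P α β → P (α.map (a • ·)) (β.map (a • ·)) := by
    rintro _ _ a ⟨g, h, hh, hne, rfl, rfl⟩
    refine ⟨a * g, h, hh, hne, ?_, ?_⟩ <;>
      simp only [Ultrafilter.map_map, Function.comp_def, smul_smul]
  have hsep : ∀ {α β}, P α β →
      ∃ C, (boundary (SimpleGraph.mulCayley s) C).encard ≤ k ∧ C ∈ α ∧ C ∉ β := by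
    rintro _ _ ⟨g, h, hh, hne, rfl, rfl⟩
    obtain ⟨C, hC, h₁, h₂⟩ := hk h hh hne
    refine ⟨g • C, ?_, ?_, ?_⟩
    · rwa [boundary_smul (Γ := SimpleGraph.mulCayley s), encard_smul_set]
    · simpa only [Ultrafilter.mem_map, preimage_smul, inv_smul_smul] using mem_powerLimit h₁
    · rw [Ultrafilter.mem_map, preimage_smul, inv_smul_smul, ← Ultrafilter.compl_mem_iff_notMem]
      exact mem_powerLimit h₂
  have hadj : ∀ x y, (SimpleGraph.mulCayley s).Adj x y →
      ∃ g : G, (g • x, g • y) ∈ Prod.mk 1 '' (s ∪ s⁻¹) := fun x y hxy ↦ by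
    have hxy' : x⁻¹ * y ∈ s ∪ s⁻¹ :=
      ((SimpleGraph.mulCayley_adj s x y).1 hxy).2.imp_right fun h ↦ by simpa using h
    exact ⟨x⁻¹, x⁻¹ * y, hxy', by simp⟩
  obtain ⟨W, W₀, hW₀, hWW₀, hW⟩ := exists_treeSet (connected_mulCayley hs)
    ((hfin.union hfin.inv).image (Prod.mk 1)) hadj (P := P) hsymm hsmul hsep
  refine ⟨W, W₀, hW₀, hWW₀, fun h hh hne ↦ ?_⟩
  obtain ⟨C, hCW, hfin, h₁, h₂⟩ := hW _ _ ⟨1, h, hh, hne, rfl, rfl⟩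
  simp only [one_smul, Ultrafilter.map_id'] at h₁ h₂
  exact ⟨C, hCW, (almostInvariant_mem_of_finite_boundary hs hfin).isAxisOf
    (mt (eq_one_of_isOfFinOrder_of_mulEquiv e hh) hne) h₁ h₂⟩

theorem exists_finiteIndex_torsionFree (hvf : VirtuallyFree G) :
    ∃ K : Subgroup G, K.FiniteIndex ∧ ∀ k ∈ K, IsOfFinOrder k → k = 1 := by
  obtain ⟨K, hK, ⟨_⟩⟩ := hvf
  exact ⟨K, hK, fun k ↦ eq_one_of_isOfFinOrder_of_mulEquiv (IsFreeGroup.toFreeGroup K)⟩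

theorem nonempty_stallingsTree [hG : Group.FG G] (hvf : VirtuallyFree G) :
    Nonempty (StallingsTree.{u, u} G) := by
  obtain ⟨K, _, ⟨_⟩⟩ := hvf
  obtain ⟨s, hs, hfin⟩ := (Subgroup.fg_iff _).1 hG.out
  obtain ⟨W, W₀, hW₀, hWW₀, hW⟩ := exists_treeSet_isAxisOf (IsFreeGroup.toFreeGroup K) hs hfin
  exact StallingsTree.nonempty_of_treeSet W hW₀ hWW₀ hW

theorem subgroup (hvf : VirtuallyFree G) (L : Subgroup G) : VirtuallyFree L := by
  obtain ⟨K, _, ⟨_⟩⟩ := hvf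
  let f : K.subgroupOf L →* K := (L.subtype.comp (K.subgroupOf L).subtype).codRestrict K fun x ↦ x.2
  have hf : Function.Injective f := fun x y h ↦ Subtype.ext (Subtype.ext (congrArg Subtype.val h :))
  exact ⟨K.subgroupOf L, inferInstance, ⟨IsFreeGroup.ofMulEquiv (MonoidHom.ofInjective hf).symm⟩⟩

end VirtuallyFreeGroup

theorem stabilizer_smul_eq_of_le {G : Type*} [Group G] {V : Type*} [MulAction G V] {a : V} {g : G}
    (ha : (MulAction.stabilizer G a : Set G).Finite)
    (h : MulAction.stabilizer G a ≤ MulAction.stabilizer G (g • a)) :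
    MulAction.stabilizer G (g • a) = MulAction.stabilizer G a := by
  have hconj : (MulAction.stabilizer G (g • a) : Set G) =
      MulAut.conj g '' MulAction.stabilizer G a := by
    rw [MulAction.stabilizer_smul_eq_stabilizer_map_conj]
    rfl
  refine (SetLike.coe_injective (Set.eq_of_subset_of_ncard_le h ?_ ?_)).symm
  · rw [hconj]
    exact Set.ncard_image_le ha
  · rw [hconj]
    exact ha.image _

namespace StallingsTree

variable {G : Type u} [Group G]

theorem IsReduced.exists_smul_eq {T : StallingsTree.{u, v} G} (hT : T.IsReduced) {a w : T.V}
    (h : MulAction.stabilizer G a ≤ MulAction.stabilizer G w) : ∃ g : G, g • a = w := by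
  induction hd : T.graph.dist w a generalizing a with
  | zero => exact ⟨1, by rw [one_smul, T.isTree.connected.dist_eq_zero_iff.1 hd]⟩
  | succ n ih =>
    have hne : a ≠ w := fun heq ↦ by simp [heq] at hd
    obtain ⟨x, hxa, hdist⟩ := exists_adj_dist_eq_add_one T.isTree.connected hne
    have hax : MulAction.stabilizer G a ≤ MulAction.stabilizer G x := fun g hg ↦ by
      refine eq_of_adj_of_dist_eq_add_one T.isTree w (v := a) ?_ hxa ?_ hdist
      · simpa only [MulAction.mem_stabilizer_iff.1 hg] using IsGraphAction.adj_smul g hxa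
      · rw [hdist, ← dist_smul T.isTree.connected g w x, MulAction.mem_stabilizer_iff.1 (h hg)]
    by_cases hex : ∃ g : G, g • a = x
    · obtain ⟨g, rfl⟩ := hex
      have hstab := stabilizer_smul_eq_of_le (T.finite_stabilizer a) hax
      obtain ⟨g', hg'⟩ := ih (a := g • a) (hstab ▸ h) (by omega)
      exact ⟨g' * g, by rw [mul_smul, hg']⟩
    · have hle : foldGroup G a x ≤ MulAction.stabilizer G x := (Subgroup.closure_le _).2 fun g hg ↦
        hg.elim (fun hg ↦ hax hg) fun hg ↦ hg.elim id fun hg ↦ (hex ⟨g, hg⟩).elim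
      exact (hT a x hxa.symm ((T.finite_stabilizer x).subset hle)).elim

/-- A system of representatives for the orbits of vertices and edges of a tree: one vertex
`vertex μ` with stabilizer `M μ` in every orbit of vertices, and in every orbit of edges one edge
that joins `vertex (s k)` to `elt k • vertex (t k)`. -/
structure Transversal (T : StallingsTree.{u, v} G) {ι κ : Type*} (M : ι → Subgroup G)
    (s t : κ → ι) where
  vertex : ι → T.V
  elt : κ → G
  stabilizer_vertex (μ : ι) : MulAction.stabilizer G (vertex μ) = M μ
  exists_smul_vertex (a : T.V) : ∃ μ, ∃ g : G, g • vertex μ = a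
  eq_of_smul_vertex {μ ν : ι} {g : G} : g • vertex μ = vertex ν → μ = ν
  adj (k : κ) : T.graph.Adj (vertex (s k)) (elt k • vertex (t k))
  exists_smul_edge {a b : T.V} : T.graph.Adj a b →
    ∃ k, ∃ g : G, s(g • vertex (s k), g • elt k • vertex (t k)) = s(a, b)
  eq_of_smul_edge {k l : κ} {g : G} : s(g • vertex (s k), g • elt k • vertex (t k)) =
    s(vertex (s l), elt l • vertex (t l)) → k = l

section ExistsTransversal

variable {T : StallingsTree.{u, v} G}

/- In a reduced tree different orbits of vertices have different stabilizers up to conjugation, so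
the orbits can be indexed by the subgroups `M μ`. -/
theorem IsReduced.exists_vertex_transversal (hT : T.IsReduced) {ι : Type*} {M : ι → Subgroup G}
    (hM : ∀ H : Subgroup G, (H : Set G).Finite → ∃ μ, SubgroupConj H (M μ)) :
    ∃ (I : Set ι) (x : I → T.V), (∀ μ, MulAction.stabilizer G (x μ) = M μ) ∧
      Function.Bijective fun μ ↦ (Quotient.mk _ (x μ) : MulAction.orbitRel.Quotient G T.V) := by
  have hrep : ∀ q : MulAction.orbitRel.Quotient G T.V, ∃ z μ,
      Quotient.mk _ z = q ∧ MulAction.stabilizer G z = M μ := by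
    rintro ⟨y⟩
    obtain ⟨μ, g, hg⟩ := hM _ (T.finite_stabilizer y)
    exact ⟨g • y, μ, Quotient.sound ⟨g, rfl⟩,
      (MulAction.stabilizer_smul_eq_stabilizer_map_conj g y).trans hg.symm⟩
  choose z m hzq hzm using hrep
  have hm : Function.Injective m := fun q q' heq ↦ by
    have hle : MulAction.stabilizer G (z q) ≤ MulAction.stabilizer G (z q') := by
      rw [hzm, hzm, heq]
    obtain ⟨g, hg⟩ := hT.exists_smul_eq hle
    have hzz : (Quotient.mk _ (z q') : MulAction.orbitRel.Quotient G T.V) = Quotient.mk _ (z q) :=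
      Quotient.sound ⟨g, hg⟩
    exact (hzq q).symm.trans (hzz.symm.trans (hzq q'))
  let e := Equiv.ofInjective m hm
  refine ⟨Set.range m, fun μ ↦ z (e.symm μ), fun μ ↦ ?_, ?_⟩
  · rw [hzm]
    exact congrArg (fun ν ↦ M ν.1) (e.apply_symm_apply μ)
  · simp only [hzq]
    exact e.symm.bijective

theorem exists_transversal_of_vertex {ι : Type*} {M : ι → Subgroup G} {x : ι → T.V}
    (hxM : ∀ μ, MulAction.stabilizer G (x μ) = M μ)
    (hx : Function.Bijective fun μ ↦
      (Quotient.mk _ (x μ) : MulAction.orbitRel.Quotient G T.V))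
    [Finite (MulAction.orbitRel.Quotient G T.graph.edgeSet)] :
    ∃ s t : Fin (Nat.card (MulAction.orbitRel.Quotient G T.graph.edgeSet)) → ι,
      Nonempty (T.Transversal M s t) := by
  have hcov : ∀ a : T.V, ∃ μ, ∃ g : G, g • x μ = a := fun a ↦ by
    obtain ⟨μ, hμ⟩ := hx.2 (Quotient.mk _ a)
    obtain ⟨g, hg⟩ := Quotient.exact hμ.symm
    exact ⟨μ, g, hg⟩
  let e := (Finite.equivFin (MulAction.orbitRel.Quotient G T.graph.edgeSet)).symm
  have hedge : ∀ k, ∃ (μ ν : ι) (c : G) (h : T.graph.Adj (x μ) (c • x ν)),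
      Quotient.mk _ ⟨s(x μ, c • x ν), h⟩ = e k := fun k ↦ by
    obtain ⟨⟨⟨a, b⟩, hab⟩, hk⟩ := Quotient.exists_rep (e k)
    obtain ⟨μ, g, rfl⟩ := hcov a
    obtain ⟨ν, c, rfl⟩ := hcov b
    have hadj : T.graph.Adj (g • x μ) (c • x ν) := hab
    have hadj' : T.graph.Adj (x μ) ((g⁻¹ * c) • x ν) := by
      rwa [mul_smul, ← adj_smul_iff g, smul_inv_smul]
    refine ⟨μ, ν, g⁻¹ * c, hadj', hk ▸ Quotient.sound ⟨g⁻¹, Subtype.ext ?_⟩⟩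
    change s(g⁻¹ • g • x μ, g⁻¹ • c • x ν) = s(x μ, (g⁻¹ * c) • x ν)
    rw [inv_smul_smul, mul_smul]
  choose s t h hadj hk using hedge
  refine ⟨s, t, ⟨x, h, hxM, hcov, fun {μ ν g} hg ↦ ?_, hadj, fun {a b} hab ↦ ?_,
    fun {k l g} hg ↦ ?_⟩⟩
  · exact (hx.1 (Quotient.sound (s := MulAction.orbitRel G T.V) ⟨g, hg⟩)).symm
  · let q : MulAction.orbitRel.Quotient G T.graph.edgeSet := Quotient.mk _ ⟨s(a, b), hab⟩
    obtain ⟨g, hg⟩ := Quotient.exact ((hk (e.symm q)).trans (e.apply_symm_apply q)).symm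
    exact ⟨e.symm q, g, congrArg Subtype.val hg⟩
  · refine e.injective ((hk k).symm.trans (Eq.trans ?_ (hk l)))
    exact (Quotient.sound (s := MulAction.orbitRel G _) ⟨g, Subtype.ext hg⟩).symm

theorem IsReduced.exists_transversal (hT : T.IsReduced) {S : Finset G}
    (hS : Subgroup.closure (S : Set G) = ⊤) {ι : Type*} [Finite ι] {M : ι → Subgroup G}
    (hM : ∀ H : Subgroup G, (H : Set G).Finite → ∃ μ, SubgroupConj H (M μ)) :
    ∃ n ≤ Nat.card ι + S.card, ∃ (I : Set ι) (s t : Fin n → I),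
      Nonempty (T.Transversal (fun μ : I ↦ M μ) s t) := by
  obtain ⟨I, x, hxM, hx⟩ := hT.exists_vertex_transversal hM
  obtain ⟨hfin, hcard⟩ := card_edgeOrbits_le T.isTree hS
  refine ⟨_, hcard.trans (Nat.add_le_add_right ?_ _), I, exists_transversal_of_vertex hxM hx⟩
  rw [← Nat.card_congr (Equiv.ofBijective _ hx)]
  exact Finite.card_subtype_le _

end ExistsTransversal

end StallingsTree

namespace StallingsTree

variable {G : Type u} [Group G] {T : StallingsTree.{u, v} G} {T' : StallingsTree.{u, w} G}
  {ι κ : Type*} {M : ι → Subgroup G} {s t : κ → ι}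

namespace Transversal

section OneTree

variable (P : T.Transversal M s t)

theorem apply_eq_of_forall_edge {X : Type*} {f : T.V → X}
    (hf : ∀ k (g : G), f (g • P.vertex (s k)) = f (g • P.elt k • P.vertex (t k))) (a b : T.V) :
    f a = f b := by
  refine apply_eq_of_forall_adj T.isTree.connected (fun a b hab ↦ ?_) a b
  obtain ⟨k, g, hg⟩ := P.exists_smul_edge hab
  rcases Sym2.eq_iff.1 hg with ⟨rfl, rfl⟩ | ⟨rfl, rfl⟩
  exacts [hf k g, (hf k g).symm]

theorem fixed_of_smul_edge_eq {k l : κ} {g h : G}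
    (hgh : s(g • P.vertex (s k), g • P.elt k • P.vertex (t k)) =
      s(h • P.vertex (s l), h • P.elt l • P.vertex (t l))) :
    k = l ∧ (h⁻¹ * g) • P.vertex (s k) = P.vertex (s k) ∧
      (h⁻¹ * g) • P.elt k • P.vertex (t k) = P.elt k • P.vertex (t k) := by
  have hmap := congrArg (Sym2.map (h⁻¹ • ·)) hgh
  simp only [Sym2.map_mk, inv_smul_smul, ← mul_smul h⁻¹ g] at hmap
  obtain rfl := P.eq_of_smul_edge hmap
  exact ⟨rfl, T.smul_eq_of_smul_edge_eq (P.adj k) hmap⟩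

theorem exists_potential_of_commute (d : κ → G)
    (hd : ∀ k (m : G), m • P.vertex (s k) = P.vertex (s k) →
      m • P.elt k • P.vertex (t k) = P.elt k • P.vertex (t k) → Commute m (d k)) (r : T.V) :
    ∃ p : T.V → G, p r = 1 ∧ ∀ k (g : G), p (g • P.elt k • P.vertex (t k)) =
      p (g • P.vertex (s k)) * (g * d k * g⁻¹) := by
  classical
  have hedge : ∀ e : T.graph.edgeSet, ∃ k, ∃ g : G,
      s(g • P.vertex (s k), g • P.elt k • P.vertex (t k)) = e := by
    rintro ⟨⟨a, b⟩, hab⟩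
    exact P.exists_smul_edge hab
  choose k g hkg using hedge
  let δ : T.graph.edgeSet → G := fun e ↦ g e * d (k e) * (g e)⁻¹
  let τ : T.V → T.V → G := fun a b ↦ if h : T.graph.Adj a b then
    if g ⟨s(a, b), h⟩ • P.vertex (s (k ⟨s(a, b), h⟩)) = a then δ ⟨s(a, b), h⟩
    else (δ ⟨s(a, b), h⟩)⁻¹ else 1
  have hτ : ∀ a b, T.graph.Adj a b → τ b a = (τ a b)⁻¹ := fun a b hab ↦ by
    have he : (⟨s(b, a), hab.symm⟩ : T.graph.edgeSet) = ⟨s(a, b), hab⟩ := Subtype.ext Sym2.eq_swap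
    simp only [τ, dif_pos hab, dif_pos hab.symm, he]
    rcases Sym2.eq_iff.1 (hkg ⟨s(a, b), hab⟩) with ⟨h, -⟩ | ⟨h, -⟩
    · rw [if_pos h, if_neg fun h' ↦ hab.ne (h.symm.trans h')]
    · rw [if_pos h, if_neg fun h' ↦ hab.ne (h'.symm.trans h), inv_inv]
  obtain ⟨p, hpr, hp⟩ := exists_potential T.isTree τ hτ r
  refine ⟨p, hpr, fun l h ↦ ?_⟩
  have hadj := IsGraphAction.adj_smul h (P.adj l)
  let e : T.graph.edgeSet := ⟨s(_, _), hadj⟩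
  obtain ⟨hkl, h₁, h₂⟩ := P.fixed_of_smul_edge_eq (hkg e)
  have hcomm : h⁻¹ * g e * d (k e) = d (k e) * (h⁻¹ * g e) := hd _ _ h₁ h₂
  have hfix : g e • P.vertex (s (k e)) = h • P.vertex (s l) := by
    rw [← hkl, ← inv_smul_eq_iff, ← mul_smul, h₁]
  have hδ : δ e = h * d (k e) * h⁻¹ := calc
    g e * d (k e) * (g e)⁻¹ = h * (h⁻¹ * g e * d (k e)) * (g e)⁻¹ := by group
    _ = h * (d (k e) * (h⁻¹ * g e)) * (g e)⁻¹ := by rw [hcomm]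
    _ = h * d (k e) * h⁻¹ := by group
  have hτe : τ (h • P.vertex (s l)) (h • P.elt l • P.vertex (t l)) = δ e :=
    (dif_pos hadj).trans (if_pos hfix)
  rw [hp _ _ hadj, hτe, hδ, hkl]

end OneTree

variable (P : T.Transversal M s t) (P' : T'.Transversal M s t)

/-- The relation between the two vertex groups of the edge `k` given by its stabilizer, which
embeds into both of them. -/
def edgeRel (k : κ) : Set (M (s k) × M (t k)) := {q | (q.1 : G) * P.elt k = P.elt k * q.2}

/-- A potential that twists the action on the first tree into the action on the second one: moving
along the edge `k` changes it by the quotient of the elements attached to `k` by `P'` and `P`. -/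
def IsTwist (p : T.V → G) : Prop := ∀ k (g : G), p (g • P.elt k • P.vertex (t k)) =
  p (g • P.vertex (s k)) * (g * (P'.elt k * (P.elt k)⁻¹) * g⁻¹)

variable {P P'}

theorem exists_isTwist (h : P.edgeRel = P'.edgeRel) (r : T.V) :
    ∃ p : T.V → G, p r = 1 ∧ P.IsTwist P' p := by
  refine P.exists_potential_of_commute _ (fun k m h₁ h₂ ↦ ?_) r
  have hs : m ∈ M (s k) := P.stabilizer_vertex (s k) ▸ h₁
  have ht : (P.elt k)⁻¹ * m * P.elt k ∈ M (t k) := P.stabilizer_vertex (t k) ▸ by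
    rw [MulAction.mem_stabilizer_iff, mul_smul, mul_smul, h₂, inv_smul_smul]
  have hrel : (⟨m, hs⟩, ⟨_, ht⟩) ∈ P'.edgeRel k := by
    rw [← h]
    change m * P.elt k = P.elt k * ((P.elt k)⁻¹ * m * P.elt k)
    group
  replace hrel : m * P'.elt k = P'.elt k * ((P.elt k)⁻¹ * m * P.elt k) := hrel
  change m * (P'.elt k * (P.elt k)⁻¹) = P'.elt k * (P.elt k)⁻¹ * m
  rw [← mul_assoc, hrel]
  group

variable (P P') in
theorem exists_equivariant_map : ∃ β : T.V → T'.V,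
    (∀ (g : G) a, β (g • a) = g • β a) ∧ ∀ μ, β (P.vertex μ) = P'.vertex μ := by
  choose μ g hg using P.exists_smul_vertex
  let β : T.V → T'.V := fun a ↦ g a • P'.vertex (μ a)
  have hβ : ∀ (h : G) ν, β (h • P.vertex ν) = h • P'.vertex ν := fun h ν ↦ by
    have hfix : (h⁻¹ * g (h • P.vertex ν)) • P.vertex (μ (h • P.vertex ν)) = P.vertex ν := by
      rw [mul_smul, hg, inv_smul_smul]
    have hμ := P.eq_of_smul_vertex hfix
    rw [hμ, ← MulAction.mem_stabilizer_iff, P.stabilizer_vertex, ← P'.stabilizer_vertex,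
      MulAction.mem_stabilizer_iff, mul_smul, inv_smul_eq_iff] at hfix
    exact (congrArg (g _ • P'.vertex ·) hμ).trans hfix
  refine ⟨β, fun h a ↦ ?_, fun ν ↦ by simpa only [one_smul] using hβ 1 ν⟩
  rw [← hg a, ← mul_smul, hβ, hβ, mul_smul]

variable {p : T.V → G} {r : T.V}

theorem IsTwist.apply_smul (hp : P.IsTwist P' p) (hr : p r = 1) (g : G) (a : T.V) :
    p (g • a) = p (g • r) * g * p a * g⁻¹ := by
  have hconst := P.apply_eq_of_forall_edge (f := fun a ↦ p (g • a) * g * (p a)⁻¹)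
    (fun k h ↦ by
      rw [← mul_smul, ← mul_smul g, hp k (g * h), hp k h]
      group) a r
  rw [hr, inv_one, mul_one] at hconst
  rw [← hconst]
  group

theorem IsTwist.smul_map (hp : P.IsTwist P' p) {β : T.V → T'.V}
    (hβ : ∀ (g : G) a, β (g • a) = g • β a) (hβP : ∀ μ, β (P.vertex μ) = P'.vertex μ) (k : κ)
    (g : G) : p (g • P.elt k • P.vertex (t k)) • β (g • P.elt k • P.vertex (t k)) =
      p (g • P.vertex (s k)) • g • P'.elt k • P'.vertex (t k) := by
  rw [hp k g, hβ, hβ, hβP]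
  simp only [← mul_smul]
  group

theorem IsTwist.mul_apply_eq_one (hp : P.IsTwist P' p) {p' : T'.V → G} (hp' : P'.IsTwist P p')
    {β : T.V → T'.V} (hβ : ∀ (g : G) a, β (g • a) = g • β a)
    (hβP : ∀ μ, β (P.vertex μ) = P'.vertex μ) (hr : p r = 1) (hr' : p' (β r) = 1) (a : T.V) :
    p' (p a • β a) * p a = 1 := by
  have hconst := P.apply_eq_of_forall_edge (f := fun a ↦ p' (p a • β a) * p a)
    (fun k g ↦ by
      have hp'k := hp' k (p (g • P.vertex (s k)) * g)
      rw [mul_smul, mul_smul] at hp'k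
      rw [hp.smul_map hβ hβP, hp'k, hp k g, hβ, hβP]
      group) a r
  simpa only [hr, hr', one_smul, mul_one] using hconst

theorem IsTwist.adj_map (hp : P.IsTwist P' p) {β : T.V → T'.V}
    (hβ : ∀ (g : G) a, β (g • a) = g • β a) (hβP : ∀ μ, β (P.vertex μ) = P'.vertex μ) {a b : T.V}
    (hab : T.graph.Adj a b) : T'.graph.Adj (p a • β a) (p b • β b) := by
  have hedge : ∀ k (g : G), T'.graph.Adj (p (g • P.vertex (s k)) • β (g • P.vertex (s k)))
      (p (g • P.elt k • P.vertex (t k)) • β (g • P.elt k • P.vertex (t k))) := fun k g ↦ by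
    rw [hp.smul_map hβ hβP, hβ, hβP, adj_smul_iff, adj_smul_iff]
    exact P'.adj k
  obtain ⟨k, g, hg⟩ := P.exists_smul_edge hab
  rcases Sym2.eq_iff.1 hg with ⟨rfl, rfl⟩ | ⟨rfl, rfl⟩
  exacts [hedge k g, (hedge k g).symm]

theorem exists_isTwist_mulEquiv (h : P.edgeRel = P'.edgeRel) {β : T.V → T'.V}
    (hβ : ∀ (g : G) a, β (g • a) = g • β a) (hβP : ∀ μ, β (P.vertex μ) = P'.vertex μ) (r : T.V) :
    ∃ (σ : G ≃* G) (p : T.V → G) (p' : T'.V → G),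
      (P.IsTwist P' p ∧ p r = 1 ∧ ∀ g, σ g = p (g • r) * g) ∧
        P'.IsTwist P p' ∧ p' (β r) = 1 ∧ ∀ g, σ.symm g = p' (g • β r) * g := by
  obtain ⟨β', hβ', hβP'⟩ := exists_equivariant_map P' P
  have hββ' : ∀ a, β' (β a) = a := fun a ↦ by
    obtain ⟨μ, g, rfl⟩ := P.exists_smul_vertex a
    rw [hβ, hβP, hβ', hβP']
  obtain ⟨p, hr, hp⟩ := exists_isTwist h r
  obtain ⟨p', hr', hp'⟩ := exists_isTwist h.symm (β r)
  refine ⟨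
    { toFun g := p (g • r) * g
      invFun g := p' (g • β r) * g
      left_inv g := ?_
      right_inv g := ?_
      map_mul' g h := ?_ }, p, p', ⟨hp, hr, fun _ ↦ rfl⟩, hp', hr', fun _ ↦ rfl⟩
  · have := hp.mul_apply_eq_one hp' hβ hβP hr hr' (g • r)
    rw [hβ, ← mul_smul] at this
    dsimp only
    rw [← mul_assoc, this, one_mul]
  · have := hp'.mul_apply_eq_one hp hβ' hβP' hr' (by rw [hββ', hr]) (g • β r)
    rw [hβ', hββ', ← mul_smul] at this
    dsimp only
    rw [← mul_assoc, this, one_mul]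
  · rw [mul_smul, hp.apply_smul hr g (h • r)]
    group

end Transversal

open Transversal in
/- The automorphism is `g ↦ p (g • r) * g` for a twisting potential `p` vanishing at `r`; it is
covered by the map `a ↦ p a • β a`, and its inverse comes from the potential of the reverse
twist. -/
theorem exists_mulEquiv_lazyMap_of_edgeRel_eq (P : T.Transversal M s t)
    (P' : T'.Transversal M s t) (h : P.edgeRel = P'.edgeRel) :
    ∃ σ : G ≃* G, HomEquiv σ.symm.toMonoidHom (MonoidHom.id G) ∧
      Nonempty (LazyMap σ.toMonoidHom T T') := by
  obtain ⟨r⟩ := T.isTree.connected.nonempty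
  obtain ⟨β, hβ, hβP⟩ := exists_equivariant_map P P'
  obtain ⟨σ, p, p', ⟨hp, hr, hσ⟩, hp', hr', hσ'⟩ := exists_isTwist_mulEquiv h hβ hβP r
  refine ⟨σ, fun H hH ↦ ?_, ⟨fun a ↦ p a • β a, fun g a ↦ ?_, fun hab ↦
    Or.inl (hp.adj_map hβ hβP hab)⟩⟩
  · obtain ⟨a, ha⟩ := T'.exists_fixed H hH
    refine ⟨(p' a)⁻¹, fun h hh ↦ ?_⟩
    change h = (p' a)⁻¹ * σ.symm h * (p' a)⁻¹⁻¹
    have := hp'.apply_smul hr' h a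
    rw [ha h hh, eq_mul_inv_iff_mul_eq] at this
    rw [hσ', inv_inv, mul_assoc, ← this, inv_mul_cancel_left]
  · change p (g • a) • β (g • a) = σ g • p a • β a
    rw [hσ, hp.apply_smul hr, hβ, ← mul_smul, ← mul_smul]
    group

end StallingsTree

section InfiniteSubgroup

theorem exists_finite_forall_map_mem (H : Type*) [Group H] [Infinite H] {G' : Type*} [Group G']
    (K : Subgroup G') [K.FiniteIndex] :
    ∃ F : Set H, F.Finite ∧ 1 ∉ F ∧ ∀ ψ : H →* G', ∃ f ∈ F, ψ f ∈ K := by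
  obtain ⟨A, hA⟩ := Infinite.exists_subset_card_eq H (Nat.card (G' ⧸ K) + 1)
  refine ⟨Set.image2 (fun a b ↦ a⁻¹ * b) A A \ {1},
    (A.finite_toSet.image2 _ A.finite_toSet).subset Set.sdiff_subset, fun h ↦ h.2 rfl, fun ψ ↦ ?_⟩
  have := Fintype.ofFinite (G' ⧸ K)
  obtain ⟨a, ha, b, hb, hne, hab⟩ := Finset.exists_ne_map_eq_of_card_lt_of_maps_to
    (s := A) (t := Finset.univ) (f := fun a ↦ (ψ a : G' ⧸ K))
    (by rw [hA, Finset.card_univ, Nat.card_eq_fintype_card]; exact Nat.lt_succ_self _)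
    fun _ _ ↦ Finset.mem_coe.2 (Finset.mem_univ _)
  refine ⟨a⁻¹ * b, ⟨⟨a, ha, b, hb, rfl⟩, fun h ↦ hne (inv_mul_eq_one.1 h)⟩, ?_⟩
  rw [map_mul, map_inv]
  exact QuotientGroup.eq.1 hab

theorem exists_finite_forall_closure {G : Type*} [Group G] {U : Set G} (hU : U.Finite)
    {G' : Type*} [Group G'] (K : Subgroup G') [K.FiniteIndex] :
    ∃ F : Set G, F.Finite ∧ 1 ∉ F ∧ ∀ S ⊆ U, (Subgroup.closure S : Set G).Infinite →
      ∀ ψ : G →* G', ∃ f ∈ F, f ∈ Subgroup.closure S ∧ ψ f ∈ K := by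
  have hS : ∀ S : Set G, ∃ F : Set G, F.Finite ∧ 1 ∉ F ∧
      ((Subgroup.closure S : Set G).Infinite →
        ∀ ψ : G →* G', ∃ f ∈ F, f ∈ Subgroup.closure S ∧ ψ f ∈ K) := fun S ↦ by
    by_cases hS : (Subgroup.closure S : Set G).Infinite
    · have := hS.to_subtype
      obtain ⟨F, hF, h1, h⟩ := exists_finite_forall_map_mem (Subgroup.closure S) K
      refine ⟨Subtype.val '' F, hF.image _, ?_, fun _ ψ ↦ ?_⟩
      · rintro ⟨f, hf, hf1⟩
        exact h1 ((Subtype.ext hf1 : f = 1) ▸ hf)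
      · obtain ⟨f, hf, hfK⟩ := h (ψ.comp (Subgroup.subtype _))
        exact ⟨f, ⟨f, hf, rfl⟩, f.2, hfK⟩
    · exact ⟨∅, Set.finite_empty, Set.notMem_empty 1, fun h ↦ (hS h).elim⟩
  choose F hF h1 h using hS
  refine ⟨⋃ S ∈ U.powerset, F S, hU.finite_subsets.biUnion fun S _ ↦ hF S, ?_, ?_⟩
  · simp only [Set.mem_iUnion, not_exists]
    exact fun S _ ↦ h1 S
  · intro S hSU hinf ψ
    obtain ⟨f, hf, hfS⟩ := h S hinf ψ
    exact ⟨f, Set.mem_biUnion hSU hf, hfS⟩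

end InfiniteSubgroup

theorem homEquiv_comp_conj {G G' : Type*} [Group G] [Group G'] {φ φ' : G →* G'}
    (h : HomEquiv φ φ') (g : G) : HomEquiv (φ.comp (MulAut.conj g).toMonoidHom) φ' := by
  intro H hH
  obtain ⟨c, hc⟩ := h H hH
  refine ⟨c * (φ g)⁻¹, fun k hk ↦ ?_⟩
  change φ' k = c * (φ g)⁻¹ * φ (g * k * g⁻¹) * (c * (φ g)⁻¹)⁻¹
  rw [hc k hk, map_mul, map_mul, map_inv]
  group

namespace StallingsTree

variable {G : Type u} [Group G]

section FiniteUpToConjugation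

variable (T : StallingsTree.{u, v} G)

include T in
theorem exists_finite_forall_conj_mem : ∃ B : Set G, B.Finite ∧
    ∀ H : Subgroup G, (H : Set G).Finite → ∃ g : G, ∀ h ∈ H, g * h * g⁻¹ ∈ B := by
  refine ⟨⋃ q : MulAction.orbitRel.Quotient G T.V, MulAction.stabilizer G q.out,
    Set.finite_iUnion fun a ↦ T.finite_stabilizer _, fun H hH ↦ ?_⟩
  obtain ⟨a, ha⟩ := T.exists_fixed H hH
  obtain ⟨g, hg⟩ := exists_smul_out_eq (G := G) a
  refine ⟨g⁻¹, fun h hh ↦ Set.mem_iUnion.2 ⟨Quotient.mk _ a, ?_⟩⟩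
  rw [SetLike.mem_coe, MulAction.mem_stabilizer_iff, inv_inv, mul_smul, mul_smul, hg, ha h hh,
    inv_smul_eq_iff, hg]

variable {T}

theorem isOfFinOrder_of_smul_eq {a : T.V} {g : G} (h : g • a = a) : IsOfFinOrder g :=
  finite_zpowers.1 ((T.finite_stabilizer a).subset
    ((Subgroup.zpowers_le (H := MulAction.stabilizer G a)).2 h))

theorem finite_neighborSet [Group.FG G] (a : T.V) : (T.graph.neighborSet a).Finite := by
  have := finite_edgeOrbits (G := G) T.isTree
  let q : T.graph.neighborSet a → MulAction.orbitRel.Quotient G T.graph.edgeSet := fun b ↦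
    Quotient.mk _ ⟨s(a, b), b.2⟩
  refine Set.finite_univ_iff.1 (Set.Finite.of_finite_fibers q (Set.toFinite _) ?_)
  rintro _ ⟨b, -, rfl⟩
  have hfin := ((finite_setOf_smul_eq (T.finite_stabilizer a) a).image (· • (b : T.V))).union
    ((finite_setOf_smul_eq (T.finite_stabilizer b) a).image (· • a))
  refine (hfin.preimage Subtype.val_injective.injOn).subset fun c ⟨_, hc⟩ ↦ ?_
  obtain ⟨g, hg⟩ := Quotient.exact hc
  rcases Sym2.eq_iff.1 (congrArg Subtype.val hg : s(g • a, g • (b : T.V)) = s(a, c)) with h | h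
  · exact Or.inl ⟨g, h⟩
  · exact Or.inr ⟨g, h.symm⟩

theorem finite_setOf_near [Group.FG G] (a : T.V) : {b | Near T.graph a b}.Finite := by
  refine (((Set.finite_singleton a).union (finite_neighborSet a)).union
    ((finite_neighborSet a).biUnion fun v _ ↦ finite_neighborSet v)).subset ?_
  rintro b (rfl | hab | ⟨v, ha, hb⟩)
  · exact Or.inl (Or.inl rfl)
  · exact Or.inl (Or.inr hab)
  · exact Or.inr (Set.mem_biUnion ha.symm hb)

theorem finite_foldGenerators (a b : T.V) : (foldGenerators G a b).Finite :=
  (T.finite_stabilizer a).union ((T.finite_stabilizer b).union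
    (finite_setOf_smul_eq (T.finite_stabilizer a) b))

variable (T) in
theorem exists_finite_forall_near_conj_mem [Group.FG G] : ∃ U : Set G, U.Finite ∧
    ∀ a b, Near T.graph a b → ∃ g : G, ∀ x ∈ foldGenerators G a b, g * x * g⁻¹ ∈ U := by
  refine ⟨⋃ q : MulAction.orbitRel.Quotient G T.V, ⋃ b ∈ {b | Near T.graph q.out b},
    foldGenerators G q.out b, Set.finite_iUnion fun q ↦ (finite_setOf_near _).biUnion fun b _ ↦
      finite_foldGenerators _ b, fun a b hab ↦ ?_⟩
  obtain ⟨g, hg⟩ := exists_smul_out_eq (G := G) a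
  have hnear := ((LazyMap.translation T g⁻¹).near_map hab)
  refine ⟨g⁻¹, fun x hx ↦ ?_⟩
  have hx' := (LazyMap.translation T g⁻¹).map_mem_foldGenerators hx
  have hout : LazyMap.translation T g⁻¹ a = (Quotient.mk (MulAction.orbitRel G T.V) a).out :=
    inv_smul_eq_iff.2 hg.symm
  rw [hout] at hnear hx'
  exact Set.mem_iUnion.2 ⟨_, Set.mem_biUnion hnear hx'⟩

end FiniteUpToConjugation

end StallingsTree

theorem exists_finite_forall_of_finite_types {X D : Type*} [Finite D] {A : D → X → Prop}
    {p : X → Prop} (hA : ∀ x, p x → ∃ d, A d x) :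
    ∃ s : Set X, s.Finite ∧ ∀ x, p x → ∃ y ∈ s, ∃ d, A d x ∧ A d y := by
  choose y hy using fun d : {d // ∃ x, A d x} ↦ d.2
  refine ⟨Set.range y, Set.finite_range y, fun x hx ↦ ?_⟩
  obtain ⟨d, hd⟩ := hA x hx
  exact ⟨_, ⟨⟨d, x, hd⟩, rfl⟩, d, hd, hy ⟨d, x, hd⟩⟩

namespace StallingsTree

variable {G : Type u} [Group G]

theorem exists_finite_forall_isReduced_lazyMap [Group.FG G] {B : Set G} (hB : B.Finite)
    (hconj : ∀ H : Subgroup G, (H : Set G).Finite → ∃ g : G, ∀ h ∈ H, g * h * g⁻¹ ∈ B) :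
    ∃ s : Set (StallingsTree.{u, v} G), s.Finite ∧ ∀ T : StallingsTree.{u, v} G, T.IsReduced →
      ∃ R ∈ s, ∃ σ : G ≃* G, HomEquiv σ.symm.toMonoidHom (MonoidHom.id G) ∧
        Nonempty (LazyMap σ.toMonoidHom T R) := by
  obtain ⟨S, hS⟩ := Group.fg_def.1 ‹Group.FG G›
  let ι := {H : Subgroup G // (H : Set G) ⊆ B}
  have hι : Finite ι := (hB.finite_subsets.preimage SetLike.coe_injective.injOn).to_subtype
  have hM : ∀ μ : ι, Finite μ.1 := fun μ ↦ (hB.subset μ.2).to_subtype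
  have hrep : ∀ H : Subgroup G, (H : Set G).Finite → ∃ μ : ι, SubgroupConj H μ.1 := fun H hH ↦ by
    obtain ⟨g, hg⟩ := hconj H hH
    refine ⟨⟨H.map (MulAut.conj g).toMonoidHom, ?_⟩, g, rfl⟩
    rintro _ ⟨h, hh, rfl⟩
    exact hg h hh
  let D := Σ (n : Fin (Nat.card ι + S.card + 1)) (I : Set ι) (s : Fin n → I) (t : Fin n → I),
    ∀ k, Set ((s k).1.1 × (t k).1.1)
  let A : D → StallingsTree.{u, v} G → Prop := fun ⟨_, I, s, t, rel⟩ T ↦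
    ∃ P : T.Transversal (fun μ : I ↦ μ.1.1) s t, P.edgeRel = rel
  obtain ⟨reps, hfin, hreps⟩ := exists_finite_forall_of_finite_types (A := A)
    (p := IsReduced (G := G)) fun T hT ↦ by
      obtain ⟨n, hn, I, s, t, ⟨P⟩⟩ := hT.exists_transversal hS hrep
      exact ⟨⟨⟨n, Nat.lt_succ_of_le hn⟩, I, s, t, P.edgeRel⟩, P, rfl⟩
  refine ⟨reps, hfin, fun T hT ↦ ?_⟩
  obtain ⟨R, hR, d, ⟨P, hP⟩, ⟨Q, hQ⟩⟩ := hreps T hT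
  exact ⟨R, hR, exists_mulEquiv_lazyMap_of_edgeRel_eq P Q (hP.trans hQ.symm)⟩

theorem exists_finite_forall_mulEquiv_foldGenerators [Group.FG G] (T₀ : StallingsTree.{u, v} G)
    {K : Subgroup G} [K.FiniteIndex] (hK : ∀ k ∈ K, IsOfFinOrder k → k = 1) :
    ∃ U : Set G, U.Finite ∧ ∀ (T : StallingsTree.{u, v} G) (a b : T.V), Near T.graph a b →
      ∃ σ : G ≃* G, HomEquiv σ.symm.toMonoidHom (MonoidHom.id G) ∧
        ∀ x ∈ foldGenerators G a b, σ x ∈ U := by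
  obtain ⟨B, hB, hconj⟩ := T₀.exists_finite_forall_conj_mem
  obtain ⟨reps, hfin, hreps⟩ := exists_finite_forall_isReduced_lazyMap.{u, v} hB hconj
  choose U hU hUmem using exists_finite_forall_near_conj_mem (G := G)
  refine ⟨⋃ R ∈ reps, U R, hfin.biUnion fun R _ ↦ hU R, fun T a b hab ↦ ?_⟩
  obtain ⟨R, hR, ⟨c⟩⟩ := exists_isReduced hK T
  obtain ⟨R', hR', σ, hσ, ⟨f⟩⟩ := hreps R hR
  obtain ⟨g, hg⟩ := hUmem R' _ _ ((f.comp c).near_map hab)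
  refine ⟨σ.trans (MulAut.conj g), ?_, fun x hx ↦ Set.mem_biUnion hR' ?_⟩
  · have h := homEquiv_comp_conj hσ g⁻¹
    rwa [map_inv] at h
  · exact hg _ ((f.comp c).map_mem_foldGenerators hx)

section TestSet

variable {G' : Type u'} [Group G'] {T : StallingsTree.{u, v} G} {T' : StallingsTree.{u', v'} G'}
  {φ : G →* G'}

theorem LazyMap.map_smul_eq_of_mem_foldGroup (f : LazyMap φ T T') {a b : T.V} (h : f a = f b)
    {g : G} (hg : g ∈ foldGroup G a b) : φ g • f a = f a := by
  suffices foldGroup G a b ≤ (MulAction.stabilizer G' (f a)).comap φ from this hg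
  refine (Subgroup.closure_le _).2 ?_
  rintro x (hx | hx | hx)
  · exact (f.map_smul x a).symm.trans (congrArg f hx)
  · change φ x • f a = f a
    rw [h, ← f.map_smul, hx]
  · exact (f.map_smul x a).symm.trans ((congrArg f hx).trans h.symm)

theorem LazyMap.isOfFinOrder_of_map_eq_one {f : LazyMap φ T T'} (hf : Function.Injective f) {g : G}
    (hg : φ g = 1) : IsOfFinOrder g := by
  obtain ⟨a⟩ := T.isTree.connected.nonempty
  exact isOfFinOrder_of_smul_eq (a := a) (hf (by rw [f.map_smul, hg, one_smul]))

theorem LazyMap.map_eq_one_of_mem_foldGroup (f : LazyMap φ T T') {a b : T.V} (h : f a = f b)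
    {K' : Subgroup G'} (hK' : ∀ k ∈ K', IsOfFinOrder k → k = 1) {g : G}
    (hg : g ∈ foldGroup G a b) (hgK : φ g ∈ K') : φ g = 1 :=
  hK' _ hgK (isOfFinOrder_of_smul_eq (f.map_smul_eq_of_mem_foldGroup h hg))

theorem LazyMap.exists_map_symm_eq_one (f : LazyMap φ T T') {a b : T.V} (h : f a = f b)
    (hinf : (foldGroup G a b : Set G).Infinite) {K' : Subgroup G'}
    (hK' : ∀ k ∈ K', IsOfFinOrder k → k = 1) {U F : Set G}
    (hF : ∀ S ⊆ U, (Subgroup.closure S : Set G).Infinite →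
      ∀ ψ : G →* G', ∃ f ∈ F, f ∈ Subgroup.closure S ∧ ψ f ∈ K') {σ : G ≃* G}
    (hσ : ∀ x ∈ foldGenerators G a b, σ x ∈ U) : ∃ g ∈ F, φ (σ.symm g) = 1 := by
  have hcl : Subgroup.closure (σ '' foldGenerators G a b) =
      (foldGroup G a b).map σ.toMonoidHom := (MonoidHom.map_closure σ.toMonoidHom _).symm
  obtain ⟨g, hgF, hg, hgK⟩ := hF (σ '' foldGenerators G a b) (Set.image_subset_iff.2 hσ)
    (by rw [hcl]; exact hinf.image σ.injective.injOn) (φ.comp σ.symm.toMonoidHom)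
  rw [hcl] at hg
  obtain ⟨x, hx, rfl⟩ := hg
  refine ⟨_, hgF, f.map_eq_one_of_mem_foldGroup h hK' ?_ hgK⟩
  simpa using hx

theorem exists_finite_forall_not_injective [Group.FG G] (T : StallingsTree.{u, v} G)
    {K : Subgroup G} [K.FiniteIndex] (hK : ∀ k ∈ K, IsOfFinOrder k → k = 1)
    {K' : Subgroup G'} [K'.FiniteIndex] (hK' : ∀ k ∈ K', IsOfFinOrder k → k = 1) :
    ∃ F : Set G, F.Finite ∧ 1 ∉ F ∧ ∀ φ : G →* G', StallingsTree.{u', v'} φ.range →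
      ¬ Function.Injective φ →
        ∃ σ : G ≃* G, HomEquiv σ.toMonoidHom (MonoidHom.id G) ∧ ∃ f ∈ F, φ (σ f) = 1 := by
  obtain ⟨B, hB, hBconj⟩ := T.exists_finite_forall_conj_mem
  obtain ⟨U, hU, hUmem⟩ := T.exists_finite_forall_mulEquiv_foldGenerators hK
  obtain ⟨F, hF, h1, hFmem⟩ := exists_finite_forall_closure hU K'
  refine ⟨B \ {1} ∪ F, hB.sdiff.union hF, fun h ↦ h.elim (fun h ↦ h.2 rfl) h1, fun φ T' hφ ↦ ?_⟩
  obtain ⟨T₁, ⟨f₁⟩⟩ := exists_lazyMap φ.rangeRestrict T T'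
  obtain ⟨S, f, hf | ⟨a, b, hab, hfab, hinf⟩⟩ :=
    LazyMap.exists_injective_or_infinite_foldGroup hK f₁
  · obtain ⟨k, hk, hk1⟩ : ∃ k, φ k = 1 ∧ k ≠ 1 := by
      simpa [injective_iff_map_eq_one] using hφ
    obtain ⟨c, hc⟩ := hBconj (Subgroup.zpowers k)
      (finite_zpowers.2 (LazyMap.isOfFinOrder_of_map_eq_one hf (Subtype.ext hk)))
    exact ⟨MulEquiv.refl G, fun H _ ↦ ⟨1, fun h _ ↦ by simp⟩, c * k * c⁻¹,
      Or.inl ⟨hc k (Subgroup.mem_zpowers k), fun h ↦ hk1 (conj_eq_one_iff.1 h)⟩, by simp [hk]⟩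
  · obtain ⟨σ, hσ, hσU⟩ := hUmem S a b hab
    obtain ⟨g, hg, hg1⟩ := f.exists_map_symm_eq_one hfab hinf (K' := K'.subgroupOf φ.range)
      (fun k hk hfin ↦ Subtype.ext (hK' k hk (Submonoid.isOfFinOrder_coe.2 hfin)))
      (fun S hS hinf ψ ↦ hFmem S hS hinf (φ.range.subtype.comp ψ)) hσU
    exact ⟨σ.symm, hσ, g, Or.inr hg, congrArg Subtype.val hg1⟩

end TestSet

end StallingsTree

end VirtuallyFree

theorem exists_finite_test_set_for_noninjective_aut0_general
    (G : Type*) (G' : Type*) [Group G] [Group G']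
    (hfg : Group.FG G) (hvf : VirtuallyFree G) (hvf' : VirtuallyFree G') :
    ∃ F : Finset G, (1 : G) ∉ F ∧
      ∀ φ : G →* G', ¬ Function.Injective φ →
        ∃ σ : G ≃* G, HomEquiv σ.toMonoidHom (MonoidHom.id G) ∧
          ∃ f ∈ F, φ (σ f) = 1 := by
  obtain ⟨K, _, hK⟩ := hvf.exists_finiteIndex_torsionFree
  obtain ⟨K', _, hK'⟩ := hvf'.exists_finiteIndex_torsionFree
  obtain ⟨T⟩ := hvf.nonempty_stallingsTree
  obtain ⟨F, hF, h1, h⟩ := T.exists_finite_forall_not_injective hK hK'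
  refine ⟨hF.toFinset, by simpa only [Set.Finite.mem_toFinset] using h1, fun φ hφ ↦ ?_⟩
  obtain ⟨S⟩ := (hvf'.subgroup φ.range).nonempty_stallingsTree
  simpa only [Set.Finite.mem_toFinset] using h φ S hφ

/-- For finitely generated virtually free groups `G`, `G'`, there is a finite subset
`F` of `G \ {1}` such that every non-injective homomorphism `φ : G → G'` kills an
element of `σ(F)` for some automorphism `σ` of `G` equivalent to the identity. -/
theorem exists_finite_test_set_for_noninjective_aut0
    (G : Type*) (G' : Type*) [Group G] [Group G']
    (hfg : Group.FG G) (hfg' : Group.FG G')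
    (hvf : VirtuallyFree G) (hvf' : VirtuallyFree G') :
    ∃ F : Finset G, (1 : G) ∉ F ∧
      ∀ φ : G →* G', ¬ Function.Injective φ →
        ∃ σ : G ≃* G, HomEquiv σ.toMonoidHom (MonoidHom.id G) ∧
          ∃ f ∈ F, φ (σ f) = 1 := by
  exact exists_finite_test_set_for_noninjective_aut0_general G G' hfg hvf hvf'
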